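/- Let j be a positive real number. Then the following are equivalent: (a) rank_ℤ E^{(D)}(ℚ) < 2j for every nonzero integer D (i.e., for every nonzero integer D there is no ℤ-linearly independent family of ⌈2j⌉ points in the abelian group E^{(D)}(ℚ)); (b) S_E(j,k,X) converges for some real k ≥ 1 and some broad set X ⊆ ℝ; (c) S_E(j,k) converges for every real k ≥ 1. -/

import Mathlib

noncomputable section

/-- `F(u,v) = v·(u³ + au²v + buv² + cv³) = v⁴ f(u/v)`. -/
def Fbin (a b c u v : ℤ) : ℤ := v * (u^3 + a*u^2*v + b*u*v^2 + c*v^3)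

/-- `Ψ = {(u,v) ∈ ℤ² : gcd(u,v) = 1 and F(u,v) ≠ 0}`. -/
def Psi (a b c : ℤ) : Set (ℤ × ℤ) := {p | Int.gcd p.1 p.2 = 1 ∧ Fbin a b c p.1 p.2 ≠ 0}

/-- `h(u/v) = max(1, log|u|, log|v|)` for coprime `u, v`. -/
def ht (u v : ℤ) : ℝ := max 1 (max (Real.log |(u : ℝ)|) (Real.log |(v : ℝ)|))

/-- the polynomial `f(x) = x³ + ax² + bx + c` has three distinct complex roots. -/
def DistinctRoots (a b c : ℤ) : Prop :=
  ∃ r₁ r₂ r₃ : ℂ, r₁ ≠ r₂ ∧ r₁ ≠ r₃ ∧ r₂ ≠ r₃ ∧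
    ∀ z : ℂ, z^3 + a*z^2 + b*z + c = (z - r₁) * (z - r₂) * (z - r₃)

/-- `sq` is a squarefree-part function: for nonzero `n`, `sq n` is squarefree and
`n = sq n · m²` for some rational `m`. -/
def IsSqfreePart (sq : ℤ → ℤ) : Prop :=
  ∀ n : ℤ, n ≠ 0 → Squarefree (sq n) ∧ ∃ m : ℚ, (n : ℚ) = sq n * m^2

/-- the general term `|s(F(u,v))|^{-k} · h(u/v)^{-j}` of `S_E(j,k)`. -/
def STerm (a b c : ℤ) (sq : ℤ → ℤ) (j k : ℝ) (p : ℤ × ℤ) : ℝ :=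
  |(sq (Fbin a b c p.1 p.2) : ℝ)| ^ (-k) * ht p.1 p.2 ^ (-j)

/-- index set of `S_E(j,k,X)`: `(u,v) ∈ Ψ` with `u/v ∈ X`. -/
def SIdx (a b c : ℤ) (X : Set ℝ) : Set (ℤ × ℤ) :=
  {p | p ∈ Psi a b c ∧ ((p.1 : ℝ) / (p.2 : ℝ)) ∈ X}

/-- `S_E(j,k,X)` converges. -/
def SConv (a b c : ℤ) (sq : ℤ → ℤ) (j k : ℝ) (X : Set ℝ) : Prop :=
  Summable fun p : SIdx a b c X => STerm a b c sq j k p.1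

/-- index set of `R_E(j,k,X)`: `t ≥ 1`, `(u,v) ∈ Ψ`, `u/v ∈ X`, `t² ∣ F(u,v)`. -/
def RIdx (a b c : ℤ) (X : Set ℝ) : Set (ℕ × ℤ × ℤ) :=
  {q | 1 ≤ q.1 ∧ q.2 ∈ Psi a b c ∧ ((q.2.1 : ℝ) / (q.2.2 : ℝ)) ∈ X ∧
    (q.1 : ℤ)^2 ∣ Fbin a b c q.2.1 q.2.2}

/-- the general term `t^{2k} · |F(u,v)|^{-k} · h(u/v)^{-j}` of `R_E(j,k)`. -/
def RTerm (a b c : ℤ) (j k : ℝ) (q : ℕ × ℤ × ℤ) : ℝ :=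
  (q.1 : ℝ) ^ (2*k) * |(Fbin a b c q.2.1 q.2.2 : ℝ)| ^ (-k) * ht q.2.1 q.2.2 ^ (-j)

/-- `R_E(j,k,X)` converges. -/
def RConv (a b c : ℤ) (j k : ℝ) (X : Set ℝ) : Prop :=
  Summable fun q : RIdx a b c X => RTerm a b c j k q.1

/-- `Ω_d = {α ∈ ℤ/d²ℤ : f(α) ≡ 0 (mod d²)}`. -/
def OmegaSet (a b c : ℤ) (d : ℕ) : Set (ZMod (d^2)) :=
  {α | α^3 + (a : ZMod (d^2))*α^2 + (b : ZMod (d^2))*α + (c : ZMod (d^2)) = 0}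

/-- the lattice `L_{α,d,d'} = {(u,v) : u ≡ αv (mod d²), v ≡ 0 (mod d'²)}`. -/
def latL (d d' : ℕ) (α : ZMod (d^2)) : Set (ℤ × ℤ) :=
  {p | ((p.1 : ZMod (d^2)) = α * (p.2 : ZMod (d^2))) ∧ ((d' : ℤ))^2 ∣ p.2}

/-- `ω` is a choice, for coprime `d, d' ≥ 1` and `α ∈ Ω_d`, of a shortest nonzero
vector `ω_{α,d,d'}` of the lattice `L_{α,d,d'}` for the Euclidean norm. -/
def IsShortestChoice (a b c : ℤ) (ω : (d d' : ℕ) → ZMod (d^2) → ℤ × ℤ) : Prop :=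
  ∀ d d' : ℕ, 0 < d → 0 < d' → Nat.Coprime d d' → ∀ α ∈ OmegaSet a b c d,
    ω d d' α ∈ latL d d' α ∧ ω d d' α ≠ 0 ∧
    ∀ p ∈ latL d d' α, p ≠ 0 →
      (ω d d' α).1^2 + (ω d d' α).2^2 ≤ p.1^2 + p.2^2

/-- index set of `Q_E(j,k)`: coprime `d, d' ≥ 1`, `α ∈ Ω_d`, `ω_{α,d,d'} ∈ Ψ`. -/
def QIdx (a b c : ℤ) (ω : (d d' : ℕ) → ZMod (d^2) → ℤ × ℤ) :
    Set (Σ d : ℕ, ℕ × ZMod (d^2)) :=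
  {x | 0 < x.1 ∧ 0 < x.2.1 ∧ Nat.Coprime x.1 x.2.1 ∧ x.2.2 ∈ OmegaSet a b c x.1 ∧
    ω x.1 x.2.1 x.2.2 ∈ Psi a b c}

/-- the general term `(dd')^{2k} · max(1, log(dd'))^{-j} · ‖ω_{α,d,d'}‖^{-4k}` of `Q_E(j,k)`. -/
def QTerm (j k : ℝ) (ω : (d d' : ℕ) → ZMod (d^2) → ℤ × ℤ)
    (x : Σ d : ℕ, ℕ × ZMod (d^2)) : ℝ :=
  ((x.1 : ℝ) * (x.2.1 : ℝ)) ^ (2*k) * max 1 (Real.log ((x.1 : ℝ) * (x.2.1 : ℝ))) ^ (-j) *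
    Real.sqrt (((ω x.1 x.2.1 x.2.2).1 : ℝ)^2 + ((ω x.1 x.2.1 x.2.2).2 : ℝ)^2) ^ (-(4*k))

/-- `Q_E(j,k)` converges. -/
def QConv (a b c : ℤ) (j k : ℝ) (ω : (d d' : ℕ) → ZMod (d^2) → ℤ × ℤ) : Prop :=
  Summable fun x : QIdx a b c ω => QTerm j k ω x.1

/-- the quadratic twist `E^{(D)} : Dy² = f(x)`, in Weierstrass form
`y² = x³ + aDx² + bD²x + cD³` (isomorphic via `(x,y) ↦ (Dx, D²y)`). -/
def twist (a b c D : ℤ) : WeierstrassCurve.Affine ℚ :=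
  { a₁ := 0, a₂ := a*D, a₃ := 0, a₄ := b*D^2, a₆ := c*D^3 }

/-- `rank_ℤ E^{(D)}(ℚ) < 2j` for every nonzero integer `D`: there is no
ℤ-linearly independent family of `⌈2j⌉` rational points on `E^{(D)}`. -/
def RankBound (a b c : ℤ) (j : ℝ) : Prop :=
  ∀ D : ℤ, D ≠ 0 →
    ¬ ∃ P : Fin ⌈2*j⌉₊ → (twist a b c D).Point, LinearIndependent ℤ P

/-- `X ⊆ ℝ` is broad: open, and meets both `(e_max, ∞)` and `(-∞, e_min)`. -/
def Broad (a b c : ℤ) (X : Set ℝ) : Prop :=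
  IsOpen X ∧ (∃ x ∈ X, ∀ r : ℝ, r^3 + a*r^2 + b*r + c = 0 → r < x) ∧
    (∃ x ∈ X, ∀ r : ℝ, r^3 + a*r^2 + b*r + c = 0 → x < r)

/-- the set of triples `(α, d, d')` with `d, d'` coprime positive integers,
`dd' = t`, and `α ∈ Ω_d`. -/
def TripSet (a b c : ℤ) (t : ℕ) : Set (Σ d : ℕ, ℕ × ZMod (d^2)) :=
  {x | 0 < x.1 ∧ 0 < x.2.1 ∧ Nat.Coprime x.1 x.2.1 ∧ x.1 * x.2.1 = t ∧
    x.2.2 ∈ OmegaSet a b c x.1}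

end

/-!
Twisting by `D` identifies the pairs `(u, v) ∈ Ψ` with `s(F(u, v)) = D` with the abscissae of the
rational points of `Dy² = f(x)`, so `S_E(j, k, X)` is a sum over all twists and all their points.

If some twist has `n ≥ 2j` independent points, the box `[0, N]ⁿ` provides of the order of `Nⁿ`
points of height `O(N²)`. Adding to each of them a bounded multiple of a fixed point brings its
abscissa into a prescribed interval of `X`; their contribution to the sum stays bounded below,
which makes the sum diverge.

Conversely, let all ranks be less than `2j`. If `j > 1`, the canonical height on `E^{(D)}(ℚ)`
differs from the height of the abscissa by an amount bounded uniformly in `D`, while the height of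
a nontorsion point is, up to a constant factor, at least `log |D|`. Counting lattice points in
balls of `ĥ` then bounds the contribution of `D` by a multiple of `|D|⁻ᵏ (log |D|)⁻ʲ`, which is
summable over `D`.

If `j ≤ 1`, not all ranks can be less than `2j ≤ 2`: otherwise any two points `P`, `Q` of a twist
are dependent, whence `√ĥ(P ± Q) = |√ĥ(P) - √ĥ(Q)|` for one of the signs. Explicit pairs of points
with coordinates in `ℚ(X)`, one for each of the cases `A B ≠ 0`, `B = 0` and `A = 0` of a short
model `z³ + A z + B` of `f`, violate this because of the degrees of their abscissae.
-/

namespace QuadraticTwist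

open Filter Topology Height WeierstrassCurve WeierstrassCurve.Affine

/-! ### Functions with a parallelogram law -/

section Parallelogram

variable {G : Type*} [AddCommGroup G] {q h : G → ℝ} {C : ℝ}

/-- The parallelogram law for a real function on an abelian group: the property which makes
canonical heights behave as quadratic forms. -/
def ParallelogramLaw (q : G → ℝ) : Prop :=
  ∀ P Q : G, q (P + Q) + q (P - Q) = 2 * q P + 2 * q Q

/-- The parallelogram law up to an error of at most `C`, which naive heights satisfy. -/
def AlmostParallelogramLaw (C : ℝ) (h : G → ℝ) : Prop :=
  ∀ P Q : G, |h (P + Q) + h (P - Q) - 2 * h P - 2 * h Q| ≤ C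

namespace ParallelogramLaw

lemma map_zero (hq : ParallelogramLaw q) : q 0 = 0 := by
  have h00 := hq 0 0
  rw [add_zero, sub_zero] at h00
  linarith

lemma map_neg (hq : ParallelogramLaw q) (P : G) : q (-P) = q P := by
  have h0P := hq 0 P
  rw [zero_add, zero_sub, hq.map_zero] at h0P
  linarith

lemma map_nsmul (hq : ParallelogramLaw q) (P : G) (n : ℕ) : q (n • P) = n ^ 2 * q P := by
  induction n using Nat.twoStepInduction with
  | zero => simp [hq.map_zero]
  | one => simp
  | more n ih₀ ih₁ =>
    have hstep := hq ((n + 1) • P) P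
    rw [← succ_nsmul, succ_nsmul P n, add_sub_cancel_right, ← succ_nsmul, ih₀, ih₁] at hstep
    push_cast at hstep ⊢
    linarith

lemma map_zsmul (hq : ParallelogramLaw q) (P : G) (n : ℤ) : q (n • P) = n ^ 2 * q P := by
  obtain ⟨k, rfl | rfl⟩ := n.eq_nat_or_neg
  · simpa using hq.map_nsmul P k
  · simpa [hq.map_neg] using hq.map_nsmul P k

lemma eq_zero_of_zsmul_eq_zero (hq : ParallelogramLaw q) {P : G} {n : ℤ} (hn : n ≠ 0)
    (hP : n • P = 0) : q P = 0 := by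
  have hnP := hq.map_zsmul P n
  rw [hP, hq.map_zero, eq_comm] at hnP
  exact (mul_eq_zero.1 hnP).resolve_left (by positivity)

lemma map_add_le (hq : ParallelogramLaw q) (hnn : ∀ P, 0 ≤ q P) (P Q : G) :
    q (P + Q) ≤ 2 * q P + 2 * q Q := by
  linarith [hq P Q, hnn (P - Q)]

lemma map_sub_le (hq : ParallelogramLaw q) (hnn : ∀ P, 0 ≤ q P) (P Q : G) :
    q (P - Q) ≤ 2 * q P + 2 * q Q := by
  linarith [hq P Q, hnn (P + Q)]

lemma map_sum_zsmul_le (hq : ParallelogramLaw q) (hnn : ∀ P, 0 ≤ q P) {n : ℕ} (P : Fin n → G)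
    (m : Fin n → ℤ) : q (∑ i, m i • P i) ≤ 2 ^ n * ∑ i, (m i : ℝ) ^ 2 * q (P i) := by
  induction n with
  | zero => simp [hq.map_zero]
  | succ n ih =>
    rw [Fin.sum_univ_succ, Fin.sum_univ_succ]
    have htail := ih (fun i => P i.succ) (fun i => m i.succ)
    have hhead : 0 ≤ (m 0 : ℝ) ^ 2 * q (P 0) := mul_nonneg (sq_nonneg _) (hnn _)
    have hpow : (1 : ℝ) ≤ 2 ^ n := one_le_pow₀ one_le_two
    refine (hq.map_add_le hnn _ _).trans ?_
    rw [hq.map_zsmul, pow_succ (2 : ℝ) n]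
    nlinarith

lemma map_add_or_sub_of_dependent_of_ne_zero (hq : ParallelogramLaw q)
    (hnn : ∀ P, 0 ≤ q P) {P Q : G} {m n : ℤ} (hn : n ≠ 0) (hmn : m • P + n • Q = 0) :
    q (P + Q) = (√(q P) - √(q Q)) ^ 2 ∨ q (P - Q) = (√(q P) - √(q Q)) ^ 2 := by
  have hnQ : n • Q = (-m) • P := by
    rw [neg_smul]; exact (neg_eq_of_add_eq_zero_right hmn).symm
  have hadd : n • (P + Q) = (n - m) • P := by rw [smul_add, hnQ, ← add_smul, sub_eq_add_neg]
  have hsub : n • (P - Q) = (n + m) • P := by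
    rw [smul_sub, hnQ, ← sub_smul, sub_neg_eq_add]
  have hqQ := congrArg q hnQ
  have hqadd := congrArg q hadd
  have hqsub := congrArg q hsub
  rw [hq.map_zsmul, hq.map_zsmul, ← Real.sq_sqrt (hnn P)] at hqQ hqadd hqsub
  rw [← Real.sq_sqrt (hnn Q)] at hqQ
  push_cast at hqQ hqadd hqsub
  set A := √(q P)
  set B := √(q Q)
  have hn2 : (n : ℝ) ^ 2 ≠ 0 := by positivity
  have hprod : (n * B - m * A) * (n * B + m * A) = 0 := by linear_combination hqQ
  rcases mul_eq_zero.1 hprod with hB | hB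
  · refine .inl (mul_left_cancel₀ hn2 ?_)
    linear_combination hqadd + (2 * n * A - n * B - m * A) * hB
  · refine .inr (mul_left_cancel₀ hn2 ?_)
    linear_combination hqsub + (2 * n * A - n * B + m * A) * hB

/-- On the line through two dependent elements, `√q` is the absolute value of a linear form. -/
lemma map_add_or_sub_of_dependent (hq : ParallelogramLaw q) (hnn : ∀ P, 0 ≤ q P) {P Q : G}
    {m n : ℤ} (hne : m ≠ 0 ∨ n ≠ 0) (hmn : m • P + n • Q = 0) :
    q (P + Q) = (√(q P) - √(q Q)) ^ 2 ∨ q (P - Q) = (√(q P) - √(q Q)) ^ 2 := by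
  rcases hne.symm with hn | hm
  · exact hq.map_add_or_sub_of_dependent_of_ne_zero hnn hn hmn
  · have hswap := hq.map_add_or_sub_of_dependent_of_ne_zero hnn hm ((add_comm _ _).trans hmn)
    rwa [add_comm Q P, ← neg_sub P Q, hq.map_neg, ← neg_sub √(q P), neg_sq] at hswap

end ParallelogramLaw

/-- Tate's limit `lim h(2ⁿP) / 4ⁿ`, which turns a naive height into a canonical one
(a junk value if the limit does not exist). -/
noncomputable def tateLimit (h : G → ℝ) (P : G) : ℝ :=
  limUnder atTop fun n : ℕ => h (2 ^ n • P) / 4 ^ n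

namespace AlmostParallelogramLaw

lemma nonneg (hh : AlmostParallelogramLaw C h) : 0 ≤ C := (abs_nonneg _).trans (hh 0 0)

lemma abs_two_nsmul_sub_le (hh : AlmostParallelogramLaw C h) (P : G) :
    |h (2 • P) - 4 * h P| ≤ 3 / 2 * C := by
  have h00 := abs_le.1 (hh 0 0)
  have hPP := abs_le.1 (hh P P)
  rw [add_zero, sub_zero] at h00
  rw [sub_self, ← two_nsmul] at hPP
  exact abs_le.2 ⟨by linarith, by linarith⟩

lemma dist_div_four_pow_le (hh : AlmostParallelogramLaw C h) (P : G) (n : ℕ) :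
    dist (h (2 ^ n • P) / 4 ^ n) (h (2 ^ (n + 1) • P) / 4 ^ (n + 1)) ≤
      3 / 8 * C * (1 / 4) ^ n := by
  have hdouble := hh.abs_two_nsmul_sub_le (2 ^ n • P)
  rw [smul_smul, ← pow_succ'] at hdouble
  have hdiff : h (2 ^ n • P) / 4 ^ n - h (2 ^ (n + 1) • P) / 4 ^ (n + 1) =
      -(h (2 ^ (n + 1) • P) - 4 * h (2 ^ n • P)) / 4 ^ (n + 1) := by field_simp; ring
  rw [Real.dist_eq, hdiff, abs_div, abs_neg, abs_of_pos (by positivity : (0 : ℝ) < 4 ^ (n + 1)),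
    div_le_iff₀ (by positivity)]
  refine hdouble.trans_eq ?_
  rw [pow_succ, one_div, inv_pow]
  field_simp
  ring

lemma tendsto_tateLimit (hh : AlmostParallelogramLaw C h) (P : G) :
    Tendsto (fun n : ℕ => h (2 ^ n • P) / 4 ^ n) atTop (𝓝 (tateLimit h P)) :=
  (cauchySeq_of_le_geometric _ _ (by norm_num) (hh.dist_div_four_pow_le P)).tendsto_limUnder

lemma tateLimit_nonneg (hh : AlmostParallelogramLaw C h) (hnn : ∀ P, 0 ≤ h P) (P : G) :
    0 ≤ tateLimit h P :=
  ge_of_tendsto' (hh.tendsto_tateLimit P) fun _ => div_nonneg (hnn _) (by positivity)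

lemma abs_tateLimit_sub_le (hh : AlmostParallelogramLaw C h) (P : G) :
    |tateLimit h P - h P| ≤ C := by
  have hdist := dist_le_of_le_geometric_of_tendsto₀ _ _ (by norm_num) (hh.dist_div_four_pow_le P)
    (hh.tendsto_tateLimit P)
  rw [dist_comm, Real.dist_eq, pow_zero, pow_zero, one_smul, div_one] at hdist
  refine hdist.trans ?_
  norm_num
  linarith [hh.nonneg]

lemma parallelogramLaw_tateLimit (hh : AlmostParallelogramLaw C h) :
    ParallelogramLaw (tateLimit h) := by
  intro P Q
  have hlim := ((hh.tendsto_tateLimit (P + Q)).add (hh.tendsto_tateLimit (P - Q))).sub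
    (((hh.tendsto_tateLimit P).const_mul 2).add ((hh.tendsto_tateLimit Q).const_mul 2))
  have hgeom : Tendsto (fun n : ℕ => C * (1 / 4 : ℝ) ^ n) atTop (𝓝 0) := by
    simpa using (tendsto_pow_atTop_nhds_zero_of_lt_one (r := (1 / 4 : ℝ)) (by norm_num)
      (by norm_num)).const_mul C
  refine sub_eq_zero.1 (tendsto_nhds_unique hlim (squeeze_zero_norm (fun n => ?_) hgeom))
  have hn := hh (2 ^ n • P) (2 ^ n • Q)
  rw [← smul_add, ← smul_sub] at hn
  calc _ = |(h (2 ^ n • (P + Q)) + h (2 ^ n • (P - Q)) - 2 * h (2 ^ n • P) - 2 * h (2 ^ n • Q))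
          / 4 ^ n| := by rw [Real.norm_eq_abs]; congr 1; ring
    _ ≤ C * (1 / 4) ^ n := by
      rw [abs_div, abs_of_pos (by positivity : (0 : ℝ) < 4 ^ n), one_div_pow, mul_one_div]
      gcongr

end AlmostParallelogramLaw

end Parallelogram

/-! ### Addition and subtraction on Weierstrass curves -/

section AddSub

variable {K : Type*} [Field K] {W : WeierstrassCurve.Affine K}

lemma eval_addSubMap (W : WeierstrassCurve K) (x : Fin 3 → K) :
    (fun i ↦ (addSubMap W i).eval x) =
      ![x 0 ^ 2 - W.b₄ * x 0 * x 2 - W.b₆ * x 1 * x 2 - W.b₈ * x 2 ^ 2,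
        2 * x 1 * x 0 + W.b₂ * x 0 * x 2 + W.b₄ * x 1 * x 2 + W.b₆ * x 2 ^ 2,
        x 1 ^ 2 - 4 * x 0 * x 2] := by
  ext i
  fin_cases i <;> simp [addSubMap]

lemma slope_num_sq_add {x y : K} (h : W.Equation x y) :
    (3 * x ^ 2 + 2 * W.a₂ * x + W.a₄ - W.a₁ * y) ^ 2 +
      W.a₁ * (3 * x ^ 2 + 2 * W.a₂ * x + W.a₄ - W.a₁ * y) * (y - W.negY x y) -
      (W.a₂ + 2 * x) * (y - W.negY x y) ^ 2 =
        x ^ 4 - W.b₄ * x ^ 2 - 2 * W.b₆ * x - W.b₈ := by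
  rw [equation_iff] at h
  simp only [negY, b₄, b₆, b₈]
  linear_combination -(W.a₁ ^ 2 + 4 * W.a₂ + 8 * x) * h

lemma sub_negY_sq {x y : K} (h : W.Equation x y) :
    (y - W.negY x y) ^ 2 = 4 * x ^ 3 + W.b₂ * x ^ 2 + 2 * W.b₄ * x + W.b₆ := by
  rw [equation_iff] at h
  simp only [negY, b₂, b₄, b₆]
  linear_combination 4 * h

lemma addX_mul_addX_mul_sq {x₁ y₁ x₂ y₂ : K} (h₁ : W.Equation x₁ y₁)
    (h₂ : W.Equation x₂ y₂) (hx : x₁ - x₂ ≠ 0) :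
    W.addX x₁ x₂ ((y₁ - y₂) / (x₁ - x₂)) * W.addX x₁ x₂ ((y₁ - W.negY x₂ y₂) / (x₁ - x₂)) *
      (x₁ - x₂) ^ 2 = (x₁ * x₂) ^ 2 - W.b₄ * (x₁ * x₂) - W.b₆ * (x₁ + x₂) - W.b₈ := by
  rw [equation_iff] at h₁ h₂
  refine mul_right_cancel₀ (pow_ne_zero 2 hx) ?_
  simp only [negY, addX, b₄, b₆, b₈]
  field_simp
  linear_combination
    (y₁ ^ 2 + W.a₁ * x₁ * y₁ + W.a₃ * y₁ - (y₂ ^ 2 + W.a₁ * x₂ * y₂ + W.a₃ * y₂) +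
      (x₁ ^ 3 + W.a₂ * x₁ ^ 2 + W.a₄ * x₁ + W.a₆) - (x₂ ^ 3 + W.a₂ * x₂ ^ 2 + W.a₄ * x₂ + W.a₆) +
      W.a₁ * (x₁ - x₂) * (W.a₁ * x₂ + W.a₃)) * (h₁ - h₂) -
    W.a₁ ^ 2 * (x₁ - x₂) ^ 2 * h₂ -
    (W.a₂ + x₁ + x₂) * (x₁ - x₂) ^ 2 * (2 * h₁ + 2 * h₂)

lemma addX_add_addX_mul_sq {x₁ y₁ x₂ y₂ : K} (h₁ : W.Equation x₁ y₁)
    (h₂ : W.Equation x₂ y₂) (hx : x₁ - x₂ ≠ 0) :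
    (W.addX x₁ x₂ ((y₁ - y₂) / (x₁ - x₂)) + W.addX x₁ x₂ ((y₁ - W.negY x₂ y₂) / (x₁ - x₂))) *
      (x₁ - x₂) ^ 2 =
        2 * (x₁ + x₂) * (x₁ * x₂) + W.b₂ * (x₁ * x₂) + W.b₄ * (x₁ + x₂) + W.b₆ := by
  rw [equation_iff] at h₁ h₂
  simp only [negY, addX, b₂, b₄, b₆]
  field_simp
  linear_combination 2 * h₁ + 2 * h₂

variable [DecidableEq K]

lemma exists_sym2x_add_self_zero (P : W.Point) : ∃ l : K, l ≠ 0 ∧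
    (P + P).sym2x 0 = l • fun i ↦ (addSubMap W i).eval (P.sym2x P) := by
  cases P with
  | zero =>
    exact ⟨1, one_ne_zero, by ext i; fin_cases i <;> simp [← Point.zero_def, eval_addSubMap]⟩
  | some x y h =>
    have hsq := sub_negY_sq h.1
    have hnum := slope_num_sq_add h.1
    set n := 3 * x ^ 2 + 2 * W.a₂ * x + W.a₄ - W.a₁ * y with hn
    rw [eval_addSubMap, Point.sym2x_some_some]
    by_cases hy : y = W.negY x y
    · rw [← sub_eq_zero] at hy
      have hn0 : n ≠ 0 := fun h0 ↦ ((nonsingular_iff ..).1 h).2.elim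
        (fun hne ↦ hne (by linear_combination -h0))
        (fun hne ↦ hne (sub_eq_zero.1 (by simpa only [negY] using hy)))
      rw [Point.add_self_of_Y_eq (sub_eq_zero.1 hy), Point.sym2x_zero_zero]
      refine ⟨(n ^ 2)⁻¹, inv_ne_zero (pow_ne_zero 2 hn0), ?_⟩
      rw [hy] at hsq hnum
      rw [eq_inv_smul_iff₀ (pow_ne_zero 2 hn0), Matrix.smul_vec3]
      simp only [smul_eq_mul, Matrix.cons_val]
      exact Matrix.vec3_eq (by linear_combination hnum) (by linear_combination hsq) (by ring)
    · have hd : y - W.negY x y ≠ 0 := sub_ne_zero.2 hy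
      have hX : (y - W.negY x y) ^ 2 * W.addX x x (n / (y - W.negY x y)) =
          x ^ 4 - W.b₄ * x ^ 2 - 2 * W.b₆ * x - W.b₈ := by
        rw [← hnum, addX]
        field_simp
        ring
      rw [Point.add_self_of_Y_ne hy, Point.sym2x_some_zero, slope_of_Y_ne rfl hy, ← hn]
      refine ⟨((y - W.negY x y) ^ 2)⁻¹, inv_ne_zero (pow_ne_zero 2 hd), ?_⟩
      rw [eq_inv_smul_iff₀ (pow_ne_zero 2 hd), Matrix.smul_vec3]
      simp only [smul_eq_mul, Matrix.cons_val]
      exact Matrix.vec3_eq (by linear_combination hX) (by linear_combination hsq) (by ring)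

lemma exists_sym2x_add_sub (P Q : W.Point) : ∃ l : K, l ≠ 0 ∧
    (P + Q).sym2x (P - Q) = l • fun i ↦ (addSubMap W i).eval (P.sym2x Q) := by
  by_cases hPQ : P = Q
  · rw [hPQ, sub_self]
    exact exists_sym2x_add_self_zero Q
  by_cases hPQ' : P = -Q
  · obtain rfl : Q = -P := by rw [hPQ', neg_neg]
    rw [Point.sym2x_neg_right, Point.sym2x_comm, sub_neg_eq_add, add_neg_cancel]
    exact exists_sym2x_add_self_zero P
  cases P with
  | zero =>
    refine ⟨1, one_ne_zero, ?_⟩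
    rw [← Point.zero_def, zero_add, zero_sub, Point.sym2x_neg_right, eval_addSubMap]
    cases Q <;> ext i <;> fin_cases i <;> simp [← Point.zero_def, sq, two_mul]
  | some x₁ y₁ h₁ =>
  cases Q with
  | zero =>
    refine ⟨1, one_ne_zero, ?_⟩
    rw [← Point.zero_def, add_zero, sub_zero, eval_addSubMap]
    ext i
    fin_cases i <;> simp [sq, two_mul]
  | some x₂ y₂ h₂ =>
    have hx : x₁ ≠ x₂ := by
      rintro rfl
      rcases Y_eq_of_X_eq h₁.1 h₂.1 rfl with rfl | hy
      · exact hPQ rfl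
      · exact hPQ' (by simp [Point.neg_some, hy])
    have hx' : x₁ - x₂ ≠ 0 := sub_ne_zero.2 hx
    have hmul := addX_mul_addX_mul_sq h₁.1 h₂.1 hx'
    have hadd := addX_add_addX_mul_sq h₁.1 h₂.1 hx'
    refine ⟨((x₁ - x₂) ^ 2)⁻¹, inv_ne_zero (pow_ne_zero 2 hx'), ?_⟩
    rw [sub_eq_add_neg (Point.some x₁ y₁ h₁), Point.neg_some, Point.add_of_X_ne hx,
      Point.add_of_X_ne hx, Point.sym2x_some_some, Point.sym2x_some_some, slope_of_X_ne hx,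
      slope_of_X_ne hx, eval_addSubMap, eq_inv_smul_iff₀ (pow_ne_zero 2 hx'), Matrix.smul_vec3]
    simp only [smul_eq_mul, Matrix.cons_val]
    exact Matrix.vec3_eq (by linear_combination hmul) (by linear_combination hadd) (by ring)

end AddSub

/-! ### Heights of points on twists -/

variable {a b c D : ℤ}

@[simp] lemma twist_a₁ : (twist a b c D).a₁ = 0 := rfl
@[simp] lemma twist_a₂ : (twist a b c D).a₂ = a * D := rfl
@[simp] lemma twist_a₃ : (twist a b c D).a₃ = 0 := rfl
@[simp] lemma twist_a₄ : (twist a b c D).a₄ = b * D ^ 2 := rfl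
@[simp] lemma twist_a₆ : (twist a b c D).a₆ = c * D ^ 3 := rfl

/-- The discriminant of the cubic `x³ + ax² + bx + c`. -/
def cubicDisc (a b c : ℤ) : ℤ :=
  a ^ 2 * b ^ 2 - 4 * b ^ 3 - 4 * a ^ 3 * c - 27 * c ^ 2 + 18 * a * b * c

lemma cubicDisc_ne_zero (hf : DistinctRoots a b c) : cubicDisc a b c ≠ 0 := by
  obtain ⟨r, s, t, hrs, hrt, hst, hfactor⟩ := hf
  have at_zero := hfactor 0
  have at_one := hfactor 1
  have at_neg_one := hfactor (-1)
  have hc : (c : ℂ) = -(r * s * t) := by linear_combination at_zero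
  have ha : (a : ℂ) = -(r + s + t) := by linear_combination (at_one + at_neg_one) / 2 - at_zero
  have hb : (b : ℂ) = r * s + r * t + s * t := by linear_combination (at_one - at_neg_one) / 2
  have hdisc : (cubicDisc a b c : ℂ) = ((r - s) * (r - t) * (s - t)) ^ 2 := by
    simp only [cubicDisc]
    push_cast
    rw [ha, hb, hc]
    ring
  have hne : (cubicDisc a b c : ℂ) ≠ 0 := by
    rw [hdisc]
    exact pow_ne_zero 2
      (mul_ne_zero (mul_ne_zero (sub_ne_zero.2 hrs) (sub_ne_zero.2 hrt)) (sub_ne_zero.2 hst))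
  exact_mod_cast hne

lemma twist_Δ : (twist a b c D).Δ = 16 * D ^ 6 * cubicDisc a b c := by
  simp only [WeierstrassCurve.Δ, b₂, b₄, b₆, b₈, twist_a₁, twist_a₂, twist_a₃, twist_a₄, twist_a₆,
    cubicDisc]
  push_cast
  ring

lemma twist_Δ_ne_zero (hf : cubicDisc a b c ≠ 0) (hD : D ≠ 0) : (twist a b c D).Δ ≠ 0 := by
  rw [twist_Δ]
  have : (D : ℚ) ≠ 0 := mod_cast hD
  have : (cubicDisc a b c : ℚ) ≠ 0 := mod_cast hf
  positivity

lemma twist_equation_iff {x y : ℚ} : (twist a b c D).Equation x y ↔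
    y ^ 2 = x ^ 3 + a * D * x ^ 2 + b * D ^ 2 * x + c * D ^ 3 := by
  rw [equation_iff]
  simp

lemma twist_nonsingular (hf : cubicDisc a b c ≠ 0) (hD : D ≠ 0) {x y : ℚ}
    (h : y ^ 2 = x ^ 3 + a * D * x ^ 2 + b * D ^ 2 * x + c * D ^ 3) :
    (twist a b c D).Nonsingular x y :=
  (equation_iff_nonsingular_of_Δ_ne_zero (twist_Δ_ne_zero hf hD)).1 (twist_equation_iff.2 h)

@[simp] lemma twist_negY {x y : ℚ} : (twist a b c D).negY x y = -y := by simp [negY]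

lemma neg_some_eq {x y : ℚ} (h : (twist a b c D).Nonsingular x y) :
    ∃ h', -(Point.some x y h) = Point.some x (-y) h' := by
  have h' := (nonsingular_neg (W' := twist a b c D) x y).2 h
  rw [twist_negY] at h'
  exact ⟨h', by simp [Point.neg_some]⟩

lemma some_add_some_eq {x₁ y₁ x₂ y₂ : ℚ} (h₁ : (twist a b c D).Nonsingular x₁ y₁)
    (h₂ : (twist a b c D).Nonsingular x₂ y₂) (hx : x₁ ≠ x₂) :
    ∃ y h, Point.some x₁ y₁ h₁ + Point.some x₂ y₂ h₂ =
      Point.some (((y₁ - y₂) / (x₁ - x₂)) ^ 2 - a * D - x₁ - x₂) y h := by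
  have hX : (twist a b c D).addX x₁ x₂ ((twist a b c D).slope x₁ x₂ y₁ y₂) =
      ((y₁ - y₂) / (x₁ - x₂)) ^ 2 - a * D - x₁ - x₂ := by
    simp [slope_of_X_ne hx, addX]
  have h := nonsingular_add h₁ h₂ fun hxy ↦ hx hxy.1
  rw [hX] at h
  exact ⟨_, h, by simp only [Point.add_of_X_ne hx, hX]⟩

lemma some_add_self_eq {x y : ℚ} (h : (twist a b c D).Nonsingular x y) (hy : y ≠ 0) :
    ∃ y' h', Point.some x y h + Point.some x y h =
      Point.some (((3 * x ^ 2 + 2 * a * D * x + b * D ^ 2) / (2 * y)) ^ 2 - a * D - 2 * x)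
        y' h' := by
  have hy' : y ≠ (twist a b c D).negY x y := by
    rw [twist_negY]
    exact fun hneg ↦ hy (by linarith)
  have hX : (twist a b c D).addX x x ((twist a b c D).slope x x y y) =
      ((3 * x ^ 2 + 2 * a * D * x + b * D ^ 2) / (2 * y)) ^ 2 - a * D - 2 * x := by
    rw [slope_of_Y_ne rfl hy', twist_negY]
    simp only [addX, twist_a₁, twist_a₂, twist_a₄]
    ring
  have h' := nonsingular_add h h fun hxy ↦ hy' hxy.2
  rw [hX] at h'
  exact ⟨_, h', by simp only [Point.add_self_of_Y_ne hy', hX]⟩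

lemma some_zero_add_self {x : ℚ} (h : (twist a b c D).Nonsingular x 0) :
    Point.some x 0 h + Point.some x 0 h = 0 :=
  Point.add_self_of_Y_eq (by simp)

/-- The naive height of a point of `E^{(D)}(ℚ)`: the logarithmic height of the `x`-coordinate
`x / D` of the corresponding point of the model `Dy² = f(x)`. Measuring heights on that model is
what makes the estimates uniform in `D`. -/
noncomputable def naiveHeight (P : (twist a b c D).Point) : ℝ :=
  logHeight ![P.xRep 0, D * P.xRep 1]

lemma naiveHeight_some {x y : ℚ} (h : (twist a b c D).Nonsingular x y) :
    naiveHeight (Point.some x y h) = logHeight₁ (x / D) := by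
  rw [naiveHeight, ← logHeight₁_div_eq_logHeight]
  simp

lemma naiveHeight_nonneg (P : (twist a b c D).Point) : 0 ≤ naiveHeight P :=
  logHeight_nonneg _

/-- The linear map taking symmetric coordinates `(x₁x₂ : x₁ + x₂ : 1)` of a pair of points of
`E^{(D)}` to those of the corresponding points of `Dy² = f(x)`. -/
def untwist (D : ℤ) (v : Fin 3 → ℚ) : Fin 3 → ℚ := ![v 0, D * v 1, D ^ 2 * v 2]

lemma untwist_smul (l : ℚ) (v : Fin 3 → ℚ) : untwist D (l • v) = l • untwist D v := by
  ext i
  fin_cases i <;> simp [untwist] <;> ring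

lemma eval_addSubMap_untwist (v : Fin 3 → ℚ) :
    (fun i ↦ (addSubMap (twist a b c 1) i).eval (untwist D v)) =
      untwist D fun i ↦ (addSubMap (twist a b c D) i).eval v := by
  rw [eval_addSubMap, eval_addSubMap]
  ext i
  fin_cases i <;> simp [untwist, b₂, b₄, b₆, b₈] <;> ring

lemma exists_abs_logHeight_untwist_sub_le : ∃ C : ℝ, ∀ a b c D : ℤ, D ≠ 0 →
    ∀ P Q : (twist a b c D).Point,
      |logHeight (untwist D (P.sym2x Q)) - (naiveHeight P + naiveHeight Q)| ≤ C := by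
  obtain ⟨C, hC⟩ := Height.abs_logHeight_sym2_sub_le ℚ
  refine ⟨C, fun a b c D hD P Q ↦ ?_⟩
  have hD' : (D : ℚ) ≠ 0 := mod_cast hD
  have hne (P : (twist a b c D).Point) : ![P.xRep 0, D * P.xRep 1] ≠ 0 := by
    cases P <;> simp [← Point.zero_def, hD']
  have hvec : untwist D (P.sym2x Q) = ![P.xRep 0 * Q.xRep 0,
      P.xRep 0 * (D * Q.xRep 1) + D * P.xRep 1 * Q.xRep 0, D * P.xRep 1 * (D * Q.xRep 1)] :=
    Matrix.vec3_eq rfl (by simp [Point.sym2x]; ring) (by simp [Point.sym2x]; ring)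
  rw [hvec]
  exact hC (hne P) (hne Q)

theorem exists_almostParallelogramLaw_naiveHeight (hf : cubicDisc a b c ≠ 0) : ∃ C : ℝ,
    ∀ D : ℤ, D ≠ 0 → AlmostParallelogramLaw C (naiveHeight : (twist a b c D).Point → ℝ) := by
  have : (twist a b c 1).IsElliptic := ⟨(twist_Δ_ne_zero hf one_ne_zero).isUnit⟩
  obtain ⟨C₁, hC₁⟩ := abs_logHeight_addSubMap_sub_two_mul_logHeight_le (twist a b c 1)
  obtain ⟨C₂, hC₂⟩ := exists_abs_logHeight_untwist_sub_le
  refine ⟨C₁ + 3 * C₂, fun D hD P Q ↦ ?_⟩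
  obtain ⟨l, hl, hadd⟩ := exists_sym2x_add_sub P Q
  have hmap := hC₁ (untwist D (P.sym2x Q))
  rw [eval_addSubMap_untwist, ← logHeight_smul_eq_logHeight _ hl, ← untwist_smul, ← hadd] at hmap
  have hPQ := hC₂ a b c D hD P Q
  have hsum := hC₂ a b c D hD (P + Q) (P - Q)
  rw [abs_le] at *
  constructor <;> linarith [hmap.1, hmap.2, hPQ.1, hPQ.2, hsum.1, hsum.2]

/-- The canonical (Néron–Tate) height on `E^{(D)}(ℚ)`, normalised so that it differs from
`naiveHeight` by a bounded amount. -/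
noncomputable def canonicalHeight : (twist a b c D).Point → ℝ := tateLimit naiveHeight

theorem exists_canonicalHeight_bound (hf : cubicDisc a b c ≠ 0) : ∃ C : ℝ, 0 ≤ C ∧
    ∀ D : ℤ, D ≠ 0 → ∀ P : (twist a b c D).Point, |canonicalHeight P - naiveHeight P| ≤ C := by
  obtain ⟨C, hC⟩ := exists_almostParallelogramLaw_naiveHeight hf
  exact ⟨C, (hC 1 one_ne_zero).nonneg, fun D hD ↦ (hC D hD).abs_tateLimit_sub_le⟩

lemma parallelogramLaw_canonicalHeight (hf : cubicDisc a b c ≠ 0) (hD : D ≠ 0) :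
    ParallelogramLaw (canonicalHeight : (twist a b c D).Point → ℝ) := by
  obtain ⟨C, hC⟩ := exists_almostParallelogramLaw_naiveHeight hf
  exact (hC D hD).parallelogramLaw_tateLimit

lemma canonicalHeight_nonneg (hf : cubicDisc a b c ≠ 0) (hD : D ≠ 0)
    (P : (twist a b c D).Point) : 0 ≤ canonicalHeight P := by
  obtain ⟨C, hC⟩ := exists_almostParallelogramLaw_naiveHeight hf
  exact (hC D hD).tateLimit_nonneg naiveHeight_nonneg P

/-! ### Uniformity in the twisting parameter -/

lemma logHeight₁_intCast_div {u v : ℤ} (huv : Int.gcd u v = 1) (hv : v ≠ 0) :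
    logHeight₁ ((u : ℚ) / v) = Real.log (max |(u : ℝ)| |(v : ℝ)|) := by
  wlog hpos : 0 < v generalizing u v
  · have hneg := this (u := -u) (v := -v) (by simpa using huv) (neg_ne_zero.2 hv)
      (by lia)
    push_cast at hneg
    rwa [neg_div_neg_eq, abs_neg, abs_neg] at hneg
  have hnum : ((u : ℚ) / v).num = u := Rat.num_div_eq_of_coprime hpos huv
  have hden : (((u : ℚ) / v).den : ℝ) = |(v : ℝ)| := by
    rw [abs_of_pos (mod_cast hpos)]
    exact_mod_cast Rat.den_div_eq_of_coprime hpos huv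
  rw [Rat.logHeight₁_eq_log_max, hnum]
  push_cast
  rw [hden, Nat.cast_natAbs, Int.cast_abs]

lemma ht_eq_max_logHeight₁ {u v : ℤ} (huv : Int.gcd u v = 1) (hv : v ≠ 0) :
    ht u v = max 1 (logHeight₁ ((u : ℚ) / v)) := by
  rw [logHeight₁_intCast_div huv hv, ht]
  congr 1
  have hv1 : (1 : ℝ) ≤ |(v : ℝ)| := mod_cast Int.one_le_abs hv
  rcases eq_or_ne u 0 with rfl | hu
  · rw [Int.cast_zero, abs_zero, Real.log_zero, max_eq_right (Real.log_nonneg hv1),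
      max_eq_right (by linarith)]
  · have hu1 : (1 : ℝ) ≤ |(u : ℝ)| := mod_cast Int.one_le_abs hu
    exact (Real.strictMonoOn_log.monotoneOn.map_max (Set.mem_Ioi.2 (by linarith))
      (Set.mem_Ioi.2 (by linarith))).symm

lemma ne_zero_of_Fbin_ne_zero {u v : ℤ} (h : Fbin a b c u v ≠ 0) : v ≠ 0 := by
  rintro rfl
  simp [Fbin] at h

lemma nonsingular_of_Fbin_eq (hf : cubicDisc a b c ≠ 0) (hD : D ≠ 0) {u v : ℤ} (hv : v ≠ 0)
    {m : ℚ} (h : (Fbin a b c u v : ℚ) = D * m ^ 2) :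
    (twist a b c D).Nonsingular (D * ((u : ℚ) / v)) (D ^ 2 * m / v ^ 2) := by
  have hv' : (v : ℚ) ≠ 0 := mod_cast hv
  refine twist_nonsingular hf hD ?_
  simp only [Fbin] at h
  push_cast at h
  field_simp
  linear_combination -h

lemma Fbin_num_den_eq (hD : D ≠ 0) {x y : ℚ} (h : (twist a b c D).Nonsingular x y) :
    (Fbin a b c (x / D).num (x / D).den : ℚ) = D * ((x / D).den ^ 2 * y / D ^ 2) ^ 2 := by
  have hD' : (D : ℚ) ≠ 0 := mod_cast hD
  have hden : ((x / D).den : ℚ) ≠ 0 := mod_cast (x / D).den_nz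
  have heq := twist_equation_iff.1 h.1
  set w := x / D with hw
  have hx : x = D * (w.num / w.den) := by
    rw [Rat.num_div_den, hw]
    field_simp
  simp only [Fbin]
  push_cast
  rw [div_pow, mul_pow, heq]
  clear_value w
  subst hx
  field_simp

lemma gcd_num_den (q : ℚ) : Int.gcd q.num q.den = 1 :=
  Int.isCoprime_iff_gcd_eq_one.mp (Rat.isCoprime_num_den q)

lemma Fbin_num_den_ne_zero (hD : D ≠ 0) {x y : ℚ} (hy : y ≠ 0)
    (h : (twist a b c D).Nonsingular x y) : Fbin a b c (x / D).num (x / D).den ≠ 0 := by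
  have : (D : ℚ) ≠ 0 := mod_cast hD
  have : ((x / D).den : ℚ) ≠ 0 := mod_cast (x / D).den_nz
  have hne : (Fbin a b c (x / D).num (x / D).den : ℚ) ≠ 0 := by
    rw [Fbin_num_den_eq hD h]
    positivity
  exact_mod_cast hne

lemma injective_xCoord_signY (hD : D ≠ 0) : Function.Injective
    fun P : (twist a b c D).Point ↦ match P with
      | .zero => (none, false)
      | .some x y _ => (some (x / D : ℚ), decide (0 ≤ y)) := by
  have hD' : (D : ℚ) ≠ 0 := mod_cast hD
  rintro (_ | ⟨x, y, h⟩) (_ | ⟨x', y', h'⟩) hPQ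
  · rfl
  · simp at hPQ
  · simp at hPQ
  · simp only [Prod.mk.injEq, Option.some.injEq, decide_eq_decide] at hPQ
    obtain ⟨hx, hsign⟩ := hPQ
    obtain rfl : x = x' := (div_left_inj' hD').1 hx
    have hy : y ^ 2 = y' ^ 2 := by rw [twist_equation_iff.1 h.1, twist_equation_iff.1 h'.1]
    obtain rfl : y = y' := by
      rcases sq_eq_sq_iff_eq_or_eq_neg.1 hy with hy | hy
      · exact hy
      · grind
    rfl

lemma exists_card_le_of_naiveHeight_le (B : ℝ) : ∃ T : ℕ, ∀ a b c D : ℤ, D ≠ 0 →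
    ∀ S : Finset (twist a b c D).Point, (∀ P ∈ S, naiveHeight P ≤ B) → S.card ≤ T := by
  classical
  have hfin := NumberField.finite_setOfPred_logHeight₁_le ℚ B
  refine ⟨((insert none (hfin.toFinset.image some)) ×ˢ (Finset.univ : Finset Bool)).card,
    fun a b c D hD S hS ↦ ?_⟩
  refine Finset.card_le_card_of_injOn _ (fun P hP ↦ ?_) (injective_xCoord_signY hD).injOn
  have hPB := hS P hP
  cases P with
  | zero => simp
  | some x y h =>
    rw [naiveHeight_some] at hPB
    simpa using ⟨hPB, le_or_gt 0 y⟩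

lemma finite_setOf_naiveHeight_le (hD : D ≠ 0) (B : ℝ) :
    {P : (twist a b c D).Point | naiveHeight P ≤ B}.Finite := by
  obtain ⟨T, hT⟩ := exists_card_le_of_naiveHeight_le B
  by_contra hinf
  obtain ⟨S, hS, hcard⟩ := Set.Infinite.exists_subset_card_eq hinf (T + 1)
  have := hT a b c D hD S fun P hP ↦ hS hP
  lia

lemma exists_pos_forall_le_of_finite {α : Type*} {s : Set α} (hs : s.Finite) (f : α → ℝ)
    (hf : ∀ x ∈ s, 0 < f x) : ∃ g : ℝ, 0 < g ∧ ∀ x ∈ s, g ≤ f x := by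
  rcases s.eq_empty_or_nonempty with rfl | hne
  · exact ⟨1, one_pos, by simp⟩
  · obtain ⟨x, hx, hmin⟩ := Set.exists_min_image s f hs hne
    exact ⟨f x, hf x hx, hmin⟩

lemma exists_int_eq_of_squarefree {F : ℤ} (hD : Squarefree D) {m : ℚ}
    (h : (F : ℚ) = D * m ^ 2) : ∃ n : ℤ, m = n := by
  have hcleared : F * (m.den : ℤ) ^ 2 = D * m.num ^ 2 := by
    have hQ : (F : ℚ) * (m.den : ℚ) ^ 2 = D * (m.num : ℚ) ^ 2 := by
      rw [h, ← Rat.mul_den_eq_num m]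
      ring
    exact_mod_cast hQ
  have hcop : IsCoprime ((m.den : ℤ) ^ 2) (m.num ^ 2) := (Rat.isCoprime_num_den m).symm.pow
  have hdvd : (m.den : ℤ) ^ 2 ∣ D := hcop.dvd_of_dvd_mul_right ⟨F, by rw [← hcleared]; ring⟩
  have hden : m.den = 1 := by
    simpa using Int.natAbs_of_isUnit (hD (m.den : ℤ) (by rwa [← sq]))
  exact ⟨m.num, (Rat.coe_int_num_of_den_eq_one hden).symm⟩

/-- An upper bound for the coefficients of the binary quartic form `F`. -/
noncomputable def coeffBound (a b c : ℤ) : ℝ := 1 + |(a : ℝ)| + |(b : ℝ)| + |(c : ℝ)|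

lemma one_le_coeffBound (a b c : ℤ) : 1 ≤ coeffBound a b c := by
  unfold coeffBound
  linarith [abs_nonneg (a : ℝ), abs_nonneg (b : ℝ), abs_nonneg (c : ℝ)]

lemma abs_Fbin_le (a b c u v : ℤ) :
    |(Fbin a b c u v : ℝ)| ≤ coeffBound a b c * max |(u : ℝ)| |(v : ℝ)| ^ 4 := by
  set M := max |(u : ℝ)| |(v : ℝ)|
  have hu : |(u : ℝ)| ≤ M := le_max_left _ _
  have hv : |(v : ℝ)| ≤ M := le_max_right _ _
  have : 0 ≤ M := (abs_nonneg _).trans hu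
  simp only [Fbin]
  push_cast
  calc |(v : ℝ) * (u ^ 3 + a * u ^ 2 * v + b * u * v ^ 2 + c * v ^ 3)|
    _ ≤ |(v : ℝ)| * (|(u : ℝ)| ^ 3 + |(a : ℝ)| * |(u : ℝ)| ^ 2 * |(v : ℝ)| +
          |(b : ℝ)| * |(u : ℝ)| * |(v : ℝ)| ^ 2 + |(c : ℝ)| * |(v : ℝ)| ^ 3) := by
        rw [abs_mul]
        gcongr
        simp only [← abs_mul, ← abs_pow]
        exact (abs_add_le _ _).trans (add_le_add_left (abs_add_three _ _ _) _)
    _ ≤ M * (M ^ 3 + |(a : ℝ)| * M ^ 2 * M + |(b : ℝ)| * M * M ^ 2 + |(c : ℝ)| * M ^ 3) := by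
        gcongr
    _ = coeffBound a b c * M ^ 4 := by
        rw [coeffBound]
        ring

lemma log_abs_le_of_Fbin_eq {u v : ℤ} (hD : Squarefree D) (hF : Fbin a b c u v ≠ 0)
    (huv : Int.gcd u v = 1) {m : ℚ} (h : (Fbin a b c u v : ℚ) = D * m ^ 2) :
    Real.log |(D : ℝ)| ≤ Real.log (coeffBound a b c) + 4 * logHeight₁ ((u : ℚ) / v) := by
  obtain ⟨n, rfl⟩ := exists_int_eq_of_squarefree hD h
  have hF' : Fbin a b c u v = D * n ^ 2 := mod_cast h
  have hDF : |(D : ℝ)| ≤ |(Fbin a b c u v : ℝ)| := by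
    exact_mod_cast Int.le_of_dvd (abs_pos.2 hF) (abs_dvd_abs _ _ |>.2 ⟨_, hF'⟩)
  have hv := ne_zero_of_Fbin_ne_zero hF
  have : 0 < max |(u : ℝ)| |(v : ℝ)| :=
    lt_max_of_lt_right (abs_pos.2 (mod_cast hv))
  have hK := one_le_coeffBound a b c
  rw [logHeight₁_intCast_div huv hv]
  calc Real.log |(D : ℝ)|
    _ ≤ Real.log (coeffBound a b c * max |(u : ℝ)| |(v : ℝ)| ^ 4) :=
        Real.log_le_log (abs_pos.2 (mod_cast hD.ne_zero)) (hDF.trans (abs_Fbin_le ..))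
    _ = Real.log (coeffBound a b c) + 4 * Real.log (max |(u : ℝ)| |(v : ℝ)|) := by
        rw [Real.log_mul (by linarith) (by positivity), Real.log_pow]
        norm_num

/-- A logarithmic measure of the size of the twisting parameter `D`; the shift by `2` keeps it
bounded away from `0`. -/
noncomputable def logSize (D : ℤ) : ℝ := Real.log (|(D : ℝ)| + 2)

lemma logSize_pos (D : ℤ) : 0 < logSize D := Real.log_pos (by linarith [abs_nonneg (D : ℝ)])

lemma logSize_le (hD : D ≠ 0) : logSize D ≤ Real.log |(D : ℝ)| + Real.log 3 := by
  have hD1 : (1 : ℝ) ≤ |(D : ℝ)| := mod_cast Int.one_le_abs hD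
  rw [← Real.log_mul (by linarith) (by norm_num)]
  exact Real.log_le_log (by linarith) (by linarith)

lemma exists_mul_logSize_le_ht (a b c : ℤ) : ∃ k : ℝ, 0 < k ∧ ∀ D u v : ℤ, Squarefree D →
    Fbin a b c u v ≠ 0 → Int.gcd u v = 1 → (∃ m : ℚ, (Fbin a b c u v : ℚ) = D * m ^ 2) →
      k * logSize D ≤ ht u v := by
  have hK := Real.log_nonneg (one_le_coeffBound a b c)
  have hlog3 : 0 < Real.log 3 := Real.log_pos (by norm_num)
  refine ⟨1 / (Real.log (coeffBound a b c) + Real.log 3 + 4), by positivity, ?_⟩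
  rintro D u v hD hF huv ⟨m, hm⟩
  have hlogD := log_abs_le_of_Fbin_eq hD hF huv hm
  have hsize := logSize_le hD.ne_zero
  rw [ht_eq_max_logHeight₁ huv (ne_zero_of_Fbin_ne_zero hF)]
  set H := logHeight₁ ((u : ℚ) / v)
  have hone : 1 ≤ max 1 H := le_max_left _ _
  have hH : H ≤ max 1 H := le_max_right _ _
  rw [div_mul_eq_mul_div, one_mul, div_le_iff₀ (by positivity)]
  nlinarith

lemma canonicalHeight_eq_zero_or_log_abs_le (hf : cubicDisc a b c ≠ 0) (hD : Squarefree D)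
    (P : (twist a b c D).Point) : canonicalHeight P = 0 ∨
      Real.log |(D : ℝ)| ≤ Real.log (coeffBound a b c) + 4 * naiveHeight P := by
  have hlaw := parallelogramLaw_canonicalHeight hf hD.ne_zero
  cases P with
  | zero => exact .inl hlaw.map_zero
  | some x y h =>
    rcases eq_or_ne y 0 with rfl | hy
    · exact .inl (hlaw.eq_zero_of_zsmul_eq_zero two_ne_zero
        (by rw [two_zsmul, some_zero_add_self]))
    · have hlogD := log_abs_le_of_Fbin_eq hD (Fbin_num_den_ne_zero hD.ne_zero hy h)
        (gcd_num_den _) (Fbin_num_den_eq hD.ne_zero h)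
      rw [naiveHeight_some]
      rw [Int.cast_natCast, Rat.num_div_den] at hlogD
      exact .inr hlogD

lemma exists_canonicalHeight_gap (hf : cubicDisc a b c ≠ 0) (hD : D ≠ 0) :
    ∃ g : ℝ, 0 < g ∧ ∀ P : (twist a b c D).Point,
      canonicalHeight P < g → canonicalHeight P = 0 := by
  obtain ⟨C, -, hC⟩ := exists_canonicalHeight_bound hf
  have hfin : {P : (twist a b c D).Point | canonicalHeight P ≤ 1 ∧ canonicalHeight P ≠ 0}.Finite :=
    (finite_setOf_naiveHeight_le hD (1 + C)).subset fun P hP ↦ by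
      have hle := (abs_le.1 (hC D hD P)).1
      have hP1 := hP.1
      rw [Set.mem_ofPred_eq]
      linarith
  obtain ⟨g, hg, hmin⟩ := exists_pos_forall_le_of_finite hfin canonicalHeight
    fun P hP ↦ (canonicalHeight_nonneg hf hD P).lt_of_ne' hP.2
  refine ⟨min g 1, by positivity, fun P hP ↦ ?_⟩
  obtain ⟨hPg, hP1⟩ := lt_min_iff.1 hP
  by_contra hne
  exact hPg.not_ge (hmin P ⟨hP1.le, hne⟩)

lemma finite_setOf_logSize_le (B : ℝ) : {D : ℤ | logSize D ≤ B}.Finite := by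
  refine (Set.finite_Icc (-⌈Real.exp B⌉) ⌈Real.exp B⌉).subset fun D hD ↦ ?_
  have hexp : |(D : ℝ)| + 2 ≤ Real.exp B := (Real.log_le_iff_le_exp (by positivity)).1 hD
  have hceil : ((|D| : ℤ) : ℝ) ≤ (⌈Real.exp B⌉ : ℤ) := by
    push_cast
    linarith [Int.le_ceil (Real.exp B)]
  exact abs_le.1 (mod_cast hceil)

theorem exists_uniform_canonicalHeight_gap (hf : cubicDisc a b c ≠ 0) : ∃ g : ℝ, 0 < g ∧
    ∀ D : ℤ, Squarefree D → ∀ P : (twist a b c D).Point,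
      canonicalHeight P < g * logSize D → canonicalHeight P = 0 := by
  obtain ⟨C, -, hC⟩ := exists_canonicalHeight_bound hf
  set A := Real.log 3 + Real.log (coeffBound a b c) + 4 * C
  have hgap (D : ℤ) : ∃ g : ℝ, 0 < g ∧ (D ≠ 0 → ∀ P : (twist a b c D).Point,
      canonicalHeight P < g * logSize D → canonicalHeight P = 0) := by
    rcases eq_or_ne D 0 with rfl | hD
    · exact ⟨1, one_pos, fun h ↦ absurd rfl h⟩
    · obtain ⟨g, hg, hgP⟩ := exists_canonicalHeight_gap hf hD
      refine ⟨g / logSize D, div_pos hg (logSize_pos D), fun _ P hP ↦ hgP P ?_⟩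
      rwa [div_mul_cancel₀ _ (logSize_pos D).ne'] at hP
  choose G hG_pos hG using hgap
  obtain ⟨g, hg, hgG⟩ :=
    exists_pos_forall_le_of_finite (finite_setOf_logSize_le (2 * A)) G fun D _ ↦ hG_pos D
  refine ⟨min g (1 / 8), by positivity, fun D hD P hP ↦ ?_⟩
  have hsize := logSize_pos D
  by_cases hsmall : logSize D ≤ 2 * A
  · refine hG D hD.ne_zero P (hP.trans_le ?_)
    gcongr
    exact (min_le_left _ _).trans (hgG D hsmall)
  · refine (canonicalHeight_eq_zero_or_log_abs_le hf hD P).resolve_right fun hlog ↦ ?_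
    have hle := logSize_le hD.ne_zero
    have hclose := (abs_le.1 (hC D hD.ne_zero P)).1
    have hmin : min g (1 / 8) * logSize D ≤ 1 / 8 * logSize D := by
      gcongr
      exact min_le_right _ _
    linarith

/-! ### Counting lattice points -/

section Counting

variable {G : Type*} [AddCommGroup G] {q : G → ℝ}

namespace ParallelogramLaw

/-- The null vectors of a nonnegative function satisfying the parallelogram law. For a canonical
height this is the torsion subgroup. -/
def nullSubmodule (hq : ParallelogramLaw q) (hnn : ∀ P, 0 ≤ q P) : Submodule ℤ G where
  carrier := {P | q P = 0}
  add_mem' {P Q} hP hQ := by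
    have hadd := hq.map_add_le hnn P Q
    rw [Set.mem_ofPred_eq] at hP hQ
    exact le_antisymm (by linarith) (hnn _)
  zero_mem' := hq.map_zero
  smul_mem' n P hP := by
    rw [Set.mem_ofPred_eq] at hP ⊢
    rw [hq.map_zsmul, hP, mul_zero]

lemma mem_nullSubmodule (hq : ParallelogramLaw q) (hnn : ∀ P, 0 ≤ q P) {P : G} :
    P ∈ hq.nullSubmodule hnn ↔ q P = 0 := Iff.rfl

lemma isTorsionFree_quotient_nullSubmodule (hq : ParallelogramLaw q) (hnn : ∀ P, 0 ≤ q P) :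
    Module.IsTorsionFree ℤ (G ⧸ hq.nullSubmodule hnn) := by
  refine Module.IsTorsionFree.of_smul_eq_zero fun n x hx ↦ ?_
  obtain ⟨P, rfl⟩ := (hq.nullSubmodule hnn).mkQ_surjective x
  rw [← map_smul] at hx
  simp only [Submodule.mkQ_apply, Submodule.Quotient.mk_eq_zero, mem_nullSubmodule,
    hq.map_zsmul] at hx ⊢
  simpa using hx

lemma map_sub_eq_zero_of_congr (hq : ParallelogramLaw q) (hnn : ∀ P, 0 ≤ q P) {g B : ℝ} {N : ℕ}
    (hgap : ∀ P, q P < g → q P = 0) (hN : 0 < N) (hB : 8 * B < g * (N : ℝ) ^ 2) {P P₀ R : G}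
    (hP : q P ≤ B) (hP₀ : q P₀ ≤ B) (hR : P - P₀ - (N : ℤ) • R ∈ hq.nullSubmodule hnn) :
    q (P - P₀) = 0 := by
  set K := P - P₀ - (N : ℤ) • R with hK
  rw [mem_nullSubmodule] at hR
  have hRK : (N : ℤ) • R = (P - P₀) - K := by rw [hK]; abel
  have hPK : P - P₀ = (N : ℤ) • R + K := by rw [hK]; abel
  have hNR := hq.map_sub_le hnn (P - P₀) K
  rw [← hRK, hq.map_zsmul, hR, Int.cast_natCast] at hNR
  have hR0 : q R = 0 := by
    refine hgap R (lt_of_mul_lt_mul_left (a := (N : ℝ) ^ 2) ?_ (by positivity))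
    linarith [hq.map_sub_le hnn P P₀]
  have hle := hq.map_add_le hnn ((N : ℤ) • R) K
  rw [← hPK, hq.map_zsmul, hR, hR0] at hle
  exact le_antisymm (by linarith) (hnn _)

end ParallelogramLaw

lemma finrank_submodule_quotient_le {r : ℕ} (hr : ¬ ∃ P : Fin (r + 1) → G, LinearIndependent ℤ P)
    (K : Submodule ℤ G) (A : Submodule ℤ (G ⧸ K)) [Module.Free ℤ A] [Module.Finite ℤ A] :
    Module.finrank ℤ A ≤ r := by
  by_contra! hlt
  set e := Module.finBasis ℤ A
  choose P hP using fun i ↦ K.mkQ_surjective (e i : G ⧸ K)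
  have hli : LinearIndependent ℤ P := by
    refine LinearIndependent.of_comp K.mkQ ?_
    rw [show K.mkQ ∘ P = A.subtype ∘ e from funext hP]
    exact e.linearIndependent.map' A.subtype A.ker_subtype
  exact hr ⟨P ∘ Fin.castLE hlt, hli.comp _ (Fin.castLE_injective hlt)⟩

lemma exists_sub_eq_smul_of_repr_congr {ι A : Type*} [Finite ι] [AddCommGroup A]
    (e : Module.Basis ι ℤ A) {N : ℕ} {x y : A}
    (hxy : ∀ i, (e.repr x i : ZMod N) = (e.repr y i : ZMod N)) : ∃ R : A, x - y = (N : ℤ) • R := by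
  cases nonempty_fintype ι
  have hdvd (i : ι) : (N : ℤ) ∣ e.repr x i - e.repr y i :=
    (ZMod.intCast_eq_intCast_iff_dvd_sub _ _ _).1 (hxy i).symm
  choose t ht using hdvd
  refine ⟨∑ i, t i • e i, e.ext_elem fun i ↦ ?_⟩
  rw [map_sub, Finsupp.sub_apply, ht, map_smul, Finsupp.smul_apply, smul_eq_mul, e.repr_sum_self]

/-- Two elements of `{q ≤ B}` which agree modulo `N` in the lattice `G / {q = 0}` differ by a null
vector, so `{q ≤ B}` has at most `T` elements in each of the at most `N ^ r` classes. -/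
theorem ParallelogramLaw.card_le_mul_pow (hq : ParallelogramLaw q) (hnn : ∀ P, 0 ≤ q P) {r T : ℕ}
    {g B : ℝ} (hr : ¬ ∃ P : Fin (r + 1) → G, LinearIndependent ℤ P)
    (hT : ∀ S : Finset G, (∀ P ∈ S, q P = 0) → S.card ≤ T) (hgap : ∀ P, q P < g → q P = 0)
    {N : ℕ} (hN : 0 < N) (hB : 8 * B < g * (N : ℝ) ^ 2) (S : Finset G) (hS : ∀ P ∈ S, q P ≤ B) :
    S.card ≤ T * N ^ r := by
  classical
  set K := hq.nullSubmodule hnn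
  have := hq.isTorsionFree_quotient_nullSubmodule hnn
  set A := Submodule.span ℤ (K.mkQ '' S)
  have : Module.Finite ℤ A := Module.Finite.span_of_finite ℤ (S.finite_toSet.image _)
  have : Module.Free ℤ A := Module.free_of_finite_type_torsion_free'
  have : NeZero N := ⟨hN.ne'⟩
  set e := Module.finBasis ℤ A
  let proj (P : S) : A := ⟨K.mkQ P, Submodule.subset_span (Set.mem_image_of_mem _ P.2)⟩
  let residue (P : S) : Fin (Module.finrank ℤ A) → ZMod N := fun i ↦ (e.repr (proj P) i : ZMod N)
  have hfiber (P₀ : S) : (S.attach.filter fun P ↦ residue P = residue P₀).card ≤ T := by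
    have hinj : Function.Injective fun P : S ↦ (P - P₀ : G) :=
      fun P Q hPQ ↦ Subtype.ext (sub_left_injective hPQ)
    rw [← Finset.card_image_of_injective _ hinj]
    refine hT _ fun Q hQ ↦ ?_
    obtain ⟨P, hP, rfl⟩ := Finset.mem_image.1 hQ
    obtain ⟨R, hR⟩ := exists_sub_eq_smul_of_repr_congr e
      fun i ↦ congrFun (Finset.mem_filter.1 hP).2 i
    obtain ⟨R', hR'⟩ := K.mkQ_surjective (R : G ⧸ K)
    refine hq.map_sub_eq_zero_of_congr hnn hgap hN hB (hS P P.2) (hS P₀ P₀.2) (R := R') ?_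
    rw [← Submodule.Quotient.mk_eq_zero, ← Submodule.mkQ_apply, map_sub, map_sub, map_smul, hR',
      sub_eq_zero]
    exact congrArg Subtype.val hR
  calc S.card = S.attach.card := S.card_attach.symm
    _ ≤ T * (Finset.univ : Finset (Fin (Module.finrank ℤ A) → ZMod N)).card := by
        refine Finset.card_le_mul_card_image_of_maps_to (f := residue)
          (fun _ _ ↦ Finset.mem_univ _) _ fun z _ ↦ ?_
        obtain hempty | ⟨P₀, hP₀⟩ := (S.attach.filter fun P ↦ residue P = z).eq_empty_or_nonempty
        · simp [hempty]
        · exact (Finset.mem_filter.1 hP₀).2 ▸ hfiber P₀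
    _ = T * N ^ Module.finrank ℤ A := by
        rw [Finset.card_univ, Fintype.card_fun, ZMod.card, Fintype.card_fin]
    _ ≤ T * N ^ r := by gcongr; exact finrank_submodule_quotient_le hr K A

end Counting

section Series

lemma exists_two_pow_mul_le {x L : ℝ} (hL : 0 < L) (hx : L ≤ x) :
    ∃ i : ℕ, 2 ^ i * L ≤ x ∧ x ≤ 2 ^ (i + 1) * L := by
  obtain ⟨i, hle, hlt⟩ := exists_nat_pow_near ((one_le_div₀ hL).2 hx) one_lt_two
  exact ⟨i, (le_div_iff₀ hL).1 hle, ((div_lt_iff₀ hL).1 hlt).le⟩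

lemma two_pow_rpow_mul_rpow_neg {L ρ j : ℝ} (hL : 0 ≤ L) (i : ℕ) :
    ((2 : ℝ) ^ i) ^ ρ * (2 ^ i * L) ^ (-j) = L ^ (-j) * ((2 : ℝ) ^ (ρ - j)) ^ i := by
  rw [Real.mul_rpow (by positivity) hL, ← Real.rpow_natCast ((2 : ℝ) ^ (ρ - j)),
    ← Real.rpow_mul zero_le_two, mul_comm (ρ - j), Real.rpow_mul zero_le_two, Real.rpow_natCast,
    sub_eq_add_neg, Real.rpow_add (by positivity)]
  ring

theorem sum_rpow_neg_le_of_dyadic_card_le {α : Type*} (S : Finset α) (h : α → ℝ) {L K ρ j : ℝ}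
    (hL : 0 < L) (hK : 0 ≤ K) (hj : 0 < j) (hρ : ρ < j) (hS : ∀ x ∈ S, L ≤ h x)
    (hc : ∀ i : ℕ, ((S.filter fun x ↦ h x ≤ 2 ^ (i + 1) * L).card : ℝ) ≤ K * ((2 : ℝ) ^ i) ^ ρ) :
    ∑ x ∈ S, h x ^ (-j) ≤ K * (1 - (2 : ℝ) ^ (ρ - j))⁻¹ * L ^ (-j) := by
  classical
  choose! f hf using fun x (hx : x ∈ S) ↦ exists_two_pow_mul_le hL (hS x hx)
  have hshell (i : ℕ) : ∑ x ∈ S with f x = i, h x ^ (-j) ≤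
      K * L ^ (-j) * ((2 : ℝ) ^ (ρ - j)) ^ i := by
    have hterm : ∀ x ∈ S.filter (f · = i), h x ^ (-j) ≤ (2 ^ i * L) ^ (-j) := by
      intro x hx
      obtain ⟨hxS, rfl⟩ := Finset.mem_filter.1 hx
      exact Real.rpow_le_rpow_of_nonpos (by positivity) (hf x hxS).1 (by linarith)
    have hsub : S.filter (f · = i) ⊆ S.filter fun x ↦ h x ≤ 2 ^ (i + 1) * L := by
      intro x hx
      obtain ⟨hxS, rfl⟩ := Finset.mem_filter.1 hx
      exact Finset.mem_filter.2 ⟨hxS, (hf x hxS).2⟩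
    have hcard : ((S.filter (f · = i)).card : ℝ) ≤ K * ((2 : ℝ) ^ i) ^ ρ :=
      (Nat.cast_le.2 (Finset.card_le_card hsub)).trans (hc i)
    calc _ ≤ ((S.filter (f · = i)).card : ℝ) * (2 ^ i * L) ^ (-j) := by
          rw [← nsmul_eq_mul]
          exact Finset.sum_le_card_nsmul _ _ _ hterm
      _ ≤ K * ((2 : ℝ) ^ i) ^ ρ * (2 ^ i * L) ^ (-j) := by gcongr
      _ = _ := by rw [mul_assoc, two_pow_rpow_mul_rpow_neg hL.le, mul_assoc]
  have hr0 : (0 : ℝ) ≤ (2 : ℝ) ^ (ρ - j) := by positivity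
  have hr1 : (2 : ℝ) ^ (ρ - j) < 1 :=
    Real.rpow_lt_one_of_one_lt_of_neg one_lt_two (by linarith)
  calc _ = ∑ i ∈ S.image f, ∑ x ∈ S with f x = i, h x ^ (-j) :=
        (Finset.sum_fiberwise_of_maps_to (fun _ ↦ Finset.mem_image_of_mem f) _).symm
    _ ≤ K * L ^ (-j) * ∑ i ∈ S.image f, ((2 : ℝ) ^ (ρ - j)) ^ i := by
        rw [Finset.mul_sum]
        exact Finset.sum_le_sum fun i _ ↦ hshell i
    _ ≤ K * L ^ (-j) * (1 - (2 : ℝ) ^ (ρ - j))⁻¹ := by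
        gcongr
        rw [← tsum_geometric_of_lt_one hr0 hr1]
        exact (summable_geometric_of_lt_one hr0 hr1).sum_le_tsum _ fun i _ ↦ by positivity
    _ = _ := by ring

lemma two_pow_mul_inv_mul_log_rpow_le {j : ℝ} (hj : 0 ≤ j) (k : ℕ) :
    (2 : ℝ) ^ (k + 1) * (((2 : ℝ) ^ (k + 1))⁻¹ * Real.log (2 ^ (k + 1) + 2) ^ (-j)) ≤
      Real.log 2 ^ (-j) * ((k + 1 : ℕ) : ℝ) ^ (-j) := by
  have hlog2 : 0 < Real.log 2 := Real.log_pos one_lt_two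
  have hlog : Real.log 2 * (k + 1 : ℕ) ≤ Real.log (2 ^ (k + 1) + 2) := by
    rw [mul_comm, ← Real.log_pow]
    exact Real.log_le_log (by positivity) (by linarith)
  rw [← mul_assoc, mul_inv_cancel₀ (by positivity), one_mul,
    ← Real.mul_rpow hlog2.le (by positivity)]
  exact Real.rpow_le_rpow_of_nonpos (by positivity) hlog (by linarith)

lemma summable_inv_mul_log_rpow {j : ℝ} (hj : 1 < j) :
    Summable fun n : ℕ ↦ (n : ℝ)⁻¹ * Real.log (n + 2) ^ (-j) := by
  have hlog (n : ℕ) : 0 < Real.log ((n : ℝ) + 2) :=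
    Real.log_pos (by linarith [n.cast_nonneg (α := ℝ)])
  have hnn (n : ℕ) : 0 ≤ (n : ℝ)⁻¹ * Real.log (n + 2) ^ (-j) := by
    have := hlog n
    positivity
  have hanti ⦃m n : ℕ⦄ (hm : 0 < m) (hmn : m ≤ n) :
      (n : ℝ)⁻¹ * Real.log (n + 2) ^ (-j) ≤ (m : ℝ)⁻¹ * Real.log (m + 2) ^ (-j) := by
    have hmn' : (m : ℝ) ≤ n := by exact_mod_cast hmn
    have hlog_le := Real.log_le_log (by positivity) (add_le_add_left hmn' 2)
    exact mul_le_mul (inv_anti₀ (by exact_mod_cast hm) hmn')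
      (Real.rpow_le_rpow_of_nonpos (hlog m) hlog_le (by linarith))
      (Real.rpow_nonneg (hlog n).le _) (by positivity)
  rw [← summable_condensed_iff_of_nonneg hnn hanti, ← summable_nat_add_iff 1]
  have hmajorant : Summable fun k : ℕ ↦ Real.log 2 ^ (-j) * (k : ℝ) ^ (-j) :=
    (Real.summable_nat_rpow.2 (by linarith)).mul_left _
  refine ((summable_nat_add_iff 1).2 hmajorant).of_nonneg_of_le
    (fun k ↦ mul_nonneg (by positivity) (hnn _)) fun k ↦ ?_
  exact_mod_cast two_pow_mul_inv_mul_log_rpow_le (by linarith) k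

lemma summable_inv_abs_mul_logSize_rpow {j : ℝ} (hj : 1 < j) :
    Summable fun D : ℤ ↦ |(D : ℝ)|⁻¹ * logSize D ^ (-j) := by
  apply Summable.of_nat_of_neg <;>
    exact (summable_inv_mul_log_rpow hj).congr fun n ↦ by simp [logSize]

end Series

/-! ### Convergence for large exponents -/

section UniformCount

lemma eq_or_eq_neg_of_div_eq_div {u v u' v' : ℤ} (h : Int.gcd u v = 1) (h' : Int.gcd u' v' = 1)
    (hv : v ≠ 0) (hv' : v' ≠ 0) (heq : (u : ℚ) / v = u' / v') :
    (u', v') = (u, v) ∨ (u', v') = (-u, -v) := by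
  have hcross : u * v' = u' * v := by
    rw [div_eq_div_iff (mod_cast hv) (mod_cast hv')] at heq
    exact_mod_cast heq
  have hdvd : v ∣ v' := (Int.isCoprime_iff_gcd_eq_one.2 h).symm.dvd_of_dvd_mul_left
    (Dvd.intro_left u' hcross.symm)
  have hdvd' : v' ∣ v := (Int.isCoprime_iff_gcd_eq_one.2 h').symm.dvd_of_dvd_mul_left
    (Dvd.intro_left u hcross)
  obtain rfl | hvv' := Int.associated_iff.1 (associated_of_dvd_dvd hdvd hdvd')
  · exact .inl (by rw [mul_right_cancel₀ hv hcross])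
  · obtain rfl : v' = -v := by lia
    exact .inr (by rw [show u' = -u from mul_right_cancel₀ hv (by linarith)])

/-- The pairs `(u, v) ∈ Ψ` for which `F(u, v)` is `D` times a rational square, that is, for which
`u / v` is the `x`-coordinate of a rational point of `D y² = f(x)`. -/
def twistPairs (a b c D : ℤ) : Set (ℤ × ℤ) :=
  {p | p ∈ Psi a b c ∧ ∃ m : ℚ, (Fbin a b c p.1 p.2 : ℚ) = D * m ^ 2}

lemma one_le_ht (u v : ℤ) : 1 ≤ ht u v := le_max_left _ _

lemma exists_point_of_mem_twistPairs (hf : cubicDisc a b c ≠ 0) (hD : D ≠ 0) {p : ℤ × ℤ}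
    (hp : p ∈ twistPairs a b c D) :
    ∃ P : (twist a b c D).Point, ∃ y h, P = Point.some (D * ((p.1 : ℚ) / p.2)) y h := by
  obtain ⟨⟨-, hF⟩, m, hm⟩ := hp
  exact ⟨_, _, nonsingular_of_Fbin_eq hf hD (ne_zero_of_Fbin_ne_zero hF) hm, rfl⟩

lemma card_le_two_mul_card_image_point [DecidableEq (twist a b c D).Point] (hD : D ≠ 0)
    {S : Finset (ℤ × ℤ)} (hS : ∀ p ∈ S, p ∈ twistPairs a b c D)
    {φ : ℤ × ℤ → (twist a b c D).Point}
    (hφ : ∀ p ∈ twistPairs a b c D, ∃ y h, φ p = Point.some (D * ((p.1 : ℚ) / p.2)) y h) :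
    S.card ≤ 2 * (S.image φ).card := by
  refine Finset.card_le_mul_card_image _ _ fun P hP ↦ ?_
  obtain ⟨p, hp, rfl⟩ := Finset.mem_image.1 hP
  have hpair : S.filter (φ · = φ p) ⊆ {(p.1, p.2), (-p.1, -p.2)} := by
    intro p' hp'
    obtain ⟨hp'S, hφp'⟩ := Finset.mem_filter.1 hp'
    obtain ⟨y, h, hφ_eq⟩ := hφ p (hS p hp)
    obtain ⟨y', h', hφ'_eq⟩ := hφ p' (hS p' hp'S)
    rw [hφ_eq, hφ'_eq, Point.some.injEq] at hφp'
    have hdiv := mul_left_cancel₀ (mod_cast hD) hφp'.1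
    simpa using eq_or_eq_neg_of_div_eq_div (hS p hp).1.1 (hS p' hp'S).1.1
      (ne_zero_of_Fbin_ne_zero (hS p hp).1.2) (ne_zero_of_Fbin_ne_zero (hS p' hp'S).1.2) hdiv.symm
  exact (Finset.card_le_card hpair).trans Finset.card_le_two

lemma exists_canonicalHeight_le_mul_ht (hf : cubicDisc a b c ≠ 0) : ∃ C : ℝ, 1 ≤ C ∧
    ∀ D : ℤ, D ≠ 0 → ∀ p ∈ twistPairs a b c D, ∀ y h,
      canonicalHeight (Point.some (W' := twist a b c D) (D * ((p.1 : ℚ) / p.2)) y h) ≤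
        C * ht p.1 p.2 := by
  obtain ⟨C, hC0, hC⟩ := exists_canonicalHeight_bound hf
  refine ⟨1 + C, by linarith, fun D hD p hp y h ↦ ?_⟩
  have hle := (abs_le.1 (hC D hD (Point.some _ y h))).2
  rw [naiveHeight_some, mul_div_cancel_left₀ _ (mod_cast hD)] at hle
  have hlog : logHeight₁ ((p.1 : ℚ) / p.2) ≤ ht p.1 p.2 := by
    rw [ht_eq_max_logHeight₁ hp.1.1 (ne_zero_of_Fbin_ne_zero hp.1.2)]
    exact le_max_right _ _
  nlinarith [one_le_ht p.1 p.2]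

lemma exists_card_le_of_canonicalHeight_le (hf : cubicDisc a b c ≠ 0) {r : ℕ}
    (hr : ∀ D : ℤ, D ≠ 0 → ¬ ∃ P : Fin (r + 1) → (twist a b c D).Point, LinearIndependent ℤ P) :
    ∃ A : ℝ, 0 ≤ A ∧ ∀ D : ℤ, Squarefree D → ∀ x : ℝ, 1 ≤ x →
      ∀ S : Finset (twist a b c D).Point, (∀ P ∈ S, canonicalHeight P ≤ x * logSize D) →
        (S.card : ℝ) ≤ A * x ^ ((r : ℝ) / 2) := by
  obtain ⟨C, -, hC⟩ := exists_canonicalHeight_bound hf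
  obtain ⟨g, hg, hgap⟩ := exists_uniform_canonicalHeight_gap hf
  obtain ⟨T, hT⟩ := exists_card_le_of_naiveHeight_le C
  refine ⟨T * (√(8 / g) + 1) ^ r, by positivity, fun D hD x hx S hS ↦ ?_⟩
  have := logSize_pos D
  set N := ⌊√(8 / g * x)⌋₊ + 1
  have hlt : 8 / g * x < (N : ℝ) ^ 2 := by
    rw [← Real.sqrt_lt' (by positivity)]
    exact_mod_cast Nat.lt_floor_add_one (√(8 / g * x))
  have hNle : (N : ℝ) ≤ (√(8 / g) + 1) * √x := by
    have hfloor : (⌊√(8 / g * x)⌋₊ : ℝ) ≤ √(8 / g * x) := Nat.floor_le (by positivity)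
    push_cast [N]
    rw [Real.sqrt_mul (by positivity)] at hfloor ⊢
    linarith [Real.one_le_sqrt.2 hx]
  have hcard : S.card ≤ T * N ^ r := by
    refine (parallelogramLaw_canonicalHeight hf hD.ne_zero).card_le_mul_pow
      (canonicalHeight_nonneg hf hD.ne_zero) (hr D hD.ne_zero) (fun U hU ↦ ?_) (hgap D hD)
      (Nat.succ_pos _) ?_ S hS
    · refine hT a b c D hD.ne_zero U fun P hP ↦ ?_
      linarith [(abs_le.1 (hC D hD.ne_zero P)).1, hU P hP]
    · calc 8 * (x * logSize D) = g * logSize D * (8 / g * x) := by field_simp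
        _ < g * logSize D * (N : ℝ) ^ 2 := by gcongr
  calc (S.card : ℝ) ≤ T * (N : ℝ) ^ r := by exact_mod_cast hcard
    _ ≤ T * ((√(8 / g) + 1) * √x) ^ r := by gcongr
    _ = T * (√(8 / g) + 1) ^ r * x ^ ((r : ℝ) / 2) := by
        rw [mul_pow, Real.rpow_div_two_eq_sqrt _ (by positivity), Real.rpow_natCast, mul_assoc]

lemma exists_card_twistPairs_le (hf : cubicDisc a b c ≠ 0) {r : ℕ}
    (hr : ∀ D : ℤ, D ≠ 0 → ¬ ∃ P : Fin (r + 1) → (twist a b c D).Point, LinearIndependent ℤ P) :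
    ∃ A : ℝ, 0 ≤ A ∧ ∀ D : ℤ, Squarefree D → ∀ x : ℝ, 1 ≤ x → ∀ S : Finset (ℤ × ℤ),
      (∀ p ∈ S, p ∈ twistPairs a b c D ∧ ht p.1 p.2 ≤ x * logSize D) →
        (S.card : ℝ) ≤ A * x ^ ((r : ℝ) / 2) := by
  classical
  obtain ⟨A, hA, hcount⟩ := exists_card_le_of_canonicalHeight_le hf hr
  obtain ⟨C, hC1, hC⟩ := exists_canonicalHeight_le_mul_ht hf
  refine ⟨2 * (A * C ^ ((r : ℝ) / 2)), by positivity, fun D hD x hx S hS ↦ ?_⟩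
  choose! φ hφ using fun p (hp : p ∈ twistPairs a b c D) ↦
    exists_point_of_mem_twistPairs hf hD.ne_zero hp
  have himage : ((S.image φ).card : ℝ) ≤ A * (C * x) ^ ((r : ℝ) / 2) := by
    refine hcount D hD (C * x) (one_le_mul_of_one_le_of_one_le hC1 hx) _ fun P hP ↦ ?_
    obtain ⟨p, hp, rfl⟩ := Finset.mem_image.1 hP
    obtain ⟨y, h, hφp⟩ := hφ p (hS p hp).1
    rw [hφp, mul_assoc]
    exact (hC D hD.ne_zero p (hS p hp).1 y h).trans (by gcongr; exact (hS p hp).2)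
  have htwo : (S.card : ℝ) ≤ 2 * (S.image φ).card := by
    exact_mod_cast card_le_two_mul_card_image_point hD.ne_zero (fun p hp ↦ (hS p hp).1) hφ
  rw [Real.mul_rpow (by linarith) (by linarith)] at himage
  linarith

theorem exists_sum_ht_rpow_twistPairs_le (hf : cubicDisc a b c ≠ 0) {j : ℝ} (hj : 0 < j)
    (hR : RankBound a b c j) : ∃ K : ℝ, 0 ≤ K ∧ ∀ D : ℤ, Squarefree D → ∀ S : Finset (ℤ × ℤ),
      (∀ p ∈ S, p ∈ twistPairs a b c D) →
        ∑ p ∈ S, ht p.1 p.2 ^ (-j) ≤ K * logSize D ^ (-j) := by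
  classical
  obtain ⟨k, hk, hlower⟩ := exists_mul_logSize_le_ht a b c
  obtain ⟨r, hr⟩ := Nat.exists_eq_add_one.2 (Nat.ceil_pos.2 (by linarith : 0 < 2 * j))
  have hrj : (r : ℝ) / 2 < j := by
    have : (r : ℝ) < 2 * j := Nat.lt_ceil.1 (by lia)
    linarith
  obtain ⟨A, hA, hcount⟩ := exists_card_twistPairs_le (r := r) hf fun D hD ↦ hr ▸ hR D hD
  set K := A * (1 + 2 * k) ^ ((r : ℝ) / 2)
  have hgeom : (2 : ℝ) ^ ((r : ℝ) / 2 - j) < 1 :=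
    Real.rpow_lt_one_of_one_lt_of_neg one_lt_two (by linarith)
  have := inv_nonneg.2 (sub_nonneg.2 hgeom.le)
  refine ⟨K * (1 - (2 : ℝ) ^ ((r : ℝ) / 2 - j))⁻¹ * k ^ (-j), by positivity, fun D hD S hS ↦ ?_⟩
  have hL := logSize_pos D
  rw [mul_assoc, ← Real.mul_rpow hk.le hL.le]
  refine sum_rpow_neg_le_of_dyadic_card_le S (fun p ↦ ht p.1 p.2) (by positivity) (by positivity)
    hj hrj (fun p hp ↦ hlower D p.1 p.2 hD (hS p hp).1.2 (hS p hp).1.1 (hS p hp).2) fun i ↦ ?_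
  have htwo : (1 : ℝ) ≤ 2 ^ i := one_le_pow₀ one_le_two
  rw [mul_assoc, ← Real.mul_rpow (by positivity) (by positivity)]
  refine hcount D hD _ (one_le_mul_of_one_le_of_one_le (by linarith) htwo) _ fun p hp ↦ ?_
  obtain ⟨hpS, hp_le⟩ := Finset.mem_filter.1 hp
  refine ⟨hS p hpS, hp_le.trans ?_⟩
  calc 2 ^ (i + 1) * (k * logSize D) = 2 * k * 2 ^ i * logSize D := by ring
    _ ≤ (1 + 2 * k) * 2 ^ i * logSize D := by gcongr; linarith

end UniformCount

section LargeExponent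

variable {sq : ℤ → ℤ} {j k : ℝ}

lemma STerm_nonneg (p : ℤ × ℤ) : 0 ≤ STerm a b c sq j k p := by
  have := zero_le_one.trans (one_le_ht p.1 p.2)
  unfold STerm
  positivity

lemma sum_STerm_le_of_sq_eq (hk : 1 ≤ k) (hD : D ≠ 0) {S : Finset (ℤ × ℤ)} {M : ℝ}
    (hS : ∀ p ∈ S, sq (Fbin a b c p.1 p.2) = D) (hM : ∑ p ∈ S, ht p.1 p.2 ^ (-j) ≤ M) :
    ∑ p ∈ S, STerm a b c sq j k p ≤ |(D : ℝ)|⁻¹ * M := by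
  have habs : (1 : ℝ) ≤ |(D : ℝ)| := mod_cast Int.one_le_abs hD
  have hsum : 0 ≤ ∑ p ∈ S, ht p.1 p.2 ^ (-j) :=
    Finset.sum_nonneg fun p _ ↦ Real.rpow_nonneg (zero_le_one.trans (one_le_ht _ _)) _
  calc ∑ p ∈ S, STerm a b c sq j k p = |(D : ℝ)| ^ (-k) * ∑ p ∈ S, ht p.1 p.2 ^ (-j) := by
        rw [Finset.mul_sum]
        exact Finset.sum_congr rfl fun p hp ↦ by rw [STerm, hS p hp]
    _ ≤ |(D : ℝ)|⁻¹ * M := by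
        refine mul_le_mul ?_ hM hsum (by positivity)
        rw [← Real.rpow_neg_one]
        exact Real.rpow_le_rpow_of_exponent_le habs (by linarith)

theorem SConv_univ_of_rankBound (hf : cubicDisc a b c ≠ 0) (hsq : IsSqfreePart sq) (hj : 1 < j)
    (hR : RankBound a b c j) (hk : 1 ≤ k) : SConv a b c sq j k Set.univ := by
  classical
  obtain ⟨K, hK, hfiber⟩ := exists_sum_ht_rpow_twistPairs_le hf (by linarith) hR
  let part (p : SIdx a b c Set.univ) : ℤ := sq (Fbin a b c p.1.1 p.1.2)
  have hpart (u : Finset (SIdx a b c Set.univ)) : ∀ D ∈ u.image part,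
      ∑ p ∈ u with part p = D, STerm a b c sq j k p.1 ≤
        K * (|(D : ℝ)|⁻¹ * logSize D ^ (-j)) := by
    intro D hD
    obtain ⟨p₀, -, rfl⟩ := Finset.mem_image.1 hD
    have hsqfree : Squarefree (part p₀) := (hsq _ p₀.2.1.2).1
    rw [← Finset.sum_image (g := Subtype.val) (f := fun p ↦ STerm a b c sq j k p)
      Subtype.val_injective.injOn, mul_left_comm]
    have hmem : ∀ p ∈ (u.filter (part · = part p₀)).image Subtype.val,
        sq (Fbin a b c p.1 p.2) = part p₀ ∧ p ∈ twistPairs a b c (part p₀) := by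
      intro p hp
      obtain ⟨p', hp', rfl⟩ := Finset.mem_image.1 hp
      have hp'_eq := (Finset.mem_filter.1 hp').2
      exact ⟨hp'_eq, p'.2.1, hp'_eq ▸ (hsq _ p'.2.1.2).2⟩
    exact sum_STerm_le_of_sq_eq hk hsqfree.ne_zero (fun p hp ↦ (hmem p hp).1)
      (hfiber _ hsqfree _ fun p hp ↦ (hmem p hp).2)
  refine summable_of_sum_le (c := K * ∑' D : ℤ, |(D : ℝ)|⁻¹ * logSize D ^ (-j))
    (fun p ↦ STerm_nonneg p.1) fun u ↦ ?_
  calc _ = ∑ D ∈ u.image part, ∑ p ∈ u with part p = D, STerm a b c sq j k p.1 :=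
        (Finset.sum_fiberwise_of_maps_to (fun _ ↦ Finset.mem_image_of_mem part) _).symm
    _ ≤ K * ∑ D ∈ u.image part, |(D : ℝ)|⁻¹ * logSize D ^ (-j) := by
        rw [Finset.mul_sum]
        exact Finset.sum_le_sum (hpart u)
    _ ≤ _ := by
        gcongr
        refine (summable_inv_abs_mul_logSize_rpow hj).sum_le_tsum _ fun D _ ↦ ?_
        have := (logSize_pos D).le
        positivity

end LargeExponent

/-! ### Chords of a real cubic -/

section RealCubic

/-- The monic real cubic polynomial with coefficients `α`, `β`, `γ`. -/
def cubic (α β γ x : ℝ) : ℝ := x ^ 3 + α * x ^ 2 + β * x + γ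

/-- The derivative of `cubic α β γ`. -/
def cubicDeriv (α β x : ℝ) : ℝ := 3 * x ^ 2 + 2 * α * x + β

/-- The monic real quadratic polynomial with coefficients `s`, `t`. -/
def quadratic (s t x : ℝ) : ℝ := x ^ 2 + s * x + t

/-- The factorization `cubic α β γ x = (x - e) * quadratic s t x` at a largest root `e` which is
simple: the cofactor is bounded below by `κ > 0` on `[e, ∞)`. -/
structure LargestRoot (α β γ e s t κ : ℝ) : Prop where
  α_eq : α = s - e
  β_eq : β = t - e * s
  γ_eq : γ = -(e * t)
  κ_pos : 0 < κ
  le_quadratic : ∀ x, e ≤ x → κ ≤ quadratic s t x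

variable {α β γ e s t κ : ℝ}

lemma LargestRoot.cubic_eq (h : LargestRoot α β γ e s t κ) (x : ℝ) :
    cubic α β γ x = (x - e) * quadratic s t x := by
  rw [cubic, quadratic, h.α_eq, h.β_eq, h.γ_eq]
  ring

lemma LargestRoot.mul_sub_le_cubic (h : LargestRoot α β γ e s t κ) {x : ℝ} (hx : e ≤ x) :
    κ * (x - e) ≤ cubic α β γ x := by
  rw [h.cubic_eq, mul_comm]
  exact mul_le_mul_of_nonneg_left (h.le_quadratic x hx) (sub_nonneg.2 hx)

lemma abs_cubic_sub_pow_le (α β γ : ℝ) {q : ℝ} (hq : 1 ≤ |q|) :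
    |cubic α β γ q - q ^ 3| ≤ (|α| + |β| + |γ|) * q ^ 2 := by
  have hq1 : 1 ≤ q ^ 2 := (one_le_sq_iff_one_le_abs q).2 hq
  have hq2 : |q| ≤ q ^ 2 := by rw [← sq_abs]; exact le_self_pow₀ hq two_ne_zero
  calc |cubic α β γ q - q ^ 3| = |α * q ^ 2 + β * q + γ| := by rw [cubic]; ring_nf
    _ ≤ |α| * q ^ 2 + |β| * |q| + |γ| := by
        refine (abs_add_three _ _ _).trans_eq ?_
        rw [abs_mul, abs_mul, abs_of_nonneg (sq_nonneg q)]
    _ ≤ |α| * q ^ 2 + |β| * q ^ 2 + |γ| * q ^ 2 := by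
        gcongr
        exact le_mul_of_one_le_right (abs_nonneg γ) hq1
    _ = _ := by ring

lemma cubic_pos_of_le {q : ℝ} (hq : 1 + |α| + |β| + |γ| ≤ q) : 0 < cubic α β γ q := by
  have hnn : 0 ≤ |α| + |β| + |γ| := by positivity
  have hbound := (abs_le.1 (abs_cubic_sub_pow_le α β γ (le_abs.2 (.inl (by linarith))))).1
  have hlt : (|α| + |β| + |γ|) * q ^ 2 < q * q ^ 2 := by
    have : 0 < q := by linarith
    gcongr
    linarith
  linarith [pow_succ' q 2]

lemma cubic_neg_of_le {q : ℝ} (hq : q ≤ -(1 + |α| + |β| + |γ|)) : cubic α β γ q < 0 := by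
  have hpos : 0 < cubic (-α) β (-γ) (-q) := cubic_pos_of_le (by simp only [abs_neg]; linarith)
  have heq : cubic (-α) β (-γ) (-q) = -cubic α β γ q := by rw [cubic, cubic]; ring
  linarith

lemma continuous_cubic : Continuous (cubic α β γ) := by
  unfold cubic
  fun_prop

lemma exists_cubic_eq_zero (α β γ : ℝ) : ∃ x, cubic α β γ x = 0 := by
  have hle : -(1 + |α| + |β| + |γ|) ≤ 1 + |α| + |β| + |γ| := neg_le_self (by positivity)
  obtain ⟨x, -, hx⟩ := intermediate_value_Icc hle continuous_cubic.continuousOn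
    ⟨(cubic_neg_of_le le_rfl).le, (cubic_pos_of_le le_rfl).le⟩
  exact ⟨x, hx⟩

lemma finite_setOf_cubic_eq_zero (α β γ : ℝ) : {x | cubic α β γ x = 0}.Finite := by
  have hne : (⟨1, α, β, γ⟩ : Cubic ℝ).toPoly ≠ 0 := Cubic.ne_zero_of_a_ne_zero one_ne_zero
  refine (Polynomial.finite_setOfPred_isRoot hne).subset fun x hx ↦ ?_
  simpa [Cubic.toPoly, cubic] using hx

lemma exists_pos_le_quadratic (hpos : ∀ x, e ≤ x → 0 < quadratic s t x) :
    ∃ κ, 0 < κ ∧ ∀ x, e ≤ x → κ ≤ quadratic s t x := by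
  refine ⟨quadratic s t (max e (-s / 2)), hpos _ (le_max_left _ _), fun x hx ↦ ?_⟩
  rcases max_cases e (-s / 2) with ⟨hmax, hs⟩ | ⟨hmax, -⟩ <;> rw [hmax, quadratic, quadratic]
  · nlinarith
  · nlinarith [sq_nonneg (x + s / 2)]

theorem exists_largestRoot
    (hdisc : α ^ 2 * β ^ 2 - 4 * β ^ 3 - 4 * α ^ 3 * γ - 27 * γ ^ 2 + 18 * α * β * γ ≠ 0) :
    ∃ e s t κ, LargestRoot α β γ e s t κ := by
  obtain ⟨e, he, hmax⟩ := Set.exists_max_image _ id (finite_setOf_cubic_eq_zero α β γ)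
    (exists_cubic_eq_zero α β γ)
  rw [Set.mem_ofPred_eq] at he
  set s := α + e with hs
  set t := β + e * s with ht
  have hα : α = s - e := by rw [hs]; ring
  have hβ : β = t - e * s := by rw [ht]; ring
  have hγ : γ = -(e * t) := by rw [ht, hs]; rw [cubic] at he; linarith
  have hfactor (x : ℝ) : cubic α β γ x = (x - e) * quadratic s t x := by
    rw [cubic, quadratic, hα, hβ, hγ]
    ring
  clear_value s t
  have hne (x : ℝ) (hx : e ≤ x) : quadratic s t x ≠ 0 := by
    intro h0
    have hroot : cubic α β γ x = 0 := by rw [hfactor, h0, mul_zero]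
    obtain rfl : x = e := le_antisymm (hmax x hroot) hx
    refine hdisc ?_
    calc _ = quadratic s t x ^ 2 * (s ^ 2 - 4 * t) := by rw [hα, hβ, hγ, quadratic]; ring
      _ = 0 := by rw [h0]; ring
  have hpos (x : ℝ) (hx : e ≤ x) : 0 < quadratic s t x := by
    by_contra! hle
    set M := max x (1 + |α| + |β| + |γ|)
    have hM : 0 < (M - e) * quadratic s t M := hfactor M ▸ cubic_pos_of_le (le_max_right _ _)
    have hxM : x ≤ M := le_max_left _ _
    have hM' : 0 < quadratic s t M := pos_of_mul_pos_right hM (by linarith)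
    have hcont : Continuous (quadratic s t) := by unfold quadratic; fun_prop
    obtain ⟨z, hz, hz0⟩ := intermediate_value_Icc hxM hcont.continuousOn ⟨hle, hM'.le⟩
    exact hne z (hx.trans hz.1) hz0
  obtain ⟨κ, hκ, hle⟩ := exists_pos_le_quadratic hpos
  exact ⟨e, s, t, κ, hα, hβ, hγ, hκ, hle⟩

end RealCubic

section Chord

variable {α β γ e s t κ : ℝ}

/-- The `x`-coordinate of the sum of the points `(x, y)` and `(q, r)` with `x ≠ q` on a curve
`y² = cubic α β γ x`. -/
noncomputable def chordX (α x y q r : ℝ) : ℝ := ((y - r) / (x - q)) ^ 2 - α - x - q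

lemma chordX_sub_mul_sq {x y q r : ℝ} (hy : y ^ 2 = cubic α β γ x) (hr : r ^ 2 = cubic α β γ q)
    (hxq : x ≠ q) : (chordX α x y q r - x) * (x - q) ^ 2 =
      q * cubicDeriv α β x - 2 * (y * r) + (β * x + 2 * γ - x ^ 3) := by
  have : x - q ≠ 0 := sub_ne_zero.2 hxq
  rw [chordX]
  field_simp
  rw [cubic] at hy hr
  rw [cubicDeriv]
  linear_combination hy + hr

lemma exists_bound_Icc (α β γ s e R : ℝ) : ∃ K : ℝ, 1 ≤ K ∧ ∀ x, e ≤ x → x ≤ R →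
    |cubicDeriv α β x| ≤ K ∧ |β * x + 2 * γ - x ^ 3| ≤ K ∧ |cubic α β γ x| ≤ K ∧
      |2 * x + s| ≤ K := by
  obtain ⟨K, hK⟩ := (isCompact_Icc (a := e) (b := R)).exists_bound_of_continuousOn
    (f := fun x ↦ |cubicDeriv α β x| + |β * x + 2 * γ - x ^ 3| + |cubic α β γ x| + |2 * x + s|)
    (by unfold cubicDeriv cubic; fun_prop)
  refine ⟨max 1 K, le_max_left _ _, fun x hx hxR ↦ ?_⟩
  have hsum := (le_abs_self _).trans ((hK x ⟨hx, hxR⟩).trans (le_max_right 1 K))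
  have := abs_nonneg (cubicDeriv α β x)
  have := abs_nonneg (β * x + 2 * γ - x ^ 3)
  have := abs_nonneg (cubic α β γ x)
  have := abs_nonneg (2 * x + s)
  refine ⟨?_, ?_, ?_, ?_⟩ <;> linarith

lemma eventually_mul_le_abs_of_sq_eq_cubic (α β γ m : ℝ) :
    ∀ᶠ q in atTop, ∀ r, r ^ 2 = cubic α β γ q → m * q ≤ |r| := by
  filter_upwards [eventually_ge_atTop 1, eventually_ge_atTop (m ^ 2 + (|α| + |β| + |γ|))]
    with q hq1 hq r hr
  have hlower := (abs_le.1 (abs_cubic_sub_pow_le α β γ (le_abs.2 (.inl hq1)))).1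
  have hmul : (m ^ 2 + (|α| + |β| + |γ|)) * q ^ 2 ≤ q * q ^ 2 := by gcongr
  refine (le_abs_self _).trans (sq_le_sq.1 ?_)
  rw [hr, mul_pow]
  linarith [pow_succ' q 2]

lemma eventually_abs_le_mul_sq_of_sq_eq_cubic (α β γ : ℝ) {η : ℝ} (hη : 0 < η) :
    ∀ᶠ q in atTop, ∀ r, r ^ 2 = cubic α β γ q → |r| ≤ η * q ^ 2 := by
  filter_upwards [eventually_ge_atTop 1, eventually_ge_atTop ((1 + (|α| + |β| + |γ|)) / η ^ 2)]
    with q hq1 hq r hr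
  rw [div_le_iff₀ (by positivity)] at hq
  have hupper := (abs_le.1 (abs_cubic_sub_pow_le α β γ (le_abs.2 (.inl hq1)))).2
  have hpow : (|α| + |β| + |γ|) * q ^ 2 ≤ (|α| + |β| + |γ|) * q ^ 3 := by
    gcongr
    norm_num
  refine abs_le_of_sq_le_sq ?_ (by positivity)
  calc r ^ 2 ≤ (1 + (|α| + |β| + |γ|)) * q ^ 3 := by rw [hr]; linarith
    _ ≤ q * η ^ 2 * q ^ 3 := by gcongr
    _ = (η * q ^ 2) ^ 2 := by ring

lemma eventually_abs_chordX_sub_le (α β γ e R : ℝ) {ε : ℝ} (hε : 0 < ε) :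
    ∀ᶠ q in atTop, R < q ∧ ∀ r, r ^ 2 = cubic α β γ q →
      ∀ x y, e ≤ x → x ≤ R → y ^ 2 = cubic α β γ x → |chordX α x y q r - x| ≤ ε := by
  obtain ⟨K, hK, hbound⟩ := exists_bound_Icc α β γ 0 e R
  filter_upwards [eventually_ge_atTop 1, eventually_gt_atTop R, eventually_ge_atTop (2 * R),
    eventually_ge_atTop (16 * K / ε),
    eventually_abs_le_mul_sq_of_sq_eq_cubic α β γ (η := ε / (16 * K)) (by positivity)]
    with q hq1 hRq hRq2 hKq hrle
  refine ⟨hRq, fun r hr x y hx hxR hy ↦ ?_⟩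
  obtain ⟨hderiv, hrest, hcubic, -⟩ := hbound x hx hxR
  have hxq : x < q := by linarith
  have hyK : |y| ≤ K := by
    refine abs_le_of_sq_le_sq ?_ (by linarith)
    nlinarith [(abs_le.1 hcubic).2]
  have hnum : |q * cubicDeriv α β x - 2 * (y * r) + (β * x + 2 * γ - x ^ 3)| ≤
      ε * (q ^ 2 / 4) := by
    calc _ ≤ q * K + 2 * (K * (ε / (16 * K) * q ^ 2)) + K := by
          refine (abs_add_le _ _).trans (add_le_add ((abs_sub _ _).trans ?_) hrest)
          rw [abs_mul, abs_mul, abs_mul, abs_two, abs_of_pos (by linarith : 0 < q)]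
          gcongr
          exact hrle r hr
      _ = q * K + ε / 8 * q ^ 2 + K := by field_simp; ring
      _ ≤ ε * (q ^ 2 / 4) := by
          rw [div_le_iff₀ hε] at hKq
          nlinarith
  have hsq : q ^ 2 / 4 ≤ (x - q) ^ 2 := by nlinarith
  have hsq_pos : 0 < (x - q) ^ 2 := by nlinarith
  rw [← chordX_sub_mul_sq hy hr hxq.ne, abs_mul, abs_of_pos hsq_pos] at hnum
  exact le_of_mul_le_mul_right (hnum.trans (by gcongr)) hsq_pos

lemma one_div_sq_add_one_le {d x q : ℝ} (hex : e ≤ x) (hxq : x < q)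
    (hd : 1 ≤ d * (x - q) ^ 2) : 1 / ((q - e) ^ 2 + 1) ≤ d := by
  have hsq_pos : 0 < (x - q) ^ 2 := by nlinarith
  have hd_pos : 0 < d := pos_of_mul_pos_left (one_pos.trans_le hd) hsq_pos.le
  rw [div_le_iff₀ (by positivity)]
  exact hd.trans (by gcongr; nlinarith)

namespace LargestRoot

lemma sqrt_mul_sqrt_le_abs (h : LargestRoot α β γ e s t κ) {x y : ℝ} (hx : e ≤ x)
    (hy : y ^ 2 = cubic α β γ x) : √κ * √(x - e) ≤ |y| := by
  rw [← Real.sqrt_mul h.κ_pos.le, ← Real.sqrt_sq_eq_abs, hy]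
  exact Real.sqrt_le_sqrt (h.mul_sub_le_cubic hx)

lemma eventually_le_chordX_sub (h : LargestRoot α β γ e s t κ) (R : ℝ) :
    ∀ᶠ q in atTop, R < q ∧ ∃ δ > 0, ∀ r, r ^ 2 = cubic α β γ q →
      ∀ x y, e ≤ x → x ≤ R → y ^ 2 = cubic α β γ x → y * r ≤ 0 → δ ≤ chordX α x y q r - x := by
  obtain ⟨K, hK, hbound⟩ := exists_bound_Icc α β γ s e R
  have hκ := h.κ_pos
  set m := K * √(R - e) / (2 * √κ) with hm
  filter_upwards [eventually_ge_atTop 1, eventually_gt_atTop R, eventually_ge_atTop ((K + 1) / κ),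
    eventually_mul_le_abs_of_sq_eq_cubic α β γ m] with q hq1 hRq hKq hrge
  rw [div_le_iff₀ hκ] at hKq
  refine ⟨hRq, 1 / ((q - e) ^ 2 + 1), by positivity, fun r hr x y hx hxR hy hyr ↦ ?_⟩
  obtain ⟨-, hrest, -, hlin⟩ := hbound x hx hxR
  refine one_div_sq_add_one_le hx (by linarith) ?_
  rw [chordX_sub_mul_sq hy hr (by linarith)]
  have hderiv : cubicDeriv α β x = quadratic s t x + (x - e) * (2 * x + s) := by
    rw [cubicDeriv, quadratic, h.α_eq, h.β_eq]
    ring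
  have hlin' : -(K * (x - e)) ≤ (x - e) * (2 * x + s) := by nlinarith [(abs_le.1 hlin).1]
  have hyr_abs : -(y * r) = |y| * |r| := by rw [← abs_mul, abs_of_nonpos hyr]
  have hmain : q * (K * (x - e)) ≤ 2 * (|y| * |r|) := by
    have hsqrt : √(x - e) ≤ √(R - e) := Real.sqrt_le_sqrt (by linarith)
    calc q * (K * (x - e)) = q * K * √(x - e) * √(x - e) := by
          rw [mul_assoc (q * K), Real.mul_self_sqrt (by linarith), mul_assoc]
      _ ≤ q * K * √(x - e) * √(R - e) := by gcongr
      _ = 2 * ((√κ * √(x - e)) * (m * q)) := by rw [hm]; field_simp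
      _ ≤ 2 * (|y| * |r|) := by
          gcongr
          exacts [h.sqrt_mul_sqrt_le_abs hx hy, hrge r hr]
  rw [hderiv]
  nlinarith [(abs_le.1 hrest).1, h.le_quadratic x hx]

lemma eventually_chordX_sub_le_neg (h : LargestRoot α β γ e s t κ) {R x₀ : ℝ} (hx₀ : e < x₀) :
    ∀ᶠ q in atTop, R < q ∧ ∃ δ > 0, ∀ r, r ^ 2 = cubic α β γ q →
      ∀ x y, x₀ ≤ x → x ≤ R → y ^ 2 = cubic α β γ x → 0 ≤ y * r →
        chordX α x y q r - x ≤ -δ := by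
  obtain ⟨K, hK, hbound⟩ := exists_bound_Icc α β γ 0 e R
  have : 0 < √κ := Real.sqrt_pos.2 h.κ_pos
  have : 0 < √(x₀ - e) := Real.sqrt_pos.2 (sub_pos.2 hx₀)
  set m := 3 * K / (√κ * √(x₀ - e)) with hm
  filter_upwards [eventually_ge_atTop 1, eventually_gt_atTop R,
    eventually_mul_le_abs_of_sq_eq_cubic α β γ m] with q hq1 hRq hrge
  refine ⟨hRq, 1 / ((q - e) ^ 2 + 1), by positivity, fun r hr x y hx hxR hy hyr ↦ ?_⟩
  have hex : e ≤ x := by linarith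
  obtain ⟨hderiv, hrest, -, -⟩ := hbound x hex hxR
  refine le_neg_of_le_neg (one_div_sq_add_one_le hex (by linarith) ?_)
  rw [neg_mul, chordX_sub_mul_sq hy hr (by linarith)]
  have hmain : 3 * K * q ≤ y * r := by
    calc 3 * K * q = (√κ * √(x₀ - e)) * (m * q) := by rw [hm]; field_simp
      _ ≤ (√κ * √(x - e)) * (m * q) := by gcongr
      _ ≤ |y| * |r| := by
          gcongr
          exacts [h.sqrt_mul_sqrt_le_abs hex hy, hrge r hr]
      _ = y * r := by rw [← abs_mul, abs_of_nonneg hyr]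
  have hderiv' : q * cubicDeriv α β x ≤ q * K := by gcongr; exact (abs_le.1 hderiv).2
  nlinarith [(abs_le.1 hrest).2]

end LargestRoot

end Chord

/-! ### Walking into an interval -/

/-- Coordinates `x, y : G → ℝ` on an additive group `G` obeying the chord law of the curve
`y² = cubic α β γ x`; nothing is required of their values at `0`, the point at infinity, beyond the
two parity conditions. -/
structure ChordLaw {G : Type*} [AddCommGroup G] (α β γ : ℝ) (x y : G → ℝ) : Prop where
  sq_eq : ∀ P, P ≠ 0 → y P ^ 2 = cubic α β γ (x P)
  x_neg : ∀ P, x (-P) = x P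
  y_neg : ∀ P, y (-P) = -y P
  x_add : ∀ P Q, P ≠ 0 → Q ≠ 0 → x P ≠ x Q →
    P + Q ≠ 0 ∧ x (P + Q) = chordX α (x P) (y P) (x Q) (y Q)
  eq_or_eq_neg : ∀ P Q, P ≠ 0 → Q ≠ 0 → x P = x Q → P = Q ∨ P = -Q

section Walk

variable {G : Type*} [AddCommGroup G]

lemma exists_add_zsmul_mem_of_step {S T : Set G} {φ : G → ℝ} {δ : ℝ} {Q : G}
    (hstep : ∀ P ∈ S, P ∉ T → ∃ σ : ℤ, |σ| ≤ 1 ∧ P + σ • Q ∈ S ∧ φ (P + σ • Q) ≤ φ P - δ)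
    (hneg : ∀ P ∈ S, φ P < 0 → P ∈ T) :
    ∀ (n : ℕ), ∀ P ∈ S, φ P < n * δ → ∃ m : ℤ, |m| ≤ n ∧ P + m • Q ∈ T
  | 0, P, hP, hφ => ⟨0, by simp, by simpa using hneg P hP (by simpa using hφ)⟩
  | n + 1, P, hP, hφ => by
    by_cases hPT : P ∈ T
    · exact ⟨0, by rw [abs_zero]; positivity, by simpa using hPT⟩
    obtain ⟨σ, hσ, hmem, hle⟩ := hstep P hP hPT
    push_cast at hφ
    obtain ⟨m, hm, hmT⟩ := exists_add_zsmul_mem_of_step hstep hneg n _ hmem (by linarith)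
    refine ⟨σ + m, (abs_add_le _ _).trans (by push_cast; linarith), ?_⟩
    rwa [add_smul, ← add_assoc]

end Walk

namespace ChordLaw

variable {G : Type*} [AddCommGroup G] {α β γ e s t κ x₁ x₂ R δ : ℝ} {x y : G → ℝ}
  {A : AddSubgroup G} {P Q : G}

lemma exists_zsmul_mul_y_nonpos (C : ChordLaw α β γ x y) (w : ℝ) (hQA : Q ∈ A) (hQ : Q ≠ 0) :
    ∃ σ : ℤ, |σ| ≤ 1 ∧ σ • Q ∈ A ∧ σ • Q ≠ 0 ∧ x (σ • Q) = x Q ∧ w * y (σ • Q) ≤ 0 := by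
  rcases le_total (w * y Q) 0 with h | h
  · exact ⟨1, by simp, by simpa using hQA, by simpa using hQ, by simp, by simpa using h⟩
  · exact ⟨-1, by simp, by simpa using hQA, by simpa using hQ, by simp [C.x_neg],
      by simpa [C.y_neg] using h⟩

lemma x_zsmul_ne_x_zsmul (C : ChordLaw α β γ x y) (hQ : ∀ n : ℤ, n ≠ 0 → n • Q ≠ 0) {m n : ℤ}
    (hm : 0 < m) (hn : 0 < n) (hmn : m ≠ n) : x (m • Q) ≠ x (n • Q) := by
  intro hx
  rcases C.eq_or_eq_neg _ _ (hQ m hm.ne') (hQ n hn.ne') hx with h | h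
  · exact hQ (m - n) (sub_ne_zero.2 hmn) (by rw [sub_smul, sub_eq_zero, h])
  · exact hQ (m + n) (by positivity) (by rw [add_smul, h, neg_add_cancel])

lemma exists_x_ne_abs_sub_lt (C : ChordLaw α β γ x y) (hQA : Q ∈ A)
    (hQ : ∀ n : ℤ, n ≠ 0 → n • Q ≠ 0) (hx : ∀ P ∈ A, P ≠ 0 → x P ∈ Set.Icc e R)
    {ε : ℝ} (hε : 0 < ε) :
    ∃ P ∈ A, ∃ P' ∈ A, P ≠ 0 ∧ P' ≠ 0 ∧ x P ≠ x P' ∧ |x P - x P'| < ε := by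
  have hmem (n : ℕ) : ((n : ℤ) + 1) • Q ∈ A := A.zsmul_mem hQA _
  have hne (n : ℕ) : ((n : ℤ) + 1) • Q ≠ 0 := hQ _ (by positivity)
  obtain ⟨m, -, n, -, hmn, hfloor⟩ := Set.Infinite.exists_ne_map_eq_of_mapsTo
    (s := (Set.univ : Set ℕ)) (t := Set.Icc ⌊e / ε⌋ ⌊R / ε⌋)
    (f := fun n ↦ ⌊x (((n : ℤ) + 1) • Q) / ε⌋) Set.infinite_univ
    (fun n _ ↦ ⟨Int.floor_le_floor (by gcongr; exact (hx _ (hmem n) (hne n)).1),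
      Int.floor_le_floor (by gcongr; exact (hx _ (hmem n) (hne n)).2)⟩) (Set.finite_Icc _ _)
  refine ⟨_, hmem m, _, hmem n, hne m, hne n,
    C.x_zsmul_ne_x_zsmul hQ (by positivity) (by positivity) (by simpa using hmn), ?_⟩
  have := Int.abs_sub_lt_one_of_floor_eq_floor hfloor
  rwa [← sub_div, abs_div, abs_of_pos hε, div_lt_one hε] at this

lemma div_abs_sub_le_x_add (C : ChordLaw α β γ x y) (h : LargestRoot α β γ e s t κ)
    (hP : P ≠ 0) (hQ : Q ≠ 0) (heP : e ≤ x P) (heQ : e ≤ x Q) (hPQ : x P ≠ x Q)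
    (hy : y P * y Q ≤ 0) : κ / |x P - x Q| ≤ x (P + Q) + α + x P + x Q := by
  have : x P - x Q ≠ 0 := sub_ne_zero.2 hPQ
  have hdist : |x P - x Q| ≤ (x P - e) + (x Q - e) := by rw [abs_le]; constructor <;> linarith
  have hnum : κ * |x P - x Q| ≤ (y P - y Q) ^ 2 := by
    calc κ * |x P - x Q| ≤ κ * (x P - e) + κ * (x Q - e) := by
          rw [← mul_add]; exact mul_le_mul_of_nonneg_left hdist h.κ_pos.le
      _ ≤ y P ^ 2 + y Q ^ 2 := by
          rw [C.sq_eq P hP, C.sq_eq Q hQ]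
          exact add_le_add (h.mul_sub_le_cubic heP) (h.mul_sub_le_cubic heQ)
      _ ≤ (y P - y Q) ^ 2 := by linarith [sub_sq (y P) (y Q)]
  calc κ / |x P - x Q| = κ * |x P - x Q| / (x P - x Q) ^ 2 := by
        rw [← sq_abs (x P - x Q)]
        field_simp
    _ ≤ (y P - y Q) ^ 2 / (x P - x Q) ^ 2 := by gcongr
    _ = x (P + Q) + α + x P + x Q := by rw [(C.x_add P Q hP hQ hPQ).2, chordX, div_pow]; ring

-- If the multiples of `Q` had bounded abscissae, two of them would be close; given ordinates of
-- opposite signs they span a steep chord, so that their sum lies far out.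
theorem exists_lt_x (C : ChordLaw α β γ x y) (h : LargestRoot α β γ e s t κ)
    (hA : ∀ P ∈ A, P ≠ 0 → e ≤ x P) (hQA : Q ∈ A) (hQ : ∀ n : ℤ, n ≠ 0 → n • Q ≠ 0) (M : ℝ) :
    ∃ P ∈ A, P ≠ 0 ∧ M < x P := by
  by_contra! hle
  have hκ := h.κ_pos
  set T := |α| + 3 * |M| + 1
  obtain ⟨P, hPA, P', hPA', hP, hP', hne, hdist⟩ := C.exists_x_ne_abs_sub_lt hQA hQ
    (fun P hPA hP ↦ ⟨hA P hPA hP, hle P hPA hP⟩) (ε := κ / T) (by positivity)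
  obtain ⟨σ, -, hσA, hσ, hxσ, hyσ⟩ := C.exists_zsmul_mul_y_nonpos (y P) hPA' hP'
  rw [← hxσ] at hne hdist
  have hadd := C.div_abs_sub_le_x_add h hP hσ (hA _ hPA hP) (hA _ hσA hσ) hne hyσ
  have hT_le : T ≤ κ / |x P - x (σ • P')| := by
    have : 0 < |x P - x (σ • P')| := abs_pos.2 (sub_ne_zero.2 hne)
    rw [lt_div_iff₀ (by positivity)] at hdist
    rw [le_div_iff₀ this]
    linarith
  have := hle _ (A.add_mem hPA hσA) (C.x_add _ _ hP hσ hne).1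
  linarith [hle _ hPA hP, hle _ hσA hσ, le_abs_self α, le_abs_self M]

/-- A walk step: adding `Q` or `-Q` moves a point left of `x₁` to the right, and a point with
`x₂ ≤ x ≤ R` to the left, by at least `δ` and without jumping over `(x₁, x₂)`. -/
structure IsStep (A : AddSubgroup G) (x : G → ℝ) (x₁ x₂ R δ : ℝ) (Q : G) : Prop where
  pos : 0 < δ
  right : ∀ P ∈ A, P ≠ 0 → x P ≤ x₁ → ∃ σ : ℤ, |σ| ≤ 1 ∧ P + σ • Q ∈ A ∧ P + σ • Q ≠ 0 ∧
    x P + δ ≤ x (P + σ • Q) ∧ x (P + σ • Q) < x₂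
  left : ∀ P ∈ A, P ≠ 0 → x₂ ≤ x P → x P ≤ R → ∃ σ : ℤ, |σ| ≤ 1 ∧ P + σ • Q ∈ A ∧
    P + σ • Q ≠ 0 ∧ x (P + σ • Q) ≤ x P - δ ∧ x₁ < x (P + σ • Q)

lemma exists_isStep (C : ChordLaw α β γ x y) (h : LargestRoot α β γ e s t κ)
    (hA : ∀ P ∈ A, P ≠ 0 → e ≤ x P) (hQA : Q ∈ A) (hQ : ∀ n : ℤ, n ≠ 0 → n • Q ≠ 0)
    (hx₁ : e < x₁) (hx₁₂ : x₁ < x₂) (hR : x₂ ≤ R) : ∃ δ, ∃ Q₁, IsStep A x x₁ x₂ R δ Q₁ := by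
  have hhalf : 0 < (x₂ - x₁) / 2 := by linarith
  obtain ⟨q, hq⟩ := eventually_atTop.1 ((eventually_abs_chordX_sub_le α β γ e R hhalf).and
    ((h.eventually_le_chordX_sub R).and (h.eventually_chordX_sub_le_neg (R := R) hx₁)))
  obtain ⟨Q₁, hQ₁A, hQ₁, hqx⟩ := C.exists_lt_x h hA hQA hQ q
  obtain ⟨⟨hRq, hjump⟩, ⟨-, δ₁, hδ₁, hright⟩, ⟨-, δ₂, hδ₂, hleft⟩⟩ := hq _ hqx.le
  have hadd {P : G} {σ : ℤ} (hP : P ≠ 0) (hσ : σ • Q₁ ≠ 0) (hxσ : x (σ • Q₁) = x Q₁)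
      (hPR : x P ≤ R) : P + σ • Q₁ ≠ 0 ∧
        x (P + σ • Q₁) = chordX α (x P) (y P) (x Q₁) (y (σ • Q₁)) := by
    rw [← hxσ]
    exact C.x_add _ _ hP hσ (by rw [hxσ]; linarith)
  have hsq {σ : ℤ} (hσ : σ • Q₁ ≠ 0) (hxσ : x (σ • Q₁) = x Q₁) :
      y (σ • Q₁) ^ 2 = cubic α β γ (x Q₁) := hxσ ▸ C.sq_eq _ hσ
  refine ⟨min δ₁ δ₂, Q₁, lt_min hδ₁ hδ₂, fun P hPA hP hPx ↦ ?_, fun P hPA hP hPx hPR ↦ ?_⟩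
  · obtain ⟨σ, hσ1, hσA, hσ, hxσ, hyσ⟩ := C.exists_zsmul_mul_y_nonpos (y P) hQ₁A hQ₁
    have hPR : x P ≤ R := by linarith
    obtain ⟨hne, hx⟩ := hadd hP hσ hxσ hPR
    have hsmall := hjump _ (hsq hσ hxσ) _ _ (hA P hPA hP) hPR (C.sq_eq P hP)
    have hmove := hright _ (hsq hσ hxσ) _ _ (hA P hPA hP) hPR (C.sq_eq P hP) hyσ
    refine ⟨σ, hσ1, A.add_mem hPA hσA, hne, ?_, ?_⟩ <;> rw [hx]
    · linarith [min_le_left δ₁ δ₂]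
    · linarith [(abs_le.1 hsmall).2]
  · obtain ⟨σ, hσ1, hσA, hσ, hxσ, hyσ⟩ := C.exists_zsmul_mul_y_nonpos (-y P) hQ₁A hQ₁
    obtain ⟨hne, hx⟩ := hadd hP hσ hxσ hPR
    have hsmall := hjump _ (hsq hσ hxσ) _ _ (hA P hPA hP) hPR (C.sq_eq P hP)
    have hmove := hleft _ (hsq hσ hxσ) _ _ (hx₁₂.le.trans hPx) hPR (C.sq_eq P hP) (by linarith)
    refine ⟨σ, hσ1, A.add_mem hPA hσA, hne, ?_, ?_⟩ <;> rw [hx]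
    · linarith [min_le_right δ₁ δ₂]
    · linarith [(abs_le.1 hsmall).1]

lemma IsStep.exists_bound (hstep : IsStep A x x₁ x₂ R δ Q) (hA : ∀ P ∈ A, P ≠ 0 → e ≤ x P)
    (hx₁₂ : x₁ < x₂) :
    ∃ N : ℕ, ∀ P ∈ A, P ≠ 0 → x P ≤ R →
      ∃ m : ℤ, |m| ≤ N ∧ P + m • Q ≠ 0 ∧ x (P + m • Q) ∈ Set.Ioo x₁ x₂ := by
  obtain ⟨N, hN⟩ := exists_nat_gt (max ((x₁ - e) / δ) ((R - x₂) / δ))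
  obtain ⟨hN₁, hN₂⟩ := max_lt_iff.1 hN
  rw [div_lt_iff₀ hstep.pos] at hN₁ hN₂
  have hpos := hstep.pos
  refine ⟨N, fun P hPA hP hPR ↦ ?_⟩
  rcases lt_or_ge (x P) x₂ with hPx | hPx
  · refine exists_add_zsmul_mem_of_step (S := {P | P ∈ A ∧ P ≠ 0 ∧ x P < x₂})
      (T := {P | P ≠ 0 ∧ x P ∈ Set.Ioo x₁ x₂}) (φ := fun P ↦ x₁ - x P) (δ := δ) ?_ ?_ N P
      ⟨hPA, hP, hPx⟩ (by linarith [hA P hPA hP])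
    · rintro P ⟨hPA, hP, hPx⟩ hPT
      obtain ⟨σ, hσ, hmem, hne, hmove, hlt⟩ := hstep.right P hPA hP
        (not_lt.1 fun hlt ↦ hPT ⟨hP, hlt, hPx⟩)
      exact ⟨σ, hσ, ⟨hmem, hne, hlt⟩, by linarith⟩
    · exact fun P hPS hφ ↦ ⟨hPS.2.1, by linarith, hPS.2.2⟩
  · refine exists_add_zsmul_mem_of_step (S := {P | P ∈ A ∧ P ≠ 0 ∧ x₁ < x P ∧ x P ≤ R})
      (T := {P | P ≠ 0 ∧ x P ∈ Set.Ioo x₁ x₂}) (φ := fun P ↦ x P - x₂) (δ := δ) ?_ ?_ N P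
      ⟨hPA, hP, by linarith, hPR⟩ (by linarith)
    · rintro P ⟨hPA, hP, hPx, hPR⟩ hPT
      obtain ⟨σ, hσ, hmem, hne, hmove, hlt⟩ := hstep.left P hPA hP
        (not_lt.1 fun hlt ↦ hPT ⟨hP, hPx, hlt⟩) hPR
      exact ⟨σ, hσ, ⟨hmem, hne, hlt, by linarith⟩, by linarith⟩
    · exact fun P hPS hφ ↦ ⟨hPS.2.1, hPS.2.2.1, by linarith⟩

lemma exists_x_add_le (C : ChordLaw α β γ x y) (hQ : Q ≠ 0) (heQ : e ≤ x Q) :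
    ∃ R₀, ∀ R ≥ R₀, ∀ P, P = 0 ∨ R < x P → P + Q ≠ 0 ∧ x (P + Q) ≤ R := by
  obtain ⟨q, hq⟩ := eventually_atTop.1 (eventually_abs_chordX_sub_le α β γ e (x Q) one_pos)
  refine ⟨max q (x Q + 1), fun R hR P hP ↦ ?_⟩
  obtain ⟨hqR, hQR⟩ := max_le_iff.1 hR
  by_cases hP0 : P = 0
  · subst hP0
    rw [zero_add]
    exact ⟨hQ, by linarith⟩
  have hRP : R < x P := hP.resolve_left hP0
  obtain ⟨hne, hx⟩ := C.x_add Q P hQ hP0 (by linarith)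
  have hsmall := (hq (x P) (by linarith)).2 _ (C.sq_eq P hP0) _ _ heQ le_rfl (C.sq_eq Q hQ)
  rw [add_comm P Q, hx]
  exact ⟨hne, by linarith [(abs_le.1 hsmall).2]⟩

theorem exists_finset_x_add_mem_Ioo (C : ChordLaw α β γ x y) (h : LargestRoot α β γ e s t κ)
    (hA : ∀ P ∈ A, P ≠ 0 → e ≤ x P) (hQA : Q ∈ A) (hQ : ∀ n : ℤ, n ≠ 0 → n • Q ≠ 0)
    (hx₁ : e < x₁) (hx₁₂ : x₁ < x₂) :
    ∃ F : Finset G, ∀ P ∈ A, ∃ T ∈ F, P + T ≠ 0 ∧ x (P + T) ∈ Set.Ioo x₁ x₂ := by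
  classical
  have hQ0 : Q ≠ 0 := by simpa using hQ 1 one_ne_zero
  obtain ⟨R₀, hR₀⟩ := C.exists_x_add_le hQ0 (hA Q hQA hQ0)
  set R := max R₀ x₂
  obtain ⟨δ, Q₁, hstep⟩ := C.exists_isStep h hA hQA hQ hx₁ hx₁₂ (le_max_right R₀ x₂)
  obtain ⟨N, hN⟩ := hstep.exists_bound hA hx₁₂
  refine ⟨Finset.image₂ (fun T m ↦ T + m • Q₁) {0, Q} (Finset.Icc (-(N : ℤ)) N),
    fun P hPA ↦ ?_⟩
  obtain ⟨T, hT, hTA, hne, hle⟩ : ∃ T ∈ ({0, Q} : Finset G), T ∈ A ∧ P + T ≠ 0 ∧ x (P + T) ≤ R := by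
    by_cases hP : P ≠ 0 ∧ x P ≤ R
    · exact ⟨0, by simp, A.zero_mem, by simpa using hP⟩
    · rw [not_and_or, not_not, not_le] at hP
      exact ⟨Q, by simp, hQA, hR₀ R (le_max_left _ _) P hP⟩
  obtain ⟨m, hm, hmem⟩ := hN _ (A.add_mem hPA hTA) hne hle
  rw [add_assoc] at hmem
  exact ⟨_, Finset.mem_image₂_of_mem hT (Finset.mem_Icc.2 (abs_le.1 hm)), hmem⟩

end ChordLaw

/-! ### Divergence -/

section Coordinates

/-- The `x`-coordinate of a point, with junk value `0` at infinity. -/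
def xCoord : (twist a b c D).Point → ℚ
  | .zero => 0
  | .some x _ _ => x

/-- The `y`-coordinate of a point, with junk value `0` at infinity. -/
def yCoord : (twist a b c D).Point → ℚ
  | .zero => 0
  | .some _ y _ => y

lemma eq_or_eq_neg_of_xCoord_eq {P Q : (twist a b c D).Point} (hP : P ≠ 0) (hQ : Q ≠ 0)
    (hPQ : xCoord P = xCoord Q) : P = Q ∨ P = -Q := by
  cases P with
  | zero => exact absurd rfl hP
  | some x y h =>
    cases Q with
    | zero => exact absurd rfl hQ
    | some x' y' h' =>
      obtain rfl : x = x' := hPQ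
      have hsq : y ^ 2 = y' ^ 2 := (twist_equation_iff.1 h.1).trans (twist_equation_iff.1 h'.1).symm
      rcases sq_eq_sq_iff_eq_or_eq_neg.1 hsq with rfl | rfl
      · exact .inl rfl
      · obtain ⟨h'', hneg⟩ := neg_some_eq h'
        exact .inr hneg.symm

lemma ne_zero_of_yCoord_ne_zero {P : (twist a b c D).Point} (hP : yCoord P ≠ 0) : P ≠ 0 := by
  rintro rfl
  exact hP rfl

lemma chordLaw_twist : ChordLaw ((a : ℝ) * D) ((b : ℝ) * D ^ 2) ((c : ℝ) * D ^ 3)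
    (fun P : (twist a b c D).Point ↦ (xCoord P : ℝ)) (fun P ↦ (yCoord P : ℝ)) where
  sq_eq P hP := by
    cases P with
    | zero => exact absurd rfl hP
    | some x y h =>
      simp only [xCoord, yCoord, cubic]
      exact_mod_cast twist_equation_iff.1 h.1
  x_neg P := by
    cases P with
    | zero => rfl
    | some x y h => obtain ⟨h', hneg⟩ := neg_some_eq h; rw [hneg]; rfl
  y_neg P := by
    cases P with
    | zero => simp [yCoord, ← Point.zero_def]
    | some x y h => obtain ⟨h', hneg⟩ := neg_some_eq h; rw [hneg]; simp [yCoord]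
  x_add P Q hP hQ hPQ := by
    cases P with
    | zero => exact absurd rfl hP
    | some x y h =>
      cases Q with
      | zero => exact absurd rfl hQ
      | some x' y' h' =>
        obtain ⟨y'', h'', hadd⟩ := some_add_some_eq h h' (ne_of_apply_ne _ hPQ)
        rw [hadd]
        exact ⟨Point.some_ne_zero _, by simp [xCoord, yCoord, chordX]⟩
  eq_or_eq_neg P Q hP hQ hPQ := eq_or_eq_neg_of_xCoord_eq hP hQ (mod_cast hPQ)

lemma LargestRoot.le_xCoord_add_self {e s t κ : ℝ}
    (h : LargestRoot ((a : ℝ) * D) ((b : ℝ) * D ^ 2) ((c : ℝ) * D ^ 3) e s t κ)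
    (P : (twist a b c D).Point) (hP : P + P ≠ 0) : e ≤ xCoord (P + P) := by
  cases P with
  | zero => exact absurd (by rw [← Point.zero_def, add_zero]) hP
  | some x y hns =>
    have hy : y ≠ 0 := by rintro rfl; exact hP (some_zero_add_self hns)
    obtain ⟨y', h', hadd⟩ := some_add_self_eq hns hy
    have hsq : (y : ℝ) ^ 2 = (x - e) * quadratic s t x := by
      rw [← h.cubic_eq, cubic]
      exact_mod_cast twist_equation_iff.1 hns.1
    have : (y : ℝ) ≠ 0 := mod_cast hy
    -- `x(2P) - e` is a square because `e` is the abscissa of a `2`-torsion point.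
    have hsub : (xCoord (Point.some x y hns + Point.some x y hns) : ℝ) - e =
        (((x - e) ^ 2 - quadratic s t e) / (2 * y)) ^ 2 := by
      have hderiv : (3 * x ^ 2 + 2 * a * D * x + b * D ^ 2 : ℝ) =
          3 * x ^ 2 + 2 * (a * D) * x + b * D ^ 2 := by ring
      rw [hadd, xCoord]
      push_cast
      rw [hderiv, h.α_eq, h.β_eq]
      field_simp
      rw [hsq, quadratic, quadratic]
      ring
    linarith [sq_nonneg (((x - e) ^ 2 - quadratic s t e) / (2 * y))]

end Coordinates

section Index

lemma abs_sqfreePart_le {sq : ℤ → ℤ} (hsq : IsSqfreePart sq) {n : ℤ} (hn : n ≠ 0) {m : ℚ}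
    (h : (n : ℚ) = D * m ^ 2) : |sq n| ≤ |D| := by
  obtain ⟨hsqfree, r, hr⟩ := hsq n hn
  have hm : m ≠ 0 := by rintro rfl; exact hn (by simpa using h)
  have hD : (D : ℚ) = sq n * (r / m) ^ 2 := by
    field_simp
    rw [← h, hr]
  obtain ⟨k, hk⟩ := exists_int_eq_of_squarefree hsqfree hD
  have hDk : D = sq n * k ^ 2 := by rw [hk] at hD; exact_mod_cast hD
  have hD0 : D ≠ 0 := by rintro rfl; exact hn (by simpa using h)
  exact Int.le_of_dvd (abs_pos.2 hD0) ((abs_dvd_abs _ _).2 ⟨_, hDk⟩)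

/-- The pair `(u, v)` with `u / v` the abscissa, in lowest terms and with `v > 0`, of the point of
`D y² = f(x)` corresponding to `P`. -/
def indexPair (P : (twist a b c D).Point) : ℤ × ℤ := ((xCoord P / D).num, (xCoord P / D).den)

lemma xCoord_eq_of_indexPair_eq (hD : D ≠ 0) {P Q : (twist a b c D).Point}
    (h : indexPair P = indexPair Q) : xCoord P = xCoord Q := by
  obtain ⟨hnum, hden⟩ := Prod.mk.injEq _ _ _ _ ▸ h
  have hdiv : xCoord P / D = xCoord Q / D := Rat.ext hnum (mod_cast hden)
  exact (div_left_inj' (mod_cast hD)).1 hdiv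

variable {P : (twist a b c D).Point}

lemma indexPair_mem_SIdx (hD : D ≠ 0) {X : Set ℝ} (hX : (xCoord P : ℝ) / D ∈ X)
    (hy : yCoord P ≠ 0) : indexPair P ∈ SIdx a b c X := by
  cases P with
  | zero => exact absurd rfl hy
  | some x y h =>
    refine ⟨⟨gcd_num_den _, Fbin_num_den_ne_zero hD hy h⟩, ?_⟩
    have hdiv : ((x / D).num : ℝ) / ((x / D).den : ℤ) = x / D := by
      exact_mod_cast congrArg (Rat.cast : ℚ → ℝ) (Rat.num_div_den (x / D))
    rw [indexPair]
    exact hdiv ▸ hX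

lemma le_STerm_indexPair (hD : D ≠ 0) {sq : ℤ → ℤ} (hsq : IsSqfreePart sq) {j k : ℝ}
    (hk : 0 ≤ k) (hy : yCoord P ≠ 0) :
    |(D : ℝ)| ^ (-k) * (max 1 (naiveHeight P)) ^ (-j) ≤ STerm a b c sq j k (indexPair P) := by
  cases P with
  | zero => exact absurd rfl hy
  | some x y h =>
    have hF := Fbin_num_den_ne_zero hD hy h
    have hsq_pos : 0 < |(sq (Fbin a b c (x / D).num (x / D).den) : ℝ)| :=
      abs_pos.2 (mod_cast (hsq _ hF).1.ne_zero)
    have hsq_le : |(sq (Fbin a b c (x / D).num (x / D).den) : ℝ)| ≤ |(D : ℝ)| :=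
      mod_cast abs_sqfreePart_le hsq hF (Fbin_num_den_eq hD h)
    rw [STerm, indexPair, xCoord, ht_eq_max_logHeight₁ (gcd_num_den _) (mod_cast (x / D).den_nz),
      Int.cast_natCast, Rat.num_div_den, naiveHeight_some]
    gcongr ?_ * _
    exact Real.rpow_le_rpow_of_nonpos hsq_pos hsq_le (by linarith)

end Index

section Divergence

lemma card_le_two_mul_of_add_eq_or_eq_neg {ι G : Type*} [AddCommGroup G] {p : ι → G}
    (hp : Function.Injective p) {S : Finset ι} {F : Finset G} {R : G}
    (h : ∀ m ∈ S, ∃ T ∈ F, p m + T = R ∨ p m + T = -R) : S.card ≤ 2 * F.card := by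
  classical
  have hsub : S.image p ⊆ F.image (R - ·) ∪ F.image (-R - ·) := by
    intro Q hQ
    obtain ⟨m, hm, rfl⟩ := Finset.mem_image.1 hQ
    obtain ⟨T, hT, heq | heq⟩ := h m hm
    · exact Finset.mem_union_left _ (Finset.mem_image.2 ⟨T, hT, by simp [← heq]⟩)
    · exact Finset.mem_union_right _ (Finset.mem_image.2 ⟨T, hT, by simp [← heq]⟩)
  calc S.card = (S.image p).card := (Finset.card_image_of_injective _ hp).symm
    _ ≤ (F.image (R - ·) ∪ F.image (-R - ·)).card := Finset.card_le_card hsub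
    _ ≤ (F.image (R - ·)).card + (F.image (-R - ·)).card := Finset.card_union_le _ _
    _ ≤ F.card + F.card := add_le_add Finset.card_image_le Finset.card_image_le
    _ = 2 * F.card := (two_mul _).symm

lemma card_le_mul_card_image_sdiff_add {ι κ : Type*} [DecidableEq κ] (φ : ι → κ) (S : Finset ι)
    (s : Finset κ) {B : ℕ} (hfiber : ∀ i, (S.filter fun j ↦ φ j = φ i).card ≤ B) :
    S.card ≤ B * ((S.image φ \ s).card + s.card) := by
  have himage : S.card ≤ B * (S.image φ).card := by
    refine Finset.card_le_mul_card_image _ _ fun p hp ↦ ?_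
    obtain ⟨i, -, rfl⟩ := Finset.mem_image.1 hp
    exact hfiber i
  exact himage.trans (Nat.mul_le_mul_left B (Nat.sub_le_iff_le_add.1 (Finset.le_card_sdiff s _)))

-- The box `[0, N]ⁿ` has at least `(N + 1)ⁿ / B` images, each contributing at least
-- `ε / (N + 1)ⁿ`, however many terms are discarded beforehand.
lemma not_summable_of_le_on_box {ι : Type*} {g : ι → ℝ} {n B : ℕ} {φ : (Fin n → ℕ) → ι} {ε : ℝ}
    (hn : n ≠ 0) (hε : 0 < ε)
    (hfiber : ∀ (S : Finset (Fin n → ℕ)) (m₀ : Fin n → ℕ), (∀ m ∈ S, φ m = φ m₀) → S.card ≤ B)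
    (hle : ∀ (N : ℕ) (m : Fin n → ℕ), (∀ i, m i ≤ N) → ε / (N + 1) ^ n ≤ g (φ m)) :
    ¬Summable g := by
  classical
  intro hg
  have hB : 1 ≤ B := by simpa using hfiber {0} 0 (by simp)
  have : (0 : ℝ) < B := mod_cast hB
  obtain ⟨s, hs⟩ := summable_iff_vanishing_norm.1 hg (ε / (2 * B)) (by positivity)
  obtain ⟨N, hN⟩ := exists_nat_ge (2 * B * s.card : ℝ)
  set S : Finset (Fin n → ℕ) := Fintype.piFinset fun _ ↦ Finset.range (N + 1)
  set I := S.image φ \ s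
  have hcard : ((N : ℝ) + 1) ^ n ≤ B * (I.card + s.card) := by
    have := card_le_mul_card_image_sdiff_add φ S s fun m₀ ↦ hfiber _ m₀ (by simp)
    rw [show S.card = (N + 1) ^ n by simp [S]] at this
    exact_mod_cast this
  have hpow : (N : ℝ) + 1 ≤ (N + 1) ^ n := le_self_pow₀ (by linarith [N.cast_nonneg (α := ℝ)]) hn
  have hterm : ∀ p ∈ I, ε / (N + 1) ^ n ≤ g p := by
    intro p hp
    obtain ⟨m, hm, rfl⟩ := Finset.mem_image.1 (Finset.mem_sdiff.1 hp).1
    exact hle N m fun i ↦ Nat.lt_succ_iff.1 (Finset.mem_range.1 (Fintype.mem_piFinset.1 hm i))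
  have hsum : ε / (2 * B) ≤ ∑ p ∈ I, g p := by
    calc ε / (2 * B) = (N + 1) ^ n / (2 * B) * (ε / (N + 1) ^ n) := by field_simp
      _ ≤ I.card * (ε / (N + 1) ^ n) := by
          gcongr
          rw [div_le_iff₀ (by positivity)]
          linarith
      _ ≤ ∑ p ∈ I, g p := by simpa using Finset.card_nsmul_le_sum _ _ _ hterm
  exact (hsum.trans (le_abs_self _)).not_gt (hs I Finset.sdiff_disjoint)

end Divergence

section LinearIndependent

variable {G ι : Type*} [AddCommGroup G] {P : ι → G}

lemma zsmul_ne_zero_of_linearIndependent (hP : LinearIndependent ℤ P) (i : ι) {n : ℤ}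
    (hn : n ≠ 0) : n • P i ≠ 0 := fun h ↦
  hn (linearIndependent_iff'.1 hP {i} (fun _ ↦ n) (by simpa using h) i (by simp))

lemma injective_sum_natCast_zsmul_two_zsmul [Fintype ι] (hP : LinearIndependent ℤ P) :
    Function.Injective fun m : ι → ℕ ↦ ∑ i, (m i : ℤ) • ((2 : ℤ) • P i) := by
  intro m m' heq
  have hsum : ∑ i, (((m i : ℤ) - m' i) * 2) • P i = 0 := by
    simp only [mul_smul, sub_smul, Finset.sum_sub_distrib]
    exact sub_eq_zero.2 heq
  ext i
  have := Fintype.linearIndependent_iff.1 hP _ hsum i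
  lia

end LinearIndependent

section SummableImpliesRankBound

lemma exists_largestRoot_and_Ioo (hf : cubicDisc a b c ≠ 0) (hD : D ≠ 0) {X : Set ℝ}
    (hX : Broad a b c X) : ∃ e s t κ x₁ x₂,
      LargestRoot ((a : ℝ) * D) ((b : ℝ) * D ^ 2) ((c : ℝ) * D ^ 3) e s t κ ∧ e < x₁ ∧ x₁ < x₂ ∧
        ∀ x ∈ Set.Ioo x₁ x₂, x / D ∈ X := by
  have hD' : (D : ℝ) ≠ 0 := mod_cast hD
  obtain ⟨e, s, t, κ, h⟩ := exists_largestRoot (α := (a : ℝ) * D) (β := (b : ℝ) * D ^ 2)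
      (γ := (c : ℝ) * D ^ 3) <| by
    have hdisc : (D : ℝ) ^ 6 * cubicDisc a b c ≠ 0 := mul_ne_zero (pow_ne_zero _ hD') (mod_cast hf)
    convert hdisc using 1
    rw [cubicDisc]
    push_cast
    ring
  obtain ⟨hopen, ⟨xr, hxr, hgt⟩, ⟨xl, hxl, hlt⟩⟩ := hX
  have hroot : (e / D) ^ 3 + a * (e / D) ^ 2 + b * (e / D) + c = 0 := by
    have he : cubic (a * D) (b * D ^ 2) (c * D ^ 3) e = 0 := by rw [h.cubic_eq, sub_self, zero_mul]
    rw [cubic] at he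
    field_simp
    linear_combination he
  obtain ⟨x₀, hex₀, hx₀⟩ : ∃ x₀ : ℝ, e < x₀ ∧ x₀ / D ∈ X := by
    rcases lt_or_gt_of_ne hD' with hneg | hpos
    · exact ⟨xl * D, (lt_div_iff_of_neg hneg).1 (hlt _ hroot), by rwa [mul_div_cancel_right₀ _ hD']⟩
    · exact ⟨xr * D, (div_lt_iff₀ hpos).1 (hgt _ hroot), by rwa [mul_div_cancel_right₀ _ hD']⟩
  have hpreimage : IsOpen {x : ℝ | x / D ∈ X} := hopen.preimage (by fun_prop)
  obtain ⟨l, u, hlu, hsub⟩ := mem_nhds_iff_exists_Ioo_subset.1 (hpreimage.mem_nhds hx₀)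
  exact ⟨e, s, t, κ, x₀, u, h, hex₀, hlu.2, fun x hx ↦ hsub ⟨hlu.1.trans hx.1, hx.2⟩⟩

lemma exists_finset_translate_mem (hf : cubicDisc a b c ≠ 0) (hD : D ≠ 0) {X : Set ℝ}
    (hX : Broad a b c X) {Q : (twist a b c D).Point} (hQ : ∀ n : ℤ, n ≠ 0 → n • Q ≠ 0) :
    ∃ F : Finset (twist a b c D).Point, ∀ R : (twist a b c D).Point, ∃ T ∈ F,
      (xCoord ((2 : ℤ) • R + T) : ℝ) / D ∈ X ∧ yCoord ((2 : ℤ) • R + T) ≠ 0 := by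
  obtain ⟨e, s, t, κ, x₁, x₂, h, hx₁, hx₁₂, hsub⟩ := exists_largestRoot_and_Ioo hf hD hX
  set A : AddSubgroup (twist a b c D).Point := (zsmulAddGroupHom (2 : ℤ)).range
  have hA : ∀ R ∈ A, R ≠ 0 → e ≤ (xCoord R : ℝ) := by
    rintro _ ⟨R, rfl⟩ hR
    rw [zsmulAddGroupHom_apply, two_zsmul] at hR ⊢
    exact h.le_xCoord_add_self R hR
  have hQ2 (n : ℤ) (hn : n ≠ 0) : n • ((2 : ℤ) • Q) ≠ 0 := by
    rw [smul_smul]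
    exact hQ _ (mul_ne_zero hn two_ne_zero)
  obtain ⟨F, hF⟩ := chordLaw_twist.exists_finset_x_add_mem_Ioo h hA ⟨Q, rfl⟩ hQ2 hx₁ hx₁₂
  refine ⟨F, fun R ↦ ?_⟩
  obtain ⟨T, hT, hne, hmem⟩ := hF _ ⟨R, rfl⟩
  rw [zsmulAddGroupHom_apply] at hne hmem
  refine ⟨T, hT, hsub _ hmem, fun hy ↦ ?_⟩
  have hsq := chordLaw_twist.sq_eq _ hne
  have hle := h.mul_sub_le_cubic (hx₁.trans hmem.1).le
  rw [← hsq, hy, Rat.cast_zero, zero_pow two_ne_zero] at hle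
  exact hle.not_gt (mul_pos h.κ_pos (sub_pos.2 (hx₁.trans hmem.1)))

lemma exists_naiveHeight_sum_add_le (hf : cubicDisc a b c ≠ 0) (hD : D ≠ 0) {n : ℕ}
    (P : Fin n → (twist a b c D).Point) (F : Finset (twist a b c D).Point) :
    ∃ K : ℝ, 1 ≤ K ∧ ∀ (N : ℕ) (m : Fin n → ℕ), (∀ i, m i ≤ N) → ∀ T ∈ F,
      max 1 (naiveHeight (∑ i, (m i : ℤ) • P i + T)) ≤ K * (N + 1) ^ 2 := by
  obtain ⟨C, hC, hbound⟩ := exists_canonicalHeight_bound hf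
  have hpar := parallelogramLaw_canonicalHeight hf hD
  have hnn := canonicalHeight_nonneg hf hD
  obtain ⟨M, hM⟩ := (F.finite_toSet.image canonicalHeight).bddAbove
  set L := 2 ^ n * ∑ i, canonicalHeight (P i) with hL
  have hL0 : 0 ≤ L := mul_nonneg (by positivity) (Finset.sum_nonneg fun i _ ↦ hnn _)
  have hK : 1 ≤ 2 * L + 2 * |M| + C + 1 := by linarith [abs_nonneg M]
  refine ⟨_, hK, fun N m hm T hT ↦ ?_⟩
  have hN : (1 : ℝ) ≤ (N + 1) ^ 2 := one_le_pow₀ (by linarith [N.cast_nonneg (α := ℝ)])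
  refine max_le (one_le_mul_of_one_le_of_one_le hK hN) ?_
  have hsum : canonicalHeight (∑ i, (m i : ℤ) • P i) ≤ L * (N + 1) ^ 2 := by
    refine (hpar.map_sum_zsmul_le hnn _ _).trans ?_
    rw [hL, mul_assoc, Finset.sum_mul]
    refine mul_le_mul_of_nonneg_left (Finset.sum_le_sum fun i _ ↦ ?_) (by positivity)
    rw [mul_comm]
    have hmi : ((m i : ℤ) : ℝ) ≤ N + 1 := by exact_mod_cast (hm i).trans N.le_succ
    have := hnn (P i)
    gcongr
  have hTM : canonicalHeight T ≤ |M| := (hM ⟨T, hT, rfl⟩).trans (le_abs_self M)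
  calc naiveHeight (∑ i, (m i : ℤ) • P i + T)
      ≤ canonicalHeight (∑ i, (m i : ℤ) • P i + T) + C := by
        linarith [(abs_le.1 (hbound D hD (∑ i, (m i : ℤ) • P i + T))).1]
    _ ≤ 2 * (L * (N + 1) ^ 2) + 2 * |M| + C := by
        linarith [hpar.map_add_le hnn (∑ i, (m i : ℤ) • P i) T]
    _ ≤ 2 * (L * (N + 1) ^ 2) + (2 * |M| + C) * (N + 1) ^ 2 := by
        rw [add_assoc]
        gcongr
        exact le_mul_of_one_le_right (by positivity) hN
    _ ≤ (2 * L + 2 * |M| + C + 1) * (N + 1) ^ 2 := by linarith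

lemma rpow_neg_mul_sq_ge {K M j : ℝ} {n : ℕ} (hK : 0 < K) (hM : 1 ≤ M) (hjn : 2 * j ≤ n) :
    K ^ (-j) / M ^ n ≤ (K * M ^ 2) ^ (-j) := by
  have hM0 : 0 < M := by linarith
  have hexp : M ^ (-(n : ℝ)) ≤ M ^ (-(2 * j)) :=
    Real.rpow_le_rpow_of_exponent_le hM (by linarith)
  calc K ^ (-j) / M ^ n = K ^ (-j) * M ^ (-(n : ℝ)) := by
        rw [Real.rpow_neg hM0.le, Real.rpow_natCast, div_eq_mul_inv]
    _ ≤ K ^ (-j) * M ^ (-(2 * j)) := by gcongr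
    _ = (K * M ^ 2) ^ (-j) := by
        rw [Real.mul_rpow hK.le (by positivity), ← Real.rpow_natCast M 2, ← Real.rpow_mul hM0.le]
        congr 2
        push_cast
        ring

theorem rankBound_of_SConv (hf : cubicDisc a b c ≠ 0) {sq : ℤ → ℤ} (hsq : IsSqfreePart sq)
    {j k : ℝ} (hj : 0 < j) (hk : 0 ≤ k) {X : Set ℝ} (hX : Broad a b c X)
    (hS : SConv a b c sq j k X) : RankBound a b c j := by
  rintro D hD ⟨P, hP⟩
  have hjn : 2 * j ≤ ⌈2 * j⌉₊ := Nat.le_ceil _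
  have hn : 0 < ⌈2 * j⌉₊ := Nat.ceil_pos.2 (by linarith)
  generalize ⌈2 * j⌉₊ = n at hjn hn P
  obtain ⟨F, hF⟩ := exists_finset_translate_mem hf hD hX
    fun m hm ↦ zsmul_ne_zero_of_linearIndependent hP ⟨0, hn⟩ hm
  obtain ⟨K, hK, hheight⟩ := exists_naiveHeight_sum_add_le hf hD (fun i ↦ (2 : ℤ) • P i) F
  set Q : (Fin n → ℕ) → (twist a b c D).Point := fun m ↦ ∑ i, (m i : ℤ) • ((2 : ℤ) • P i) with hQ
  have hQ2 (m : Fin n → ℕ) : Q m = (2 : ℤ) • ∑ i, (m i : ℤ) • P i := by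
    simp only [hQ, Finset.smul_sum, smul_comm (2 : ℤ)]
  choose T hTF hTX hTy using fun m ↦ hQ2 m ▸ hF (∑ i, (m i : ℤ) • P i)
  have : (0 : ℝ) < |(D : ℝ)| := abs_pos.2 (mod_cast hD)
  refine not_summable_of_le_on_box (n := n) (B := 2 * F.card) (ε := |(D : ℝ)| ^ (-k) * K ^ (-j))
    (φ := fun m ↦ ⟨_, indexPair_mem_SIdx hD (hTX m) (hTy m)⟩) hn.ne' (by positivity) ?_ ?_ hS
  · intro S m₀ hfiber
    refine card_le_two_mul_of_add_eq_or_eq_neg (R := Q m₀ + T m₀)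
      (injective_sum_natCast_zsmul_two_zsmul hP) fun m hm ↦ ⟨T m, hTF m, ?_⟩
    exact eq_or_eq_neg_of_xCoord_eq (ne_zero_of_yCoord_ne_zero (hTy m))
      (ne_zero_of_yCoord_ne_zero (hTy m₀))
      (xCoord_eq_of_indexPair_eq hD (congrArg Subtype.val (hfiber m hm)))
  · intro N m hm
    refine le_trans ?_ (le_STerm_indexPair hD hsq hk (hTy m))
    rw [mul_div_assoc]
    gcongr ?_ * ?_
    calc K ^ (-j) / (N + 1) ^ n ≤ (K * (N + 1) ^ 2) ^ (-j) :=
          rpow_neg_mul_sq_ge (by positivity) (by linarith [N.cast_nonneg (α := ℝ)]) hjn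
      _ ≤ _ := Real.rpow_le_rpow_of_nonpos (by positivity) (hheight N m hm _ (hTF m)) (by linarith)

end SummableImpliesRankBound

/-! ### Dependent points on a short model -/

section ShortModel

/-- The linear coefficient of the short model `z³ + A z + B = 729 f(x)`, where `z = 9x + 3a`. -/
def shortA (a b : ℤ) : ℤ := 81 * b - 27 * a ^ 2

/-- The constant coefficient of the short model `z³ + A z + B = 729 f(x)`, where `z = 9x + 3a`. -/
def shortB (a b c : ℤ) : ℤ := 729 * c - 243 * a * b + 54 * a ^ 3

lemma four_mul_shortA_pow_add (a b c : ℤ) :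
    4 * shortA a b ^ 3 + 27 * shortB a b c ^ 2 = -531441 * cubicDisc a b c := by
  rw [shortA, shortB, cubicDisc]
  ring

lemma short_cubic_eq (a b c : ℤ) (z : ℚ) : z ^ 3 + shortA a b * z + shortB a b c =
    729 * (((z - 3 * a) / 9) ^ 3 + a * ((z - 3 * a) / 9) ^ 2 + b * ((z - 3 * a) / 9) + c) := by
  rw [shortA, shortB]
  push_cast
  ring

lemma exists_abs_logHeight₁_sub_le (a : ℤ) :
    ∃ C : ℝ, ∀ z : ℚ, |logHeight₁ ((z - 3 * a) / 9) - logHeight₁ z| ≤ C := by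
  refine ⟨totalWeight ℚ * Real.log 2 + logHeight₁ (3 * a : ℚ) + logHeight₁ (9 : ℚ), fun z ↦ ?_⟩
  have hdiv := logHeight₁_mul_le (z - 3 * a) (9 : ℚ)⁻¹
  rw [logHeight₁_inv, ← div_eq_mul_inv] at hdiv
  have hsub := logHeight₁_sub_le z (3 * a)
  have hadd := logHeight₁_add_le ((z - 3 * a) / 9 * 9) (3 * a : ℚ)
  rw [div_mul_cancel₀ _ (by norm_num), sub_add_cancel] at hadd
  have hmul := logHeight₁_mul_le ((z - 3 * a) / 9) (9 : ℚ)
  rw [div_mul_cancel₀ _ (by norm_num)] at hmul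
  exact abs_le.2 ⟨by linarith, by linarith⟩

end ShortModel

section SumBiquadratic

variable {R : Type*} [CommRing R]

/-- The homogeneous form of `z³ + A z + B`, made of even degree so that its class modulo squares
depends only on `z = x / y`. -/
def quarticForm (A B : ℤ) (x y : R) : R := y * (x ^ 3 + A * x * y ^ 2 + B * y ^ 3)

/-- The quadratic polynomial in `r` whose roots are the `x`-coordinates of `P + Q` and `P - Q`,
where `P` and `Q` are points of the same twist of `y² = x³ + A x + B` with `x`-coordinates
`x₁ / y₁` and `x₂ / y₂`; it is homogeneous in `(x₁, y₁)` and in `(x₂, y₂)`. -/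
def sumBiquadratic (A B : ℤ) (x₁ y₁ x₂ y₂ r : R) : R :=
  r ^ 2 * (x₁ * y₂ - x₂ * y₁) ^ 2 -
    2 * r * ((x₁ * y₂ + x₂ * y₁) * (A * (y₁ * y₂) + x₁ * x₂) + 2 * B * (y₁ * y₂) ^ 2) +
    ((x₁ * x₂ - A * (y₁ * y₂)) ^ 2 - 4 * B * (x₁ * y₂ + x₂ * y₁) * (y₁ * y₂))

lemma sumBiquadratic_eq_zero {A B : ℤ} {z w r y₁ y₂ d : ℚ} (hzw : z ≠ w)
    (hz : z ^ 3 + A * z + B = d * y₁ ^ 2) (hw : w ^ 3 + A * w + B = d * y₂ ^ 2)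
    (hr : r * (z - w) ^ 2 = d * (y₁ - y₂) ^ 2 - (z + w) * (z - w) ^ 2) :
    sumBiquadratic A B z 1 w 1 r = 0 := by
  have hmid : r * (z - w) ^ 2 - ((z + w) * (A + z * w) + 2 * B) = -(2 * d * y₁ * y₂) := by
    linear_combination hr - hz - hw
  have hsq : (z - w) ^ 2 * sumBiquadratic A B z 1 w 1 r =
      (r * (z - w) ^ 2 - ((z + w) * (A + z * w) + 2 * B)) ^ 2 -
        4 * (z ^ 3 + A * z + B) * (w ^ 3 + A * w + B) := by
    rw [sumBiquadratic]
    ring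
  refine (mul_eq_zero.1 (hsq.trans ?_)).resolve_left (pow_ne_zero 2 (sub_ne_zero.2 hzw))
  rw [hmid, hz, hw]
  ring

end SumBiquadratic

section SumHeightLaw

/-- The trace on heights of the dependence of any two points on a common twist: if `P` and `Q` have
`x`-coordinates `z` and `w`, then one of `P ± Q` has canonical height
`(√ĥ(P) - √ĥ(Q))² ≤ (ĥ(P) - ĥ(Q))² / ĥ(P)`, and canonical heights below `g` vanish. -/
def SumHeightLaw (A B : ℤ) : Prop :=
  ∃ C g : ℝ, 0 < g ∧ ∀ z w s : ℚ, z ≠ w → w ^ 3 + A * w + B ≠ 0 →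
    z ^ 3 + A * z + B = s ^ 2 * (w ^ 3 + A * w + B) → C < logHeight₁ z →
    ∃ r : ℚ, sumBiquadratic A B z 1 w 1 r = 0 ∧
      (logHeight₁ r - C) * (logHeight₁ z - C) ≤ (|logHeight₁ z - logHeight₁ w| + 2 * C) ^ 2 ∧
      ((|logHeight₁ z - logHeight₁ w| + 2 * C) ^ 2 < g * (logHeight₁ z - C) → logHeight₁ r ≤ C)

lemma exists_zsmul_add_zsmul_eq_zero_of_rankBound {j : ℝ} (hj : j ≤ 1) (hR : RankBound a b c j)
    (hD : D ≠ 0) (P Q : (twist a b c D).Point) :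
    ∃ m n : ℤ, (m ≠ 0 ∨ n ≠ 0) ∧ m • P + n • Q = 0 := by
  have hceil : ⌈2 * j⌉₊ ≤ 2 := Nat.ceil_le.2 (by push_cast; linarith)
  by_contra! hindep
  have hPQ : LinearIndependent ℤ ![P, Q] := by
    rw [LinearIndependent.pair_iff]
    intro m n hmn
    by_contra hne
    exact hindep m n (not_and_or.1 hne) hmn
  exact hR D hD ⟨fun i ↦ ![P, Q] (Fin.castLE hceil i), hPQ.comp _ (Fin.castLE_injective hceil)⟩

lemma exists_squarefree_mul_sq {q : ℚ} (hq : q ≠ 0) :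
    ∃ D : ℤ, Squarefree D ∧ ∃ e : ℚ, q = D * e ^ 2 := by
  obtain ⟨d, e, hed, hd⟩ := Nat.sq_mul_squarefree (q.num * q.den).natAbs
  have hden : (q.den : ℚ) ≠ 0 := mod_cast q.den_nz
  have hsign : q.num.sign * (d * e ^ 2) = q.num * q.den := by
    rw [mul_comm (d : ℤ), show (e : ℤ) ^ 2 * d = (q.num * q.den).natAbs by exact_mod_cast hed,
      Int.natAbs_mul, Nat.cast_mul, ← mul_assoc, Int.sign_mul_natAbs, Int.natAbs_natCast]
  refine ⟨q.num.sign * d, ?_, e / q.den, ?_⟩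
  · rw [← Int.squarefree_natAbs, Int.natAbs_mul, Int.natAbs_sign_of_ne_zero (Rat.num_ne_zero.2 hq),
      one_mul, Int.natAbs_natCast]
    exact hd
  · have hsignQ : (q.num.sign : ℚ) * (d * e ^ 2) = q.num * q.den := mod_cast hsign
    rw [div_pow, ← mul_div_assoc, eq_div_iff (pow_ne_zero 2 hden)]
    push_cast
    rw [mul_assoc, hsignQ, sq, ← mul_assoc, Rat.mul_den_eq_num]

lemma twist_equation_of_short_equation {z e : ℚ}
    (h : z ^ 3 + shortA a b * z + shortB a b c = D * e ^ 2) :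
    (D ^ 2 * e / 27) ^ 2 = (D * ((z - 3 * a) / 9)) ^ 3 + a * D * (D * ((z - 3 * a) / 9)) ^ 2 +
      b * D ^ 2 * (D * ((z - 3 * a) / 9)) + c * D ^ 3 := by
  rw [short_cubic_eq] at h
  linear_combination (-(D : ℚ) ^ 3 / 729) * h

lemma exists_some_add_some_eq (hD : D ≠ 0) {z w e₁ e₂ : ℚ} (hzw : z ≠ w)
    (hz : z ^ 3 + shortA a b * z + shortB a b c = D * e₁ ^ 2)
    (hw : w ^ 3 + shortA a b * w + shortB a b c = D * e₂ ^ 2)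
    (h₁ : (twist a b c D).Nonsingular (D * ((z - 3 * a) / 9)) (D ^ 2 * e₁ / 27))
    (h₂ : (twist a b c D).Nonsingular (D * ((w - 3 * a) / 9)) (D ^ 2 * e₂ / 27)) :
    ∃ r, sumBiquadratic (shortA a b) (shortB a b c) z 1 w 1 r = 0 ∧
      ∃ y h, Point.some _ _ h₁ + Point.some _ _ h₂ = Point.some (D * ((r - 3 * a) / 9)) y h := by
  have hDQ : (D : ℚ) ≠ 0 := mod_cast hD
  have hsub : z - w ≠ 0 := sub_ne_zero.2 hzw
  have hx : (D : ℚ) * ((z - 3 * a) / 9) ≠ D * ((w - 3 * a) / 9) := fun h ↦ hzw <| by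
    linarith [mul_left_cancel₀ hDQ h]
  obtain ⟨y, h, hadd⟩ := some_add_some_eq h₁ h₂ hx
  refine ⟨D * (e₁ - e₂) ^ 2 / (z - w) ^ 2 - (z + w), ?_, ?_⟩
  · refine sumBiquadratic_eq_zero hzw hz hw ?_
    field_simp
  · rw [hadd]
    have hX : ((D ^ 2 * e₁ / 27 - D ^ 2 * e₂ / 27) /
        (D * ((z - 3 * a) / 9) - D * ((w - 3 * a) / 9))) ^ 2 - a * D - D * ((z - 3 * a) / 9) -
        D * ((w - 3 * a) / 9) =
          D * ((D * (e₁ - e₂) ^ 2 / (z - w) ^ 2 - (z + w) - 3 * a) / 9) := by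
      rw [show (D : ℚ) * ((z - 3 * a) / 9) - D * ((w - 3 * a) / 9) = D * (z - w) / 9 by ring]
      field_simp
      ring
    exact ⟨y, hX ▸ h, by simp only [hX]⟩

lemma exists_some_sub_some_eq (hD : D ≠ 0) {z w e₁ e₂ : ℚ} (hzw : z ≠ w)
    (hz : z ^ 3 + shortA a b * z + shortB a b c = D * e₁ ^ 2)
    (hw : w ^ 3 + shortA a b * w + shortB a b c = D * e₂ ^ 2)
    (h₁ : (twist a b c D).Nonsingular (D * ((z - 3 * a) / 9)) (D ^ 2 * e₁ / 27))
    (h₂ : (twist a b c D).Nonsingular (D * ((w - 3 * a) / 9)) (D ^ 2 * e₂ / 27)) :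
    ∃ r, sumBiquadratic (shortA a b) (shortB a b c) z 1 w 1 r = 0 ∧
      ∃ y h, Point.some _ _ h₁ - Point.some _ _ h₂ = Point.some (D * ((r - 3 * a) / 9)) y h := by
  obtain ⟨h₂', hneg⟩ := neg_some_eq h₂
  have hY : -((D : ℚ) ^ 2 * e₂ / 27) = D ^ 2 * -e₂ / 27 := by ring
  simp only [sub_eq_add_neg (Point.some _ _ h₁), hneg, hY]
  exact exists_some_add_some_eq hD hzw hz (by rw [hw, neg_sq]) h₁ (hY ▸ h₂')

lemma exists_abs_canonicalHeight_some_sub_le (hf : cubicDisc a b c ≠ 0) :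
    ∃ C : ℝ, ∀ D : ℤ, D ≠ 0 → ∀ (z y : ℚ) (h : (twist a b c D).Nonsingular _ y),
      |canonicalHeight (Point.some (D * ((z - 3 * a) / 9)) y h) - logHeight₁ z| ≤ C := by
  obtain ⟨C₁, -, hC₁⟩ := exists_canonicalHeight_bound hf
  obtain ⟨C₂, hC₂⟩ := exists_abs_logHeight₁_sub_le a
  refine ⟨C₁ + C₂, fun D hD z y h ↦ (abs_sub_le _ _ _).trans (add_le_add ?_ (hC₂ z))⟩
  have hnaive := hC₁ D hD (Point.some _ y h)
  rwa [naiveHeight_some, mul_div_cancel_left₀ _ (mod_cast hD)] at hnaive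

lemma sq_sqrt_sub_sqrt_mul_le {q₁ q₂ : ℝ} (h₁ : 0 ≤ q₁) (h₂ : 0 ≤ q₂) :
    (√q₁ - √q₂) ^ 2 * q₁ ≤ (q₁ - q₂) ^ 2 := by
  have hdiff : q₁ - q₂ = (√q₁ - √q₂) * (√q₁ + √q₂) := by
    linear_combination Real.sq_sqrt h₂ - Real.sq_sqrt h₁
  calc (√q₁ - √q₂) ^ 2 * q₁ = (√q₁ - √q₂) ^ 2 * √q₁ ^ 2 := by rw [Real.sq_sqrt h₁]
    _ ≤ (√q₁ - √q₂) ^ 2 * (√q₁ + √q₂) ^ 2 := by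
      gcongr
      exact le_add_of_nonneg_right (Real.sqrt_nonneg _)
    _ = (q₁ - q₂) ^ 2 := by rw [hdiff, mul_pow]

lemma height_bounds_of_eq_sq_sqrt_sub {C g q₁ q₂ q₃ H₁ H₂ H₃ : ℝ} (h₁ : 0 ≤ q₁) (h₂ : 0 ≤ q₂)
    (hH₁ : |q₁ - H₁| ≤ C) (hH₂ : |q₂ - H₂| ≤ C) (hH₃ : |q₃ - H₃| ≤ C) (hC : C < H₁)
    (hq₃ : q₃ = (√q₁ - √q₂) ^ 2) (hgap : q₃ < g → q₃ = 0) :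
    (H₃ - C) * (H₁ - C) ≤ (|H₁ - H₂| + 2 * C) ^ 2 ∧
      ((|H₁ - H₂| + 2 * C) ^ 2 < g * (H₁ - C) → H₃ ≤ C) := by
  have hC₁ : H₁ - C ≤ q₁ := by linarith [(abs_le.1 hH₁).1]
  have hC₃ : H₃ - C ≤ q₃ := by linarith [(abs_le.1 hH₃).1]
  have hnonneg : 0 ≤ q₃ := hq₃ ▸ sq_nonneg _
  have hdiff : |q₁ - q₂| ≤ |H₁ - H₂| + 2 * C := by
    calc |q₁ - q₂| = |(q₁ - H₁) + (H₁ - H₂) - (q₂ - H₂)| := by ring_nf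
      _ ≤ |q₁ - H₁| + |H₁ - H₂| + |q₂ - H₂| :=
        (abs_sub _ _).trans (add_le_add_left (abs_add_le _ _) _)
      _ ≤ |H₁ - H₂| + 2 * C := by linarith
  have hmain : q₃ * (H₁ - C) ≤ (|H₁ - H₂| + 2 * C) ^ 2 := by
    calc q₃ * (H₁ - C) ≤ q₃ * q₁ := by gcongr
      _ ≤ |q₁ - q₂| ^ 2 := by rw [hq₃, sq_abs]; exact sq_sqrt_sub_sqrt_mul_le h₁ h₂
      _ ≤ (|H₁ - H₂| + 2 * C) ^ 2 := by gcongr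
  refine ⟨hmain.trans' (mul_le_mul_of_nonneg_right hC₃ (by linarith)), fun hlt ↦ ?_⟩
  have := hgap (lt_of_mul_lt_mul_right (hmain.trans_lt hlt) (by linarith))
  linarith

theorem sumHeightLaw_of_rankBound (hf : cubicDisc a b c ≠ 0) {j : ℝ} (hj : j ≤ 1)
    (hR : RankBound a b c j) : SumHeightLaw (shortA a b) (shortB a b c) := by
  obtain ⟨C, hC⟩ := exists_abs_canonicalHeight_some_sub_le hf
  obtain ⟨g, hg, hgap⟩ := exists_uniform_canonicalHeight_gap hf
  refine ⟨C, g * Real.log 2, mul_pos hg (Real.log_pos one_lt_two), fun z w s hzw hw0 hs hCz ↦ ?_⟩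
  obtain ⟨D, hD, e, hw⟩ := exists_squarefree_mul_sq hw0
  have hz : z ^ 3 + shortA a b * z + shortB a b c = D * (s * e) ^ 2 := by rw [hs, hw]; ring
  have hP := twist_nonsingular hf hD.ne_zero (twist_equation_of_short_equation hz)
  have hQ := twist_nonsingular hf hD.ne_zero (twist_equation_of_short_equation hw)
  have hgap₂ (R : (twist a b c D).Point) (hlt : canonicalHeight R < g * Real.log 2) :
      canonicalHeight R = 0 := by
    refine hgap D hD R (hlt.trans_le ?_)
    rw [logSize]
    gcongr
    exact le_add_of_nonneg_left (by positivity)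
  have hlaw {R : (twist a b c D).Point} (hR : canonicalHeight R =
        (√(canonicalHeight (Point.some _ _ hP)) - √(canonicalHeight (Point.some _ _ hQ))) ^ 2)
      {r y : ℚ} {h : (twist a b c D).Nonsingular _ y}
      (hr : R = Point.some (D * ((r - 3 * a) / 9)) y h) :=
    height_bounds_of_eq_sq_sqrt_sub (canonicalHeight_nonneg hf hD.ne_zero _)
      (canonicalHeight_nonneg hf hD.ne_zero _) (hC D hD.ne_zero _ _ hP) (hC D hD.ne_zero _ _ hQ)
      (hr ▸ hC D hD.ne_zero r y h) hCz hR (hgap₂ R)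
  obtain ⟨m, n, hne, hmn⟩ := exists_zsmul_add_zsmul_eq_zero_of_rankBound hj hR hD.ne_zero
    (Point.some _ _ hP) (Point.some _ _ hQ)
  rcases (parallelogramLaw_canonicalHeight hf hD.ne_zero).map_add_or_sub_of_dependent
    (canonicalHeight_nonneg hf hD.ne_zero) hne hmn with hsum | hdiff
  · obtain ⟨r, hr, y, h, hadd⟩ := exists_some_add_some_eq hD.ne_zero hzw hz hw hP hQ
    exact ⟨r, hr, hlaw hsum hadd⟩
  · obtain ⟨r, hr, y, h, hsub⟩ := exists_some_sub_some_eq hD.ne_zero hzw hz hw hP hQ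
    exact ⟨r, hr, hlaw hdiff hsub⟩

end SumHeightLaw

/-! ### Heights of values of rational functions -/

section HeightsOfRationalFunctions

open Polynomial

lemma exists_int_mul_eval_eq (s : Finset ℚ[X]) :
    ∃ d : ℤ, d ≠ 0 ∧ ∀ p ∈ s, ∀ n : ℤ, ∃ m : ℤ, d * p.eval (n : ℚ) = m := by
  obtain ⟨d, hd⟩ := IsLocalization.exist_integer_multiples_of_finset (nonZeroDivisors ℤ)
    (s.biUnion Polynomial.coeffs)
  refine ⟨d, nonZeroDivisors.coe_ne_zero d, fun p hp n ↦ ?_⟩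
  have hcoeff (i : ℕ) : ∃ m : ℤ, (d : ℤ) * p.coeff i = m := by
    by_cases hi : p.coeff i = 0
    · exact ⟨0, by simp [hi]⟩
    · obtain ⟨m, hm⟩ := hd _ (Finset.mem_biUnion.2 ⟨p, hp, coeff_mem_coeffs hi⟩)
      exact ⟨m, by simpa using hm.symm⟩
  choose m hm using hcoeff
  refine ⟨∑ i ∈ Finset.range (p.natDegree + 1), m i * n ^ i, ?_⟩
  rw [eval_eq_sum_range, Finset.mul_sum]
  push_cast
  simp only [← mul_assoc, hm]

lemma abs_logHeight₁_div_sub_log_max_le {p q u v G : ℤ} (hq : q ≠ 0) (hG : G ≠ 0)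
    (h : u * p + v * q = G) :
    |logHeight₁ ((p : ℚ) / q) - Real.log (max |(p : ℝ)| |(q : ℝ)|)| ≤ Real.log |(G : ℝ)| := by
  have hgcd : 0 < Int.gcd p q := Int.gcd_pos_of_ne_zero_right _ hq
  obtain ⟨p', q', hcop, hp', hq'⟩ := Int.exists_gcd_one hgcd
  generalize Int.gcd p q = d at *
  have hdG : (d : ℝ) ≤ |(G : ℝ)| := by
    have hdvd : (d : ℤ) ∣ G := by
      rw [← h, hp', hq']
      exact dvd_add ((dvd_mul_left _ _).mul_left _) ((dvd_mul_left _ _).mul_left _)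
    exact_mod_cast Int.le_of_dvd (abs_pos.2 hG) ((dvd_abs _ _).2 hdvd)
  have hd : (1 : ℝ) ≤ d := mod_cast hgcd
  have hq'0 : q' ≠ 0 := by rintro rfl; simp_all
  have hmax : max |(p : ℝ)| |(q : ℝ)| = max |(p' : ℝ)| |(q' : ℝ)| * d := by
    rw [hp', hq', max_mul_of_nonneg _ _ (Nat.cast_nonneg d)]
    push_cast
    simp only [abs_mul, Nat.abs_cast]
  have hpos : 0 < max |(p' : ℝ)| |(q' : ℝ)| := lt_max_of_lt_right (abs_pos.2 (mod_cast hq'0))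
  have hfrac : (p : ℚ) / q = p' / q' := by
    rw [hp', hq']
    push_cast
    exact mul_div_mul_right _ _ (mod_cast hgcd.ne')
  rw [hfrac, logHeight₁_intCast_div hcop hq'0, hmax, Real.log_mul hpos.ne' (by positivity),
    sub_add_cancel_left, abs_neg, abs_of_nonneg (Real.log_nonneg hd)]
  exact Real.log_le_log (by positivity) hdG

lemma exists_abs_logHeight₁_eval_div_sub_log_max_le {p q : ℚ[X]} (hpq : IsCoprime p q) :
    ∃ C : ℝ, ∀ n : ℤ, q.eval (n : ℚ) ≠ 0 → |logHeight₁ (p.eval (n : ℚ) / q.eval (n : ℚ)) -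
      Real.log (max |p.eval (n : ℚ)| |q.eval (n : ℚ)| : ℚ)| ≤ C := by
  obtain ⟨u, v, huv⟩ := hpq
  obtain ⟨d, hd, hint⟩ := exists_int_mul_eval_eq {p, q, u, v}
  refine ⟨Real.log |((d ^ 2 : ℤ) : ℝ)| + abs (Real.log |(d : ℝ)|), fun n hqn ↦ ?_⟩
  obtain ⟨P, hP⟩ := hint p (by simp) n
  obtain ⟨Q, hQ⟩ := hint q (by simp) n
  obtain ⟨U, hU⟩ := hint u (by simp) n
  obtain ⟨V, hV⟩ := hint v (by simp) n
  have hdQ : (d : ℚ) ≠ 0 := mod_cast hd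
  have hQ0 : Q ≠ 0 := by
    rintro rfl
    exact mul_ne_zero hdQ hqn (by simpa using hQ)
  have hbezout : U * P + V * Q = d ^ 2 := by
    have heval := congrArg (eval (n : ℚ)) huv
    simp only [eval_add, eval_mul, eval_one] at heval
    have : (U * P + V * Q : ℚ) = d ^ 2 := by
      rw [← hP, ← hQ, ← hU, ← hV]
      linear_combination (d : ℚ) ^ 2 * heval
    exact_mod_cast this
  have hfrac : p.eval (n : ℚ) / q.eval (n : ℚ) = P / Q := by
    rw [← hP, ← hQ, mul_div_mul_left _ _ hdQ]
  have hmax : max |(P : ℝ)| |(Q : ℝ)| =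
      |(d : ℝ)| * (max |p.eval (n : ℚ)| |q.eval (n : ℚ)| : ℚ) := by
    have : max |(P : ℚ)| |(Q : ℚ)| = |(d : ℚ)| * max |p.eval (n : ℚ)| |q.eval (n : ℚ)| := by
      rw [mul_max_of_nonneg _ _ (abs_nonneg _), ← abs_mul, ← abs_mul, hP, hQ]
    exact_mod_cast this
  have hpos : 0 < max |p.eval (n : ℚ)| |q.eval (n : ℚ)| := lt_max_of_lt_right (abs_pos.2 hqn)
  have hbound := abs_logHeight₁_div_sub_log_max_le hQ0 (pow_ne_zero 2 hd) hbezout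
  rw [hmax, Real.log_mul (abs_ne_zero.2 (mod_cast hd)) (mod_cast hpos.ne'), ← hfrac,
    sub_add_eq_sub_sub_swap] at hbound
  rw [← sub_add_cancel (_ - _) (Real.log |(d : ℝ)|)]
  exact (abs_add_le _ _).trans (by gcongr)

lemma tendsto_eval_div_pow {p : ℚ[X]} {d : ℕ} (hd : p.natDegree ≤ d) :
    Tendsto (fun n : ℕ ↦ p.eval (n : ℚ) / n ^ d) atTop (𝓝 (p.coeff d)) := by
  suffices h : Tendsto (fun x : ℚ ↦ p.eval x / (X ^ d : ℚ[X]).eval x) atTop (𝓝 (p.coeff d)) by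
    simpa [Function.comp_def] using h.comp tendsto_natCast_atTop_atTop
  rcases (natDegree_le_iff_degree_le.1 hd).lt_or_eq with hlt | heq
  · rw [coeff_eq_zero_of_degree_lt hlt]
    exact div_tendsto_atTop_zero_of_degree_lt _ _ (by rwa [degree_X_pow])
  · have h := div_tendsto_atTop_leadingCoeff_div_of_degree_eq p (X ^ d) (by rwa [degree_X_pow])
    rwa [leadingCoeff_X_pow, div_one, leadingCoeff, natDegree_eq_of_degree_eq_some heq] at h

lemma eventually_eval_ne_zero {p : ℚ[X]} (hp : p ≠ 0) :
    ∀ᶠ n : ℕ in atTop, p.eval (n : ℚ) ≠ 0 :=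
  tendsto_natCast_atTop_atTop.eventually (p.eventually_atTop_not_isRoot hp)

lemma exists_abs_log_max_eval_sub_le (p : ℚ[X]) {q : ℚ[X]} (hq : q ≠ 0) :
    ∃ C : ℝ, ∀ᶠ n : ℕ in atTop, |Real.log (max |p.eval (n : ℚ)| |q.eval (n : ℚ)| : ℚ) -
      max p.natDegree q.natDegree * Real.log n| ≤ C := by
  obtain ⟨d, hd⟩ : ∃ d, d = max p.natDegree q.natDegree := ⟨_, rfl⟩
  have hlim : Tendsto (fun n : ℕ ↦ max |p.eval (n : ℚ) / n ^ d| |q.eval (n : ℚ) / n ^ d|) atTop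
      (𝓝 (max |p.coeff d| |q.coeff d|)) :=
    (tendsto_eval_div_pow (hd ▸ le_max_left _ _)).abs.max
      (tendsto_eval_div_pow (hd ▸ le_max_right _ _)).abs
  have hpos : 0 < max |p.coeff d| |q.coeff d| := by
    rcases le_or_gt p.natDegree q.natDegree with hle | hlt
    · rw [max_eq_right hle] at hd
      exact lt_max_of_lt_right (abs_pos.2 (hd ▸ leadingCoeff_ne_zero.2 hq))
    · rw [max_eq_left hlt.le] at hd
      exact lt_max_of_lt_left
        (abs_pos.2 (hd ▸ leadingCoeff_ne_zero.2 (ne_zero_of_natDegree_gt hlt)))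
  have hlog := ((Rat.continuous_coe_real.tendsto _).comp hlim).log (mod_cast hpos.ne')
  obtain ⟨C, hC⟩ := (hlog.abs.isBoundedUnder_le).eventually_le
  refine ⟨C, ?_⟩
  filter_upwards [hC, eventually_gt_atTop 0, eventually_eval_ne_zero hq] with n hn hn0 hqn
  have : (0 : ℚ) < max |p.eval (n : ℚ)| |q.eval (n : ℚ)| := lt_max_of_lt_right (abs_pos.2 hqn)
  have hscale : max |p.eval (n : ℚ) / n ^ d| |q.eval (n : ℚ) / n ^ d| =
      max |p.eval (n : ℚ)| |q.eval (n : ℚ)| / n ^ d := by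
    simp only [abs_div, abs_pow, Nat.abs_cast]
    exact max_div_div_right (by positivity) _ _
  rw [Function.comp_apply, hscale] at hn
  push_cast at hn
  rw [Real.log_div (mod_cast this.ne') (by positivity), Real.log_pow] at hn
  rw [← hd]
  exact_mod_cast hn

/-- The value at `n` of the rational function `p / q`, with junk value `0` at its poles. -/
noncomputable def evalDiv (p q : ℚ[X]) (n : ℕ) : ℚ := p.eval (n : ℚ) / q.eval (n : ℚ)

/-- The degree of the rational function `p / q` as a map `ℙ¹ → ℙ¹`, for coprime `p` and `q`. -/
def divDegree (p q : ℚ[X]) : ℕ := max p.natDegree q.natDegree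

theorem exists_abs_logHeight₁_evalDiv_sub_le {p q : ℚ[X]} (hpq : IsCoprime p q) (hq : q ≠ 0) :
    ∃ C : ℝ, ∀ᶠ n : ℕ in atTop,
      |logHeight₁ (evalDiv p q n) - divDegree p q * Real.log n| ≤ C := by
  obtain ⟨C₁, hC₁⟩ := exists_abs_logHeight₁_eval_div_sub_log_max_le hpq
  obtain ⟨C₂, hC₂⟩ := exists_abs_log_max_eval_sub_le p hq
  refine ⟨C₁ + C₂, ?_⟩
  filter_upwards [hC₂, eventually_eval_ne_zero hq] with n hn hqn
  exact (abs_sub_le _ _ _).trans (add_le_add (mod_cast hC₁ n (mod_cast hqn)) hn)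

lemma tendsto_logHeight₁_evalDiv_div_log {p q : ℚ[X]} (hpq : IsCoprime p q) (hq : q ≠ 0) :
    Tendsto (fun n : ℕ ↦ logHeight₁ (evalDiv p q n) / Real.log n) atTop (𝓝 (divDegree p q)) := by
  obtain ⟨C, hC⟩ := exists_abs_logHeight₁_evalDiv_sub_le hpq hq
  have hlog := Real.tendsto_log_atTop.comp (tendsto_natCast_atTop_atTop (R := ℝ))
  rw [tendsto_iff_norm_sub_tendsto_zero]
  refine squeeze_zero' (Eventually.of_forall fun _ ↦ norm_nonneg _) ?_
    (hlog.const_div_atTop C)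
  filter_upwards [hC, hlog.eventually_gt_atTop 0] with n hn hpos
  rw [Function.comp_apply] at hpos ⊢
  rw [Real.norm_eq_abs, div_sub' hpos.ne', abs_div, abs_of_pos hpos, mul_comm]
  gcongr

lemma tendsto_logHeight₁_evalDiv_atTop {p q : ℚ[X]} (hpq : IsCoprime p q) (hq : q ≠ 0)
    (hd : 0 < divDegree p q) :
    Tendsto (fun n : ℕ ↦ logHeight₁ (evalDiv p q n)) atTop atTop := by
  have hlog := Real.tendsto_log_atTop.comp (tendsto_natCast_atTop_atTop (R := ℝ))
  refine ((tendsto_logHeight₁_evalDiv_div_log hpq hq).pos_mul_atTop (mod_cast hd) hlog).congr' ?_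
  filter_upwards [hlog.eventually_gt_atTop 0] with n hpos
  exact div_mul_cancel₀ _ hpos.ne'

lemma tendsto_evalDiv_div {p q : ℚ[X]} (hq : q ≠ 0) (hdeg : p.natDegree = q.natDegree + 1) :
    Tendsto (fun n : ℕ ↦ evalDiv p q n / n) atTop (𝓝 (p.leadingCoeff / q.leadingCoeff)) := by
  rw [leadingCoeff, hdeg]
  refine ((tendsto_eval_div_pow hdeg.le).div (tendsto_eval_div_pow le_rfl)
    (leadingCoeff_ne_zero.2 hq)).congr' ?_
  filter_upwards [eventually_gt_atTop 0] with n hn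
  have : (n : ℚ) ≠ 0 := mod_cast hn.ne'
  simp only [Pi.div_apply, evalDiv, pow_succ]
  field_simp

lemma abs_le_exp_logHeight₁ (r : ℚ) : |(r : ℝ)| ≤ Real.exp (logHeight₁ r) := by
  have hden : (1 : ℝ) ≤ r.den := mod_cast r.den_pos
  rw [Rat.logHeight₁_eq_log_max, Real.exp_log (by positivity), Rat.cast_def, abs_div, Nat.abs_cast]
  push_cast
  exact (div_le_self (abs_nonneg _) hden).trans (by simp)

end HeightsOfRationalFunctions

/-! ### Pairs of points over a rational function field -/

section ParametricPair

open Polynomial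

lemma quarticForm_eq_pow_mul {A B : ℤ} {x y : ℚ} (hy : y ≠ 0) :
    quarticForm A B x y = y ^ 4 * ((x / y) ^ 3 + A * (x / y) + B) := by
  rw [quarticForm]
  field_simp

lemma sumBiquadratic_div_div {A B : ℤ} {x₁ y₁ x₂ y₂ r : ℚ} (h₁ : y₁ ≠ 0) (h₂ : y₂ ≠ 0) :
    sumBiquadratic A B x₁ y₁ x₂ y₂ r =
      (y₁ * y₂) ^ 2 * sumBiquadratic A B (x₁ / y₁) 1 (x₂ / y₂) 1 r := by
  rw [sumBiquadratic, sumBiquadratic]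
  field_simp

lemma tendsto_sumBiquadratic_div_pow (A B : ℤ) {z w r : ℕ → ℚ} {α β ρ : ℚ}
    (hz : Tendsto (fun n ↦ z n / n) atTop (𝓝 α)) (hw : Tendsto (fun n ↦ w n / n) atTop (𝓝 β))
    (hr : Tendsto (fun n ↦ r n / n) atTop (𝓝 ρ)) :
    Tendsto (fun n ↦ sumBiquadratic A B (z n) 1 (w n) 1 (r n) / n ^ 4) atTop
      (𝓝 (sumBiquadratic 0 0 α 1 β 1 ρ)) := by
  have hinv : Tendsto (fun n : ℕ ↦ (n : ℚ)⁻¹) atTop (𝓝 0) := tendsto_inv_atTop_nhds_zero_nat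
  have hA := (hinv.pow 2).const_mul (A : ℚ)
  have hB := (hinv.pow 3).const_mul (B : ℚ)
  have hlim := (((hr.pow 2).mul ((hz.sub hw).pow 2)).sub ((hr.const_mul 2).mul
    (((hz.add hw).mul (hA.add (hz.mul hw))).add (hB.const_mul 2)))).add
    ((((hz.mul hw).sub hA).pow 2).sub ((hB.const_mul 4).mul (hz.add hw)))
  have hval : sumBiquadratic 0 0 α 1 β 1 ρ = ρ ^ 2 * (α - β) ^ 2 - 2 * ρ * ((α + β) *
      (A * 0 ^ 2 + α * β) + 2 * (B * 0 ^ 3)) + ((α * β - A * 0 ^ 2) ^ 2 -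
        4 * (B * 0 ^ 3) * (α + β)) := by
    rw [sumBiquadratic]
    push_cast
    ring
  rw [hval]
  refine hlim.congr' ?_
  filter_upwards [eventually_gt_atTop 0] with n hn
  have : (n : ℚ) ≠ 0 := mod_cast hn.ne'
  rw [sumBiquadratic]
  field_simp

lemma eval_sumBiquadratic (A B : ℤ) (p₁ q₁ p₂ q₂ r : ℚ[X]) (x : ℚ) :
    eval x (sumBiquadratic A B p₁ q₁ p₂ q₂ r) =
      sumBiquadratic A B (eval x p₁) (eval x q₁) (eval x p₂) (eval x q₂) (eval x r) := by
  simp [sumBiquadratic]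

lemma le_mul_of_sub_mul_sub_le_sq {x y z C L ε : ℝ} (hL : 0 < L) (hy : C < y)
    (h : (x - C) * (y - C) ≤ (|y - z| + 2 * C) ^ 2)
    (hε : C / L + (|y / L - z / L| + 2 * (C / L)) ^ 2 / (y / L - C / L) ≤ ε) : x ≤ ε * L := by
  have hy' : 0 < y - C := sub_pos.2 hy
  have hx : x ≤ C + (|y - z| + 2 * C) ^ 2 / (y - C) := by
    rwa [← sub_le_iff_le_add', le_div_iff₀ hy']
  have hscale : C / L + (|y / L - z / L| + 2 * (C / L)) ^ 2 / (y / L - C / L) =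
      (C + (|y - z| + 2 * C) ^ 2 / (y - C)) / L := by
    rw [← sub_div, ← sub_div, abs_div, abs_of_pos hL]
    field_simp
  rw [hscale] at hε
  exact hx.trans ((div_le_iff₀ hL).1 hε)

/-- Two distinct rational functions `p₁ / q₁` and `p₂ / q₂`, in lowest terms, at which the values of
`z³ + A z + B` agree modulo squares: they are the `x`-coordinates of points on a common twist of
`y² = z³ + A z + B` over `ℚ(X)`. -/
structure ParametricPair (A B : ℤ) (p₁ q₁ p₂ q₂ : ℚ[X]) : Prop where
  coprime₁ : IsCoprime p₁ q₁
  coprime₂ : IsCoprime p₂ q₂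
  exists_quarticForm_eq : ∃ l, quarticForm A B p₁ q₁ = quarticForm A B p₂ q₂ * l ^ 2
  quarticForm_ne_zero : quarticForm A B p₁ q₁ ≠ 0
  ne : p₁ * q₂ ≠ p₂ * q₁

namespace ParametricPair

variable {A B : ℤ} {p₁ q₁ p₂ q₂ : ℚ[X]}

lemma ne_zero₁ (h : ParametricPair A B p₁ q₁ p₂ q₂) : q₁ ≠ 0 :=
  left_ne_zero_of_mul h.quarticForm_ne_zero

lemma quarticForm_ne_zero₂ (h : ParametricPair A B p₁ q₁ p₂ q₂) : quarticForm A B p₂ q₂ ≠ 0 := by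
  obtain ⟨l, hl⟩ := h.exists_quarticForm_eq
  exact left_ne_zero_of_mul (hl ▸ h.quarticForm_ne_zero)

lemma ne_zero₂ (h : ParametricPair A B p₁ q₁ p₂ q₂) : q₂ ≠ 0 :=
  left_ne_zero_of_mul h.quarticForm_ne_zero₂

lemma eventually_exists_eq_sq_mul (h : ParametricPair A B p₁ q₁ p₂ q₂) : ∀ᶠ n : ℕ in atTop,
    evalDiv p₁ q₁ n ≠ evalDiv p₂ q₂ n ∧ evalDiv p₂ q₂ n ^ 3 + A * evalDiv p₂ q₂ n + B ≠ 0 ∧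
    ∃ s : ℚ, evalDiv p₁ q₁ n ^ 3 + A * evalDiv p₁ q₁ n + B =
      s ^ 2 * (evalDiv p₂ q₂ n ^ 3 + A * evalDiv p₂ q₂ n + B) := by
  obtain ⟨l, hl⟩ := h.exists_quarticForm_eq
  filter_upwards [eventually_eval_ne_zero h.ne_zero₁, eventually_eval_ne_zero h.ne_zero₂,
    eventually_eval_ne_zero h.quarticForm_ne_zero₂, eventually_eval_ne_zero (sub_ne_zero.2 h.ne)]
    with n hq₁ hq₂ hform hne
  have eval_form (p q : ℚ[X]) :
      eval (n : ℚ) (quarticForm A B p q) = quarticForm A B (eval (n : ℚ) p) (eval (n : ℚ) q) := by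
    simp [quarticForm]
  have hl_eval := congrArg (eval (n : ℚ)) hl
  rw [eval_form, quarticForm_eq_pow_mul hq₂] at hform
  rw [eval_mul, eval_form, eval_form, eval_pow, quarticForm_eq_pow_mul hq₁,
    quarticForm_eq_pow_mul hq₂] at hl_eval
  refine ⟨fun heq ↦ hne ?_, right_ne_zero_of_mul hform,
    eval (n : ℚ) l * eval (n : ℚ) q₂ ^ 2 / eval (n : ℚ) q₁ ^ 2, ?_⟩
  · rw [evalDiv, evalDiv, div_eq_div_iff hq₁ hq₂] at heq
    simp [heq]
  · refine mul_left_cancel₀ (pow_ne_zero 4 hq₁) (hl_eval.trans ?_)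
    simp only [evalDiv]
    field_simp

theorem exists_sumBiquadratic_eq_zero (h : ParametricPair A B p₁ q₁ p₂ q₂)
    (hlaw : SumHeightLaw A B) (hpos : 0 < divDegree p₁ q₁)
    (hdeg : divDegree p₁ q₁ = divDegree p₂ q₂) :
    ∃ r : ℚ, sumBiquadratic A B p₁ q₁ p₂ q₂ (Polynomial.C r) = 0 := by
  obtain ⟨C, g, hg, hlaw⟩ := hlaw
  obtain ⟨C₁, hC₁⟩ := exists_abs_logHeight₁_evalDiv_sub_le h.coprime₁ h.ne_zero₁
  obtain ⟨C₂, hC₂⟩ := exists_abs_logHeight₁_evalDiv_sub_le h.coprime₂ h.ne_zero₂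
  have hfin : {r : ℚ | logHeight₁ r ≤ C}.Finite := NumberField.finite_setOfPred_logHeight₁_le ℚ C
  have htop := tendsto_logHeight₁_evalDiv_atTop h.coprime₁ h.ne_zero₁ hpos
  have hroot : ∀ᶠ n : ℕ in atTop, ∃ r ∈ {r : ℚ | logHeight₁ r ≤ C},
      eval (n : ℚ) (sumBiquadratic A B p₁ q₁ p₂ q₂ (Polynomial.C r)) = 0 := by
    filter_upwards [h.eventually_exists_eq_sq_mul, hC₁, hC₂, htop.eventually_gt_atTop C,
      htop.eventually_gt_atTop ((C₁ + C₂ + 2 * |C|) ^ 2 / g + C),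
      eventually_eval_ne_zero h.ne_zero₁, eventually_eval_ne_zero h.ne_zero₂]
      with n ⟨hne, hw, s, hs⟩ hz_bound hw_bound hCz hgz hq₁ hq₂
    obtain ⟨r, hr, -, hsmall⟩ := hlaw _ _ s hne hw hs hCz
    refine ⟨r, hsmall ?_, ?_⟩
    · rw [← lt_sub_iff_add_lt, div_lt_iff₀' hg] at hgz
      rw [hdeg] at hz_bound
      have hdiff : |logHeight₁ (evalDiv p₁ q₁ n) - logHeight₁ (evalDiv p₂ q₂ n)| ≤ C₁ + C₂ :=
        (abs_sub_le _ _ _).trans (add_le_add hz_bound ((abs_sub_comm _ _).trans_le hw_bound))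
      refine (sq_le_sq' ?_ ?_).trans_lt hgz
      · linarith [neg_abs_le C, abs_nonneg
          (logHeight₁ (evalDiv p₁ q₁ n) - logHeight₁ (evalDiv p₂ q₂ n))]
      · linarith [le_abs_self C]
    · rw [eval_sumBiquadratic, eval_C, sumBiquadratic_div_div hq₁ hq₂]
      exact mul_eq_zero_of_right _ hr
  by_contra! hne
  have hno_root := (eventually_all_finite hfin).2 fun r _ ↦ eventually_eval_ne_zero (hne r)
  obtain ⟨n, ⟨r, hrC, hr⟩, hn⟩ := (hroot.and hno_root).exists
  exact hn r hrC hr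

lemma exists_tendsto_div_zero (h : ParametricPair A B p₁ q₁ p₂ q₂) (hlaw : SumHeightLaw A B)
    (hlt : ((divDegree p₁ q₁ : ℝ) - divDegree p₂ q₂) ^ 2 < divDegree p₁ q₁) :
    ∃ r : ℕ → ℚ, (∀ᶠ n in atTop,
      sumBiquadratic A B (evalDiv p₁ q₁ n) 1 (evalDiv p₂ q₂ n) 1 (r n) = 0) ∧
      Tendsto (fun n ↦ r n / n) atTop (𝓝 0) := by
  have hpos : (0 : ℝ) < divDegree p₁ q₁ := (sq_nonneg _).trans_lt hlt
  obtain ⟨C, g, -, hlaw⟩ := hlaw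
  obtain ⟨ε, hε, hε1⟩ := exists_between ((div_lt_one hpos).2 hlt)
  have hlog := Real.tendsto_log_atTop.comp (tendsto_natCast_atTop_atTop (R := ℝ))
  have hz := tendsto_logHeight₁_evalDiv_div_log h.coprime₁ h.ne_zero₁
  have hw := tendsto_logHeight₁_evalDiv_div_log h.coprime₂ h.ne_zero₂
  have hC := hlog.const_div_atTop C
  have hlim := hC.add ((((hz.sub hw).abs.add (hC.const_mul 2)).pow 2).div (hz.sub hC)
    (by simpa using hpos.ne'))
  rw [mul_zero, add_zero, sq_abs, sub_zero, zero_add] at hlim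
  have hroot : ∀ᶠ n : ℕ in atTop, ∃ r : ℚ,
      sumBiquadratic A B (evalDiv p₁ q₁ n) 1 (evalDiv p₂ q₂ n) 1 r = 0 ∧
        logHeight₁ r ≤ ε * Real.log n := by
    filter_upwards [h.eventually_exists_eq_sq_mul, hlim.eventually_lt_const hε,
      (tendsto_logHeight₁_evalDiv_atTop h.coprime₁ h.ne_zero₁
        (mod_cast hpos)).eventually_gt_atTop C, hlog.eventually_gt_atTop 0]
      with n ⟨hne, hw, s, hs⟩ hn hCz hL
    obtain ⟨r, hr, hbound, -⟩ := hlaw _ _ s hne hw hs hCz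
    exact ⟨r, hr, le_mul_of_sub_mul_sub_le_sq hL hCz hbound hn.le⟩
  obtain ⟨r, hr⟩ := hroot.choice
  refine ⟨r, hr.mono fun n hn ↦ hn.1, squeeze_zero_norm' ?_
    (Real.tendsto_exp_atBot.comp (hlog.const_mul_atTop_of_neg (sub_neg.2 hε1)))⟩
  filter_upwards [hr, eventually_gt_atTop 0] with n ⟨_, hn⟩ hn0
  have : (0 : ℝ) < n := mod_cast hn0
  calc ‖r n / n‖ = |(r n : ℝ)| / n := by
        rw [← Rat.norm_cast_real, Rat.cast_div, Rat.cast_natCast, Real.norm_eq_abs, abs_div,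
          Nat.abs_cast]
    _ ≤ Real.exp (ε * Real.log n) / n := by
      gcongr
      exact (abs_le_exp_logHeight₁ _).trans (Real.exp_le_exp.2 hn)
    _ = Real.exp ((ε - 1) * Real.log n) := by
      rw [sub_one_mul, Real.exp_sub, Real.exp_log this]

theorem divDegree_le_sq (h : ParametricPair A B p₁ q₁ p₂ q₂) (hlaw : SumHeightLaw A B)
    (h₁ : p₁.natDegree = q₁.natDegree + 1) (h₂ : p₂.natDegree = q₂.natDegree + 1) :
    (divDegree p₁ q₁ : ℝ) ≤ (divDegree p₁ q₁ - divDegree p₂ q₂) ^ 2 := by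
  by_contra! hlt
  obtain ⟨r, hroot, hr⟩ := h.exists_tendsto_div_zero hlaw hlt
  have hz := tendsto_evalDiv_div h.ne_zero₁ h₁
  have hw := tendsto_evalDiv_div h.ne_zero₂ h₂
  have hlim := tendsto_sumBiquadratic_div_pow A B hz hw hr
  have hzero : sumBiquadratic 0 0 (p₁.leadingCoeff / q₁.leadingCoeff) 1
      (p₂.leadingCoeff / q₂.leadingCoeff) 1 0 = 0 :=
    tendsto_nhds_unique (hlim.congr' (hroot.mono fun n hn ↦ by rw [hn, zero_div]))
      tendsto_const_nhds
  have hp₁ : p₁ ≠ 0 := ne_zero_of_natDegree_gt (n := 0) (by lia)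
  have hp₂ : p₂ ≠ 0 := ne_zero_of_natDegree_gt (n := 0) (by lia)
  simp [sumBiquadratic, hp₁, hp₂, h.ne_zero₁, h.ne_zero₂] at hzero

end ParametricPair

end ParametricPair

/-! ### Explicit pairs -/

section ExplicitPairs

open Polynomial

lemma isUnit_intCast_polynomial {n : ℤ} (hn : n ≠ 0) : IsUnit (n : ℚ[X]) := by
  have := (isUnit_iff_ne_zero.2 (Int.cast_ne_zero.2 hn : (n : ℚ) ≠ 0)).map (C (R := ℚ))
  rwa [map_intCast] at this

lemma isCoprime_of_add_eq_intCast {p q u v : ℚ[X]} {G : ℤ} (hG : G ≠ 0)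
    (h : u * p + v * q = (G : ℚ[X])) : IsCoprime p q := by
  obtain ⟨w, hw⟩ := (isUnit_intCast_polynomial hG).exists_left_inv
  exact ⟨w * u, w * v, by linear_combination w * h + hw⟩

variable {A B : ℤ}

-- Here `w = X² z`, which turns `w³ + A w + B = X⁶ (z³ + A z + B)` into a linear equation for `z`.
lemma parametricPair_of_ne_zero (hA : A ≠ 0) (hB : B ≠ 0) :
    ParametricPair A B ((B : ℚ[X]) * (X ^ 4 + X ^ 2 + 1)) (-(A : ℚ[X]) * (X ^ 2 * (X ^ 2 + 1)))
      ((B : ℚ[X]) * (X ^ 4 + X ^ 2 + 1)) (-(A : ℚ[X]) * (X ^ 2 + 1)) := by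
  have hcop : IsCoprime (X ^ 4 + X ^ 2 + 1 : ℚ[X]) (X ^ 2 + 1) := ⟨1, -X ^ 2, by ring⟩
  have hcopX : IsCoprime (X ^ 4 + X ^ 2 + 1 : ℚ[X]) (X ^ 2) := ⟨1, -(X ^ 2 + 1), by ring⟩
  have hA' := (isUnit_intCast_polynomial hA).neg
  have hB' := isUnit_intCast_polynomial hB
  have hne : quarticForm A B ((B : ℚ[X]) * (X ^ 4 + X ^ 2 + 1))
      (-(A : ℚ[X]) * (X ^ 2 + 1)) ≠ 0 := by
    refine fun h ↦ hB ?_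
    have hval : (B : ℚ) ^ 3 + A * B * A ^ 2 + B * (-A) ^ 3 = 0 := by
      simpa [quarticForm, hA] using congrArg (eval 0) h
    simpa using (by linear_combination hval : (B : ℚ) ^ 3 = 0)
  have hform : quarticForm A B ((B : ℚ[X]) * (X ^ 4 + X ^ 2 + 1))
      (-(A : ℚ[X]) * (X ^ 2 * (X ^ 2 + 1))) = quarticForm A B ((B : ℚ[X]) * (X ^ 4 + X ^ 2 + 1))
        (-(A : ℚ[X]) * (X ^ 2 + 1)) * X ^ 2 := by
    simp only [quarticForm]
    ring
  refine ⟨?_, ?_, ⟨X, hform⟩, hform ▸ mul_ne_zero hne (pow_ne_zero 2 X_ne_zero), fun h ↦ ?_⟩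
  · rw [isCoprime_mul_unit_left_left hB', isCoprime_mul_unit_left_right hA']
    exact hcopX.mul_right hcop
  · rwa [isCoprime_mul_unit_left_left hB', isCoprime_mul_unit_left_right hA']
  · have heval := congrArg (eval 2) h
    norm_num [hA, hB] at heval

theorem not_sumHeightLaw_of_ne_zero (hA : A ≠ 0) (hB : B ≠ 0) : ¬ SumHeightLaw A B := by
  intro hlaw
  have : (A : ℚ) ≠ 0 := mod_cast hA
  have : (B : ℚ) ≠ 0 := mod_cast hB
  have hp : ((B : ℚ[X]) * (X ^ 4 + X ^ 2 + 1)).natDegree = 4 := by compute_degree!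
  have hq₁ : (-(A : ℚ[X]) * (X ^ 2 * (X ^ 2 + 1))).natDegree = 4 := by compute_degree!
  have hq₂ : (-(A : ℚ[X]) * (X ^ 2 + 1)).natDegree = 2 := by compute_degree!
  obtain ⟨r, hr⟩ := (parametricPair_of_ne_zero hA hB).exists_sumBiquadratic_eq_zero hlaw
    (by simp [divDegree, hp]) (by rw [divDegree, divDegree, hp, hq₁, hq₂]; rfl)
  exact hB (by simpa [sumBiquadratic] using congrArg (aeval Complex.I) hr)

/-- The common numerator of the two rational functions giving a `ParametricPair` for `B = 0`, up to
a factor `A X`, in terms of `m = A X²`. -/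
noncomputable def lemniscaticNum (m : ℚ[X]) : ℚ[X] := (m ^ 2 - 18 * m + 1) * (m + 1)

/-- Half the denominator of the first rational function for `B = 0`; see `lemniscaticNum`. -/
noncomputable def lemniscaticDen₁ (m : ℚ[X]) : ℚ[X] := 4 * m ^ 3 + m ^ 2 + 10 * m + 1

/-- The denominator of the second rational function for `B = 0`, up to a factor `2 X`; see
`lemniscaticNum`. Its coefficients are those of `lemniscaticDen₁` reversed, as the involution
`X ↦ 1 / (A X)` exchanges the two functions up to a constant factor. -/
noncomputable def lemniscaticDen₂ (m : ℚ[X]) : ℚ[X] := m ^ 3 + 10 * m ^ 2 + m + 4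

lemma isCoprime_lemniscaticNum_den₁ (m : ℚ[X]) :
    IsCoprime (lemniscaticNum m) (lemniscaticDen₁ m) := by
  simp only [lemniscaticNum, lemniscaticDen₁]
  refine .mul_left ?_ ?_
  · exact isCoprime_of_add_eq_intCast (u := 24 * 3025 + (55 * m - 987) * (4 * m + 73))
      (v := -(55 * m - 987)) (G := 1536) (by norm_num) (by push_cast; ring)
  · exact isCoprime_of_add_eq_intCast (u := 4 * m ^ 2 - 3 * m + 13) (v := -1) (G := 12)
      (by norm_num) (by push_cast; ring)

lemma isCoprime_lemniscaticNum_den₂ (m : ℚ[X]) :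
    IsCoprime (lemniscaticNum m) (lemniscaticDen₂ m) := by
  simp only [lemniscaticNum, lemniscaticDen₂]
  refine .mul_left ?_ ?_
  · exact isCoprime_of_add_eq_intCast (u := 24 * 441 + (21 * m - 377) * (m + 28))
      (v := -(21 * m - 377)) (G := 1536) (by norm_num) (by push_cast; ring)
  · exact isCoprime_of_add_eq_intCast (u := -(m ^ 2 + 9 * m - 8)) (v := 1) (G := 12)
      (by norm_num) (by push_cast; ring)

lemma quarticForm_lemniscatic {m : ℚ[X]} (hm : m = (A : ℚ[X]) * X ^ 2) :
    quarticForm A 0 ((A : ℚ[X]) * X * lemniscaticNum m) (2 * lemniscaticDen₁ m) =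
      (A : ℚ[X]) ^ 2 * X * (2 * lemniscaticNum m * lemniscaticDen₁ m *
        (m * lemniscaticNum m ^ 2 + (2 * lemniscaticDen₁ m) ^ 2)) := by
  rw [quarticForm]
  push_cast
  linear_combination -(2 * (A : ℚ[X]) ^ 2 * X * lemniscaticNum m ^ 3 * lemniscaticDen₁ m) * hm

lemma parametricPair_right_zero (hA : A ≠ 0) {m : ℚ[X]} (hm : m = (A : ℚ[X]) * X ^ 2) :
    ParametricPair A 0 ((A : ℚ[X]) * X * lemniscaticNum m) (2 * lemniscaticDen₁ m)
      (lemniscaticNum m) (2 * X * lemniscaticDen₂ m) := by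
  have hm0 : eval 0 m = 0 := by simp [hm]
  have htwo : IsUnit (2 : ℚ[X]) := isUnit_intCast_polynomial (n := 2) two_ne_zero
  refine ⟨(isCoprime_mul_unit_left_right htwo _ _).2
    (.mul_left ?_ (isCoprime_lemniscaticNum_den₁ m)),
    .mul_right ((isCoprime_mul_unit_left_right htwo _ _).2 ?_) (isCoprime_lemniscaticNum_den₂ m),
    ⟨A, ?_⟩, ?_, fun h ↦ ?_⟩
  · exact ⟨-X * (4 * m ^ 2 + m + 10), 1, by rw [lemniscaticDen₁, hm]; ring⟩
  · exact ⟨1, -(A : ℚ[X]) * X * (m ^ 2 - 17 * m - 17), by rw [lemniscaticNum, hm]; ring⟩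
  · simp only [quarticForm, lemniscaticNum, lemniscaticDen₁, lemniscaticDen₂, hm]
    push_cast
    ring
  · rw [quarticForm_lemniscatic hm]
    refine mul_ne_zero (mul_ne_zero (pow_ne_zero 2 (mod_cast hA)) X_ne_zero) fun h ↦ ?_
    simpa [lemniscaticNum, lemniscaticDen₁, hm0] using congrArg (eval 0) h
  · simpa [lemniscaticNum, lemniscaticDen₁, hm0] using congrArg (eval 0) h

theorem not_sumHeightLaw_right_zero (hA : A ≠ 0) : ¬ SumHeightLaw A 0 := by
  intro hlaw
  have : (A : ℚ) ≠ 0 := mod_cast hA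
  obtain ⟨m, hm⟩ : ∃ m : ℚ[X], m = (A : ℚ[X]) * X ^ 2 := ⟨_, rfl⟩
  have hp₁ : ((A : ℚ[X]) * X * lemniscaticNum m).natDegree = 7 := by
    rw [hm, lemniscaticNum]; compute_degree!
  have hq₁ : (2 * lemniscaticDen₁ m).natDegree = 6 := by rw [hm, lemniscaticDen₁]; compute_degree!
  have hp₂ : (lemniscaticNum m).natDegree = 6 := by rw [hm, lemniscaticNum]; compute_degree!
  have hq₂ : (2 * X * lemniscaticDen₂ m).natDegree = 7 := by
    rw [hm, lemniscaticDen₂]; compute_degree!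
  obtain ⟨r, hr⟩ := (parametricPair_right_zero hA hm).exists_sumBiquadratic_eq_zero hlaw
    (by simp [divDegree, hp₁]) (by rw [divDegree, divDegree, hp₁, hq₁, hp₂, hq₂]; rfl)
  have hm0 : eval 0 m = 0 := by simp [hm]
  have hr0 : r = 0 := by
    simpa [sumBiquadratic, lemniscaticNum, lemniscaticDen₁, hm0] using congrArg (eval 0) hr
  have hzero : (A : ℚ[X]) * X *
      (lemniscaticNum m ^ 2 - 4 * lemniscaticDen₁ m * lemniscaticDen₂ m) = 0 := by
    refine pow_eq_zero_iff two_ne_zero |>.1 (Eq.trans ?_ hr)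
    rw [hr0, C_0, sumBiquadratic]
    push_cast
    ring
  have hquot := (mul_eq_zero.1 hzero).resolve_left (mul_ne_zero (mod_cast hA) X_ne_zero)
  have heval := congrArg (eval 0) hquot
  norm_num [lemniscaticNum, lemniscaticDen₁, lemniscaticDen₂, hm0] at heval

/-- The denominator of the second of the two rational functions giving a `ParametricPair` for
`A = 0`, and a factor of that of the first, in terms of `u = B² X³`. -/
noncomputable def equianharmonicDen (u : ℚ[X]) : ℚ[X] :=
  2 * u ^ 4 + 17 * u ^ 3 + 552 * u ^ 2 - 640 * u - 448

/-- A factor of the numerator of the first rational function for `A = 0`; see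
`equianharmonicDen`. -/
noncomputable def equianharmonicNum₁ (u : ℚ[X]) : ℚ[X] :=
  u ^ 4 + 103 * u ^ 3 + 600 * u ^ 2 - 320 * u + 640

/-- The numerator of the second rational function for `A = 0`, up to a factor `B X`; see
`equianharmonicDen`. -/
noncomputable def equianharmonicNum₂ (u : ℚ[X]) : ℚ[X] :=
  1088 + 320 * u + 48 * u ^ 2 + 86 * u ^ 3 - u ^ 4

lemma isCoprime_equianharmonicNum₁ (u : ℚ[X]) :
    IsCoprime ((u - 8) * equianharmonicNum₁ u) ((u + 1) * equianharmonicDen u) := by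
  simp only [equianharmonicNum₁, equianharmonicDen]
  refine .mul_left (.mul_right ?_ ?_) (.mul_right ?_ ?_)
  · exact isCoprime_of_add_eq_intCast (u := 1) (v := -1) (G := -9) (by norm_num)
      (by push_cast; ring)
  · exact isCoprime_of_add_eq_intCast (u := -5888 - 816 * u - 33 * u ^ 2 - 2 * u ^ 3) (v := 1)
      (G := 46656) (by norm_num) (by push_cast; ring)
  · exact isCoprime_of_add_eq_intCast (u := 1) (v := 818 - 498 * u - 102 * u ^ 2 - u ^ 3)
      (G := 1458) (by norm_num) (by push_cast; ring)
  · exact isCoprime_of_add_eq_intCast (u := 860310 - 249260 * u - 6292 * u ^ 2 - 968 * u ^ 3)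
      (v := -812394 + 189970 * u + 48884 * u ^ 2 + 484 * u ^ 3) (G := 914550912) (by norm_num)
      (by push_cast; ring)

lemma isCoprime_equianharmonicNum₂ (u : ℚ[X]) :
    IsCoprime (equianharmonicNum₂ u) (equianharmonicDen u) := by
  simp only [equianharmonicNum₂, equianharmonicDen]
  exact isCoprime_of_add_eq_intCast (u := 860310 - 249260 * u - 6292 * u ^ 2 - 968 * u ^ 3)
    (v := 47916 - 59290 * u + 42592 * u ^ 2 - 484 * u ^ 3) (G := 914550912) (by norm_num)
    (by push_cast; ring)

lemma isCoprime_mul_X_equianharmonicDen {u : ℚ[X]} (hu : u = (B : ℚ[X]) ^ 2 * X ^ 3) :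
    IsCoprime ((B : ℚ[X]) * X) (equianharmonicDen u) := by
  rw [equianharmonicDen]
  exact isCoprime_of_add_eq_intCast
    (u := -(B : ℚ[X]) * X ^ 2 * (2 * u ^ 3 + 17 * u ^ 2 + 552 * u - 640)) (v := 1) (G := -448)
    (by norm_num) (by rw [hu]; push_cast; ring)

lemma parametricPair_left_zero (hB : B ≠ 0) {u : ℚ[X]} (hu : u = (B : ℚ[X]) ^ 2 * X ^ 3) :
    ParametricPair 0 B ((B : ℚ[X]) * X * ((u - 8) * equianharmonicNum₁ u))
      (-4 * ((u + 1) * equianharmonicDen u)) ((B : ℚ[X]) * X * equianharmonicNum₂ u)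
      (equianharmonicDen u) := by
  have hu0 : eval 0 u = 0 := by simp [hu]
  have hfour : IsUnit (-4 : ℚ[X]) := by
    simpa using isUnit_intCast_polynomial (n := -4) (by norm_num)
  have hX : IsCoprime ((B : ℚ[X]) * X) (u + 1) := ⟨-(B : ℚ[X]) * X ^ 2, 1, by rw [hu]; ring⟩
  have hden := isCoprime_mul_X_equianharmonicDen hu
  refine ⟨(isCoprime_mul_unit_left_right hfour _ _).2
    (.mul_left (hX.mul_right hden) (isCoprime_equianharmonicNum₁ u)),
    .mul_left hden (isCoprime_equianharmonicNum₂ u), ⟨2 * (u ^ 2 + 20 * u - 8), ?_⟩,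
    fun h ↦ ?_, fun h ↦ ?_⟩
  · simp only [quarticForm, equianharmonicDen, equianharmonicNum₁, equianharmonicNum₂, hu]
    push_cast
    ring
  · have heval := congrArg (eval 0) h
    norm_num [quarticForm, equianharmonicDen, hu0, hB] at heval
  · have hzero : (B : ℚ[X]) * X * (equianharmonicDen u *
        ((u - 8) * equianharmonicNum₁ u + 4 * (u + 1) * equianharmonicNum₂ u)) = 0 := by
      linear_combination h
    have hquot := (mul_eq_zero.1 hzero).resolve_left (mul_ne_zero (mod_cast hB) X_ne_zero)
    have heval := congrArg (eval 0) hquot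
    norm_num [hu0, equianharmonicDen, equianharmonicNum₁, equianharmonicNum₂] at heval

theorem not_sumHeightLaw_left_zero (hB : B ≠ 0) : ¬ SumHeightLaw 0 B := by
  intro hlaw
  have : (B : ℚ) ≠ 0 := mod_cast hB
  obtain ⟨u, hu⟩ : ∃ u : ℚ[X], u = (B : ℚ[X]) ^ 2 * X ^ 3 := ⟨_, rfl⟩
  have hp₁ : ((B : ℚ[X]) * X * ((u - 8) * equianharmonicNum₁ u)).natDegree = 16 := by
    rw [hu, equianharmonicNum₁]; compute_degree!
  have hq₁ : (-4 * ((u + 1) * equianharmonicDen u)).natDegree = 15 := by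
    rw [hu, equianharmonicDen]; compute_degree!
  have hp₂ : ((B : ℚ[X]) * X * equianharmonicNum₂ u).natDegree = 13 := by
    rw [hu, equianharmonicNum₂]; compute_degree!
  have hq₂ : (equianharmonicDen u).natDegree = 12 := by
    rw [hu, equianharmonicDen]; compute_degree!
  have hle := (parametricPair_left_zero hB hu).divDegree_le_sq hlaw (by rw [hp₁, hq₁])
    (by rw [hp₂, hq₂])
  rw [divDegree, divDegree, hp₁, hq₁, hp₂, hq₂] at hle
  norm_num at hle

end ExplicitPairs

theorem not_rankBound_of_le_one {j : ℝ} (hf : cubicDisc a b c ≠ 0) (hj : j ≤ 1) :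
    ¬ RankBound a b c j := by
  intro hR
  have hlaw := sumHeightLaw_of_rankBound hf hj hR
  have hdisc : 4 * shortA a b ^ 3 + 27 * shortB a b c ^ 2 ≠ 0 := by
    rw [four_mul_shortA_pow_add]
    exact mul_ne_zero (by norm_num) hf
  generalize shortA a b = A at *
  generalize shortB a b c = B at *
  by_cases hA : A = 0
  · subst hA
    exact not_sumHeightLaw_left_zero (fun hB ↦ hdisc (by simp [hB])) hlaw
  by_cases hB : B = 0
  · subst hB
    exact not_sumHeightLaw_right_zero hA hlaw
  · exact not_sumHeightLaw_of_ne_zero hA hB hlaw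

lemma broad_univ (a b c : ℤ) : Broad a b c Set.univ :=
  ⟨isOpen_univ,
    ⟨1 + |(a : ℝ)| + |(b : ℝ)| + |(c : ℝ)|, trivial,
      fun _ hr ↦ lt_of_not_ge fun hle ↦ (cubic_pos_of_le hle).ne' hr⟩,
    ⟨-(1 + |(a : ℝ)| + |(b : ℝ)| + |(c : ℝ)|), trivial,
      fun _ hr ↦ lt_of_not_ge fun hle ↦ (cubic_neg_of_le hle).ne hr⟩⟩

end QuadraticTwist

/-- **Theorem 9.** For `j > 0`, the following are equivalent:
(a) `rank E^{(D)}(ℚ) < 2j` for all nonzero `D`;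
(b) `S_E(j,k,X)` converges for some `k ≥ 1` and some broad `X`;
(c) `S_E(j,k)` converges for every `k ≥ 1`. -/
theorem rank_tfae_S (a b c : ℤ) (hf : DistinctRoots a b c)
    (sq : ℤ → ℤ) (hsq : IsSqfreePart sq) (j : ℝ) (hj : 0 < j) :
    List.TFAE
      [RankBound a b c j,
       ∃ k : ℝ, 1 ≤ k ∧ ∃ X : Set ℝ, Broad a b c X ∧ SConv a b c sq j k X,
       ∀ k : ℝ, 1 ≤ k → SConv a b c sq j k Set.univ] := by
  have hdisc := QuadraticTwist.cubicDisc_ne_zero hf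
  tfae_have 1 → 3 := fun hR k hk ↦ by
    rcases le_or_gt j 1 with hj1 | hj1
    · exact absurd hR (QuadraticTwist.not_rankBound_of_le_one hdisc hj1)
    · exact QuadraticTwist.SConv_univ_of_rankBound hdisc hsq hj1 hR hk
  tfae_have 3 → 2 := fun h ↦ ⟨1, le_rfl, Set.univ, QuadraticTwist.broad_univ a b c, h 1 le_rfl⟩
  tfae_have 2 → 1 := fun ⟨k, hk, X, hX, hS⟩ ↦
    QuadraticTwist.rankBound_of_SConv hdisc hsq hj (zero_le_one.trans hk) hX hS
  tfae_finish
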